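/- arXiv:2404.01666 — 2 statements merged into one kernel-verified Lean document; each statement's English description precedes it below -/
import Mathlib

section
/- For the exponential random graph model with parameter β in the subcritical region, let H be any fixed finite graph, possibly with isolated vertices, with v ≥ 3 vertices and e ≥ 1 edges. Then there exists a constant C > 0, depending only on β₁,…,β_k, H₁,…,H_k and H, such that for all n, Var(|Hom(H, G_Y)| − 2 n^{v−2} e p^{e−1} σ_n W_n) ≤ C n^{2v − 5/2}. -/
open MeasureTheory ProbabilityTheory Real Finset

noncomputable section

/-- The index set `I = {(i,j) : 1 ≤ i < j ≤ n}` of potential edges on `n` labeled vertices. -/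
def EdgeIdx (n : ℕ) : Type := {p : Fin n × Fin n // p.1 < p.2}

instance (n : ℕ) : Fintype (EdgeIdx n) := by unfold EdgeIdx; infer_instance
instance (n : ℕ) : DecidableEq (EdgeIdx n) := by unfold EdgeIdx; infer_instance

/-- Adjacency of the graph `G_y` encoded by the edge-indicator vector `y`. -/
def yAdj {n : ℕ} (y : EdgeIdx n → Bool) (a b : Fin n) : Bool :=
  if h : a < b then y ⟨(a, b), h⟩ else if h' : b < a then y ⟨(b, a), h'⟩ else false

/-- The number of edges of a graph `H`. -/
def eCount {V : Type} [Fintype V] (H : SimpleGraph V) : ℕ :=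
  Nat.card H.edgeSet

/-- `|Hom(H, G_y)|`: the number of injective maps from the vertex set of `H` to `Fin n`
mapping every edge of `H` to an edge of `G_y`. -/
def homCount {V : Type} [Fintype V] {n : ℕ} (H : SimpleGraph V) (y : EdgeIdx n → Bool) : ℕ :=
  Nat.card {φ : V → Fin n //
    Function.Injective φ ∧ ∀ a b, H.Adj a b → yAdj y (φ a) (φ b) = true}

/-- `|Hom(H, G_y, s)|`: the number of pairs `(φ, (u, v))` where `φ` is injective, `(u, v)` is
an ordered pair of adjacent vertices of `H` with `{φ u, φ v} = s`, and every edge of `H` other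
than `{u, v}` is mapped by `φ` to an edge of `G_y` (regardless of whether the edge `s` is
present in `G_y`). -/
def homCountAt {V : Type} [Fintype V] {n : ℕ} (H : SimpleGraph V) (y : EdgeIdx n → Bool)
    (s : EdgeIdx n) : ℕ :=
  Nat.card {t : (V → Fin n) × V × V //
    Function.Injective t.1 ∧ H.Adj t.2.1 t.2.2 ∧
    Sym2.mk (t.1 t.2.1, t.1 t.2.2) = Sym2.mk (s.1.1, s.1.2) ∧
    ∀ a b, H.Adj a b → Sym2.mk (a, b) ≠ Sym2.mk (t.2.1, t.2.2) →
      yAdj y (t.1 a) (t.1 b) = true}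

section ERGM

variable {k : ℕ} (β : Fin (k + 1) → ℝ) (v : Fin (k + 1) → ℕ)
  (H : ∀ j : Fin (k + 1), SimpleGraph (Fin (v j)))

/-- The (unnormalized) ERGM weight `exp (Σ_j β_j n^{2−v_j} |Hom(H_j, G_y)|)`. -/
def ergmWeight (n : ℕ) (y : EdgeIdx n → Bool) : ℝ :=
  Real.exp (∑ j, β j * (n : ℝ) ^ ((2 : ℤ) - (v j : ℤ)) * (homCount (H j) y : ℝ))

/-- The ERGM normalizing constant. -/
def ergmZ (n : ℕ) : ℝ := ∑ y : EdgeIdx n → Bool, ergmWeight β v H n y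

/-- The ERGM probability of the configuration `y`. -/
def ergmProb (n : ℕ) (y : EdgeIdx n → Bool) : ℝ := ergmWeight β v H n y / ergmZ β v H n

/-- Expectation of `G(Y)` under the ERGM. -/
def ergmExp (n : ℕ) (G : (EdgeIdx n → Bool) → ℝ) : ℝ :=
  ∑ y : EdgeIdx n → Bool, ergmProb β v H n y * G y

/-- Variance of `G(Y)` under the ERGM. -/
def ergmVar (n : ℕ) (G : (EdgeIdx n → Bool) → ℝ) : ℝ :=
  ergmExp β v H n (fun y => (G y - ergmExp β v H n G) ^ 2)

/-- The total number of edges of `G_y`. -/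
def edgeSum {n : ℕ} (y : EdgeIdx n → Bool) : ℝ :=
  ∑ s : EdgeIdx n, (if y s then (1 : ℝ) else 0)

/-- `Φ_β(a) = Σ_j β_j e_j a^{e_j − 1}`. -/
def PhiFn : ℝ → ℝ := fun a =>
  ∑ j, β j * (eCount (H j) : ℝ) * a ^ (eCount (H j) - 1)

/-- `φ_β(a) = e^{2Φ_β(a)} / (e^{2Φ_β(a)} + 1)`. -/
def phiFn : ℝ → ℝ := fun a =>
  Real.exp (2 * PhiFn β v H a) / (Real.exp (2 * PhiFn β v H a) + 1)

/-- `σ_n² = N p (1−p) / (1 − 2 p (1−p) Φ_β'(p))` with `N = n(n−1)/2`. -/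
def sigmaSq (p : ℝ) (n : ℕ) : ℝ :=
  ((n : ℝ) * ((n : ℝ) - 1) / 2) * p * (1 - p) /
    (1 - 2 * p * (1 - p) * deriv (PhiFn β v H) p)

/-- `μ_n = E Σ_{s ∈ I} Y_s`. -/
def muN (n : ℕ) : ℝ := ergmExp β v H n (edgeSum)

/-- The standardized number of edges `W_n`. -/
def Wn (p : ℝ) (n : ℕ) (y : EdgeIdx n → Bool) : ℝ :=
  (edgeSum y - muN β v H n) / Real.sqrt (sigmaSq β v H p n)

end ERGM

/-! ### Discrete calculus on the Boolean cube -/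

section Cube

variable {I : Type*} [DecidableEq I]

/-- The discrete derivative of `f` in direction `s`. -/
def incr (s : I) (f : (I → Bool) → ℝ) (y : I → Bool) : ℝ :=
  f (Function.update y s true) - f (Function.update y s false)

/-- Resampling of the coordinate `s` as a Bernoulli variable with parameter `q`. -/
def resample (q : ℝ) (s : I) (f : (I → Bool) → ℝ) (y : I → Bool) : ℝ :=
  q * f (Function.update y s true) + (1 - q) * f (Function.update y s false)

/-- Successive resampling of the coordinates in `l`. -/
def sweep (q : ℝ) (l : List I) (f : (I → Bool) → ℝ) : (I → Bool) → ℝ :=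
  l.foldr (resample q) f

@[simp] lemma sweep_nil (q : ℝ) (f : (I → Bool) → ℝ) : sweep q [] f = f := rfl

@[simp] lemma sweep_cons (q : ℝ) (s : I) (l : List I) (f : (I → Bool) → ℝ) :
    sweep q (s :: l) f = resample q s (sweep q l f) := rfl

lemma incr_resample (q : ℝ) (s u : I) (f : (I → Bool) → ℝ) (y : I → Bool) :
    incr u (resample q s f) y = if u = s then 0 else resample q s (incr u f) y := by
  split_ifs with h
  · subst h; simp [incr, resample]
  · simp only [incr, resample]
    rw [Function.update_comm h, Function.update_comm h, Function.update_comm h,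
      Function.update_comm h]
    ring

lemma resample_mono {q : ℝ} (hq : q ∈ Set.Icc (0 : ℝ) 1) (s : I) {f g : (I → Bool) → ℝ}
    (h : ∀ y, f y ≤ g y) (y : I → Bool) : resample q s f y ≤ resample q s g y := by
  have := hq.1
  have : 0 ≤ 1 - q := sub_nonneg.2 hq.2
  unfold resample
  gcongr <;> apply h

lemma sweep_mono {q : ℝ} (hq : q ∈ Set.Icc (0 : ℝ) 1) (l : List I) {f g : (I → Bool) → ℝ}
    (h : ∀ y, f y ≤ g y) (y : I → Bool) : sweep q l f y ≤ sweep q l g y := by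
  induction l generalizing y with
  | nil => exact h y
  | cons s l ih => exact resample_mono hq s ih y

lemma sweep_const (q : ℝ) (l : List I) (c : ℝ) : sweep q l (fun _ => c) = fun _ => c := by
  induction l with
  | nil => rfl
  | cons s l ih => rw [sweep_cons, ih]; funext y; simp only [resample]; ring

lemma sweep_const_mul (q : ℝ) (l : List I) (c : ℝ) (f : (I → Bool) → ℝ) :
    sweep q l (fun y => c * f y) = fun y => c * sweep q l f y := by
  induction l with
  | nil => rfl
  | cons s l ih => rw [sweep_cons, ih]; funext y; simp only [resample, sweep_cons]; ring

lemma sweep_sum {ι : Type*} (q : ℝ) (l : List I) (S : Finset ι) (f : ι → (I → Bool) → ℝ) :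
    sweep q l (fun y => ∑ i ∈ S, f i y) = fun y => ∑ i ∈ S, sweep q l (f i) y := by
  induction l with
  | nil => rfl
  | cons s l ih =>
    rw [sweep_cons, ih]; funext y
    simp only [resample, sweep_cons, Finset.mul_sum, ← Finset.sum_add_distrib]

lemma incr_sum {ι : Type*} (S : Finset ι) (f : ι → (I → Bool) → ℝ) (s : I) :
    incr s (fun y => ∑ i ∈ S, f i y) = fun y => ∑ i ∈ S, incr s (f i) y := by
  funext y; simp only [incr, Finset.sum_sub_distrib]

lemma incr_const_mul (c : ℝ) (f : (I → Bool) → ℝ) (s : I) :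
    incr s (fun y => c * f y) = fun y => c * incr s f y := by
  funext y; simp only [incr]; ring

lemma incr_update (s : I) (b : Bool) (f : (I → Bool) → ℝ) (y : I → Bool) :
    incr s f (Function.update y s b) = incr s f y := by
  simp [incr]

lemma resample_update (q : ℝ) (s : I) (b : Bool) (f : (I → Bool) → ℝ) (y : I → Bool) :
    resample q s f (Function.update y s b) = resample q s f y := by
  simp [resample]

/-- All discrete derivatives of `f` have the sign of `τ`. -/
def SignedMono (τ : ℝ) (f : (I → Bool) → ℝ) : Prop := ∀ s y, 0 ≤ τ * incr s f y

lemma SignedMono.resample {τ q : ℝ} (hq : q ∈ Set.Icc (0 : ℝ) 1) {f : (I → Bool) → ℝ}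
    (hf : SignedMono τ f) (s : I) : SignedMono τ (resample q s f) := by
  intro u y
  rw [incr_resample]
  split_ifs
  · simp
  · have h1 := hf u (Function.update y s true)
    have h2 := hf u (Function.update y s false)
    have := hq.1
    have h3 : 0 ≤ 1 - q := sub_nonneg.2 hq.2
    unfold _root_.resample
    nlinarith [mul_nonneg this h1, mul_nonneg h3 h2]

lemma SignedMono.sweep {τ q : ℝ} (hq : q ∈ Set.Icc (0 : ℝ) 1) {f : (I → Bool) → ℝ}
    (hf : SignedMono τ f) (l : List I) : SignedMono τ (sweep q l f) := by
  induction l with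
  | nil => exact hf
  | cons s l ih => exact ih.resample hq s

lemma sweep_mem_Icc {q : ℝ} (hq : q ∈ Set.Icc (0 : ℝ) 1) {f : (I → Bool) → ℝ}
    (hf : ∀ y, f y ∈ Set.Icc (0 : ℝ) 1) (l : List I) (y : I → Bool) :
    sweep q l f y ∈ Set.Icc (0 : ℝ) 1 := by
  constructor
  · have := sweep_mono hq l (f := fun _ => 0) (g := f) (fun y => (hf y).1) y
    rwa [sweep_const] at this
  · have := sweep_mono hq l (f := f) (g := fun _ => 1) (fun y => (hf y).2) y
    rwa [sweep_const] at this

lemma abs_incr_sweep_le {q : ℝ} (hq : q ∈ Set.Icc (0 : ℝ) 1) {f : (I → Bool) → ℝ} {c : I → ℝ}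
    (hf : ∀ u y, |incr u f y| ≤ c u) (l : List I) (u : I) (y : I → Bool) :
    |incr u (sweep q l f) y| ≤ c u := by
  induction l generalizing y with
  | nil => exact hf u y
  | cons s l ih =>
    rw [sweep_cons, incr_resample]
    split_ifs
    · simpa using (abs_nonneg _).trans (hf u y)
    · have h1 := abs_le.1 (ih (Function.update y s true))
      have h2 := abs_le.1 (ih (Function.update y s false))
      have := hq.1
      have h3 : 0 ≤ 1 - q := sub_nonneg.2 hq.2
      unfold resample
      rw [abs_le]
      constructor <;> nlinarith

lemma two_point_exp_bound {q a b c : ℝ} (hq : q ∈ Set.Icc (0 : ℝ) 1) (hab : |a - b| ≤ c)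
    (hc : c ≤ 1) :
    q * Real.exp a + (1 - q) * Real.exp b ≤
      Real.exp (c ^ 2) * Real.exp (q * a + (1 - q) * b) := by
  obtain ⟨hq0, hq1⟩ := hq
  have hsq : (a - b) ^ 2 ≤ c ^ 2 := by
    rw [← sq_abs]; gcongr
  have key : ∀ r ∈ Set.Icc (-1 : ℝ) 1, Real.exp (r * (a - b)) ≤
      1 + r * (a - b) + (r * (a - b)) ^ 2 := by
    intro r hr
    have : |r * (a - b)| ≤ 1 := by
      rw [abs_mul]
      have := abs_le.2 hr
      have h2 := abs_nonneg (a - b)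
      nlinarith [abs_nonneg r]
    have := (abs_le.1 (Real.abs_exp_sub_one_sub_id_le this)).2
    linarith
  have h1 := key (1 - q) ⟨by linarith, by linarith⟩
  have h2 := key (-q) ⟨by linarith, by linarith⟩
  have e1 : Real.exp a = Real.exp ((1 - q) * (a - b)) * Real.exp (q * a + (1 - q) * b) := by
    rw [← Real.exp_add]; ring_nf
  have e2 : Real.exp b = Real.exp (-q * (a - b)) * Real.exp (q * a + (1 - q) * b) := by
    rw [← Real.exp_add]; ring_nf
  have h3 := Real.add_one_le_exp (c ^ 2)
  rw [e1, e2]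
  have : q * Real.exp ((1 - q) * (a - b)) + (1 - q) * Real.exp (-q * (a - b)) ≤
      Real.exp (c ^ 2) := by
    have h4 := mul_le_mul_of_nonneg_left h1 hq0
    have h5 := mul_le_mul_of_nonneg_left h2 (sub_nonneg.2 hq1)
    have h6 : 0 ≤ (1 - q * (1 - q)) * (a - b) ^ 2 := by
      apply mul_nonneg _ (sq_nonneg _)
      nlinarith
    nlinarith
  calc _ = (q * Real.exp ((1 - q) * (a - b)) + (1 - q) * Real.exp (-q * (a - b))) *
        Real.exp (q * a + (1 - q) * b) := by ring
    _ ≤ _ := by gcongr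

/-- Exponential moments of functions with bounded differences under Bernoulli resampling. -/
lemma sweep_exp_le {q : ℝ} (hq : q ∈ Set.Icc (0 : ℝ) 1) {f : (I → Bool) → ℝ} {c : I → ℝ}
    (hf : ∀ u y, |incr u f y| ≤ c u) (hc : ∀ u, c u ≤ 1) (l : List I) (y : I → Bool) :
    sweep q l (fun y => Real.exp (f y)) y ≤
      Real.exp ((l.map fun u => c u ^ 2).sum) * Real.exp (sweep q l f y) := by
  induction l generalizing y with
  | nil => simp
  | cons s l ih =>
    rw [sweep_cons]
    refine (resample_mono hq s ih y).trans ?_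
    have h := two_point_exp_bound hq (abs_incr_sweep_le hq hf l s y) (hc s)
    have h0 : 0 ≤ Real.exp ((l.map fun u => c u ^ 2).sum) := (Real.exp_pos _).le
    simp only [resample, List.map_cons, List.sum_cons, Real.exp_add, sweep_cons] at h ⊢
    nlinarith [mul_le_mul_of_nonneg_left h h0]

/-- The monomial `∏_{u ∈ T} y_u`. -/
def mono (T : Finset I) (y : I → Bool) : ℝ := if ∀ u ∈ T, y u = true then 1 else 0


lemma mono_mem_Icc {I : Type*} (T : Finset I) (y : I → Bool) : mono T y ∈ Set.Icc (0 : ℝ) 1 := by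
  unfold mono; split_ifs <;> simp

lemma mono_update_true (T : Finset I) (s : I) (y : I → Bool) :
    mono T (Function.update y s true) = mono (T.erase s) y := by
  unfold mono
  congr 1
  simp only [Function.update_apply, Finset.mem_erase, eq_iff_iff]
  exact forall_congr' fun u => by split_ifs <;> simp_all

lemma mono_update_false (T : Finset I) (s : I) (y : I → Bool) :
    mono T (Function.update y s false) = if s ∈ T then 0 else mono T y := by
  split_ifs with h
  · exact if_neg fun h1 => by simpa using h1 s h
  · unfold mono
    congr 1
    rw [eq_iff_iff]
    refine forall₂_congr fun u hu => ?_
    rw [Function.update_of_ne (by rintro rfl; exact h hu)]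

lemma incr_mono (T : Finset I) (s : I) :
    incr s (mono T) = fun y => if s ∈ T then mono (T.erase s) y else 0 := by
  funext y
  unfold incr
  rw [mono_update_true, mono_update_false]
  split_ifs with h
  · ring
  · rw [Finset.erase_eq_of_notMem h]; ring

lemma resample_mul_mono (q c : ℝ) (T : Finset I) (s : I) :
    resample q s (fun y => c * mono T y) =
      fun y => (if s ∈ T then q * c else c) * mono (T.erase s) y := by
  funext y
  simp only [resample, mono_update_true, mono_update_false]
  split_ifs with h
  · ring
  · rw [Finset.erase_eq_of_notMem h]; ring

lemma sweep_mono_monomial (q : ℝ) (T : Finset I) (l : List I) (hl : l.Nodup) :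
    sweep q l (mono T) = fun y => q ^ (T ∩ l.toFinset).card * mono (T \ l.toFinset) y := by
  induction l with
  | nil => simp
  | cons s l ih =>
    obtain ⟨hs, hl⟩ := List.nodup_cons.1 hl
    rw [sweep_cons, ih hl, resample_mul_mono]
    funext y
    have e1 : (T \ l.toFinset).erase s = T \ (s :: l).toFinset := by
      ext u; simp only [Finset.mem_erase, Finset.mem_sdiff, List.toFinset_cons,
        Finset.mem_insert]; tauto
    rw [e1]
    congr 1
    by_cases h : s ∈ T
    · have : T ∩ (s :: l).toFinset = insert s (T ∩ l.toFinset) := by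
        ext u; simp only [Finset.mem_inter, List.toFinset_cons, Finset.mem_insert]
        constructor
        · tauto
        · rintro (rfl | h) <;> tauto
      rw [this, Finset.card_insert_of_notMem (by simp [hs]), pow_succ]
      simp [h, hs, mul_comm]
    · have : T ∩ (s :: l).toFinset = T ∩ l.toFinset := by
        ext u; simp only [Finset.mem_inter, List.toFinset_cons, Finset.mem_insert]
        constructor
        · rintro ⟨h1, rfl | h2⟩ <;> tauto
        · tauto
      rw [this]
      simp [h]

lemma sweep_univ_monomial [Fintype I] (q : ℝ) (T : Finset I) (y : I → Bool) :
    sweep q (Finset.univ : Finset I).toList (mono T) y = q ^ T.card := by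
  rw [sweep_mono_monomial q T _ (Finset.nodup_toList _)]
  simp [mono]

/-- A function that is nondecreasing along single flips inside an order-convex set is monotone
on that set. -/
lemma monotoneOn_of_incr_nonneg [Fintype I] {G : Set (I → Bool)} (hG : G.OrdConnected)
    {f : (I → Bool) → ℝ}
    (h : ∀ y s, Function.update y s false ∈ G → Function.update y s true ∈ G → 0 ≤ incr s f y) :
    MonotoneOn f G := by
  intro x hx y hy hxy
  induction hd : (Finset.univ.filter fun s => x s ≠ y s).card generalizing x with
  | zero =>
    have : x = y := by
      funext s
      by_contra hs
      have := Finset.card_eq_zero.1 hd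
      exact Finset.notMem_empty s (this ▸ by simpa using hs)
    rw [this]
  | succ d ih =>
    obtain ⟨s, hs⟩ : (Finset.univ.filter fun s => x s ≠ y s).Nonempty := by
      rw [← Finset.card_pos]; omega
    have hs' : x s ≠ y s := by simpa using hs
    have hxs : x s = false ∧ y s = true := by
      have := hxy s
      revert this hs'
      cases x s <;> cases y s <;> simp
    have hx0 : Function.update x s false = x := by rw [← hxs.1, Function.update_eq_self]
    have hle : Function.update x s true ≤ y := by
      intro u
      by_cases hu : u = s
      · subst hu; simp [hxs.2]
      · simpa [hu] using hxy u
    have hge : x ≤ Function.update x s true := by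
      intro u
      by_cases hu : u = s
      · subst hu; simp [hxs.1]
      · simp [hu]
    have hmem : Function.update x s true ∈ G := hG.out hx hy ⟨hge, hle⟩
    have h1 := h x s (hx0.symm ▸ hx) hmem
    have h2 := ih hmem hle (by
      have : (Finset.univ.filter fun u => Function.update x s true u ≠ y u) =
          (Finset.univ.filter fun u => x u ≠ y u).erase s := by
        ext u
        by_cases hu : u = s
        · subst hu; simp [hxs.2]
        · simp [hu]
      rw [this, Finset.card_erase_of_mem hs, hd]
      rfl)
    unfold incr at h1
    rw [hx0] at h1
    linarith

lemma monotone_of_signedMono [Fintype I] {f : (I → Bool) → ℝ} (hf : SignedMono 1 f) :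
    Monotone f := by
  rw [← monotoneOn_univ]
  exact monotoneOn_of_incr_nonneg Set.ordConnected_univ fun y s _ _ => by simpa using hf s y

end Cube

/-! ### Gibbs measures on the Boolean cube -/

section Gibbs

variable {I : Type*} [Fintype I] [DecidableEq I]

/-- Expectation of `f` under the probability measure with weights proportional to `exp H`. -/
def gibbs (H f : (I → Bool) → ℝ) : ℝ :=
  ∑ y, Real.exp (H y) / (∑ z, Real.exp (H z)) * f y

/-- Probability of `A` under the probability measure with weights proportional to `exp H`. -/
def gprob (H : (I → Bool) → ℝ) (A : Set (I → Bool)) : ℝ := gibbs H (A.indicator 1)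

variable (H : (I → Bool) → ℝ)

lemma partition_pos : 0 < ∑ z, Real.exp (H z) :=
  Finset.sum_pos (fun _ _ => Real.exp_pos _) Finset.univ_nonempty

lemma gibbs_weight_nonneg (y : I → Bool) : 0 ≤ Real.exp (H y) / (∑ z, Real.exp (H z)) :=
  div_nonneg (Real.exp_pos _).le (partition_pos H).le

lemma gibbs_const (c : ℝ) : gibbs H (fun _ => c) = c := by
  unfold gibbs
  rw [← Finset.sum_mul, ← Finset.sum_div, div_self (partition_pos H).ne', one_mul]

lemma gibbs_add (f g : (I → Bool) → ℝ) :
    gibbs H (fun y => f y + g y) = gibbs H f + gibbs H g := by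
  simp only [gibbs, mul_add, Finset.sum_add_distrib]

lemma gibbs_sub (f g : (I → Bool) → ℝ) :
    gibbs H (fun y => f y - g y) = gibbs H f - gibbs H g := by
  simp only [gibbs, mul_sub, Finset.sum_sub_distrib]

lemma gibbs_const_mul (c : ℝ) (f : (I → Bool) → ℝ) :
    gibbs H (fun y => c * f y) = c * gibbs H f := by
  simp only [gibbs, Finset.mul_sum]
  exact Finset.sum_congr rfl fun _ _ => by ring

lemma gibbs_sum {ι : Type*} (S : Finset ι) (f : ι → (I → Bool) → ℝ) :
    gibbs H (fun y => ∑ i ∈ S, f i y) = ∑ i ∈ S, gibbs H (f i) := by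
  simp only [gibbs, Finset.mul_sum]
  exact Finset.sum_comm

variable {H}

lemma gibbs_le_gibbs {f g : (I → Bool) → ℝ} (h : ∀ y, f y ≤ g y) : gibbs H f ≤ gibbs H g :=
  Finset.sum_le_sum fun y _ => mul_le_mul_of_nonneg_left (h y) (gibbs_weight_nonneg H y)

lemma gibbs_nonneg {f : (I → Bool) → ℝ} (h : ∀ y, 0 ≤ f y) : 0 ≤ gibbs H f :=
  Finset.sum_nonneg fun y _ => mul_nonneg (gibbs_weight_nonneg H y) (h y)

lemma abs_gibbs_le {f : (I → Bool) → ℝ} : |gibbs H f| ≤ gibbs H fun y => |f y| := by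
  rw [abs_le]
  constructor
  · have := gibbs_le_gibbs (H := H) fun y => neg_abs_le (f y)
    have h2 := gibbs_const_mul H (-1) fun y => |f y|
    simp only [neg_mul, one_mul] at h2
    linarith
  · exact gibbs_le_gibbs fun y => le_abs_self (f y)

lemma gprob_nonneg (A : Set (I → Bool)) : 0 ≤ gprob H A :=
  gibbs_nonneg fun y => Set.indicator_nonneg (by simp) y

lemma gprob_mono {A B : Set (I → Bool)} (h : A ⊆ B) : gprob H A ≤ gprob H B :=
  gibbs_le_gibbs fun y => Set.indicator_le_indicator_of_subset h (by simp) y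

lemma gprob_empty : gprob H (∅ : Set (I → Bool)) = 0 := by
  unfold gprob
  rw [Set.indicator_empty]
  exact gibbs_const H 0

lemma gprob_iUnion_le {ι : Type*} [Fintype ι] (A : ι → Set (I → Bool)) :
    gprob H (⋃ i, A i) ≤ ∑ i, gprob H (A i) := by
  unfold gprob
  rw [← gibbs_sum]
  refine gibbs_le_gibbs fun y => ?_
  have hnn : ∀ i, 0 ≤ (A i).indicator (1 : (I → Bool) → ℝ) y :=
    fun i => Set.indicator_nonneg (by simp) y
  by_cases h : y ∈ ⋃ i, A i
  · rw [Set.indicator_of_mem h]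
    obtain ⟨i, hi⟩ := Set.mem_iUnion.1 h
    calc (1 : (I → Bool) → ℝ) y = (A i).indicator 1 y := (Set.indicator_of_mem hi _).symm
      _ ≤ _ := Finset.single_le_sum (f := fun i => (A i).indicator (1 : (I → Bool) → ℝ) y)
        (fun i _ => hnn i) (Finset.mem_univ i)
  · rw [Set.indicator_of_notMem h]
    exact Finset.sum_nonneg fun i _ => hnn i

lemma gprob_union_le (A B : Set (I → Bool)) : gprob H (A ∪ B) ≤ gprob H A + gprob H B := by
  rw [Set.union_eq_iUnion]
  exact (gprob_iUnion_le _).trans (by simp)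

lemma sum_eq_half_sum_update (s : I) (g : (I → Bool) → ℝ) :
    2 * ∑ y, g y = ∑ y, (g (Function.update y s true) + g (Function.update y s false)) := by
  have hflip : ∑ y, g (Function.update y s (!y s)) = ∑ y, g y := by
    refine Fintype.sum_bijective (fun y => Function.update y s (!y s))
      (Function.Involutive.bijective fun y => ?_) _ _ fun y => rfl
    simp
  rw [two_mul]
  nth_rewrite 2 [← hflip]
  rw [← Finset.sum_add_distrib]
  refine Finset.sum_congr rfl fun y _ => ?_
  rcases h : y s with _ | _
  · have : Function.update y s false = y := by rw [← h, Function.update_eq_self]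
    simp [this, add_comm]
  · have : Function.update y s true = y := by rw [← h, Function.update_eq_self]
    simp [this]

/-- The Gibbs measure is stationary under resampling of one coordinate with its conditional
distribution. -/
lemma gibbs_resample (s : I) (f : (I → Bool) → ℝ) :
    gibbs H (fun y => resample (Real.sigmoid (incr s H y)) s f y) = gibbs H f := by
  have key : ∑ y, Real.exp (H y) * resample (Real.sigmoid (incr s H y)) s f y =
      ∑ y, Real.exp (H y) * f y := by
    have h1 := sum_eq_half_sum_update s fun y =>
      Real.exp (H y) * resample (Real.sigmoid (incr s H y)) s f y
    have h2 := sum_eq_half_sum_update s fun y => Real.exp (H y) * f y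
    have h3 : ∀ y, Real.exp (H (Function.update y s true)) *
          resample (Real.sigmoid (incr s H y)) s f y +
        Real.exp (H (Function.update y s false)) *
          resample (Real.sigmoid (incr s H y)) s f y =
        Real.exp (H (Function.update y s true)) * f (Function.update y s true) +
        Real.exp (H (Function.update y s false)) * f (Function.update y s false) := by
      intro y
      have hs : Real.sigmoid (incr s H y) = Real.exp (H (Function.update y s true)) /
          (Real.exp (H (Function.update y s true)) + Real.exp (H (Function.update y s false))) := by
        rw [Real.sigmoid_def, incr, neg_sub, Real.exp_sub]
        field_simp
      have := Real.exp_pos (H (Function.update y s true))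
      have := Real.exp_pos (H (Function.update y s false))
      unfold resample
      rw [hs]
      field_simp
      ring
    simp only [incr_update, resample_update] at h1
    rw [Finset.sum_congr rfl fun y _ => h3 y] at h1
    linarith
  simp only [gibbs, div_mul_eq_mul_div, ← Finset.sum_div]
  rw [key]

/-- Comparison of the Gibbs measure with a product Bernoulli measure, for monotone observables
and up to the probability of leaving a set on which all conditional probabilities are controlled. -/
lemma gibbs_le_sweep {q τ : ℝ} (hq : q ∈ Set.Icc (0 : ℝ) 1) (hτ : τ * τ = 1)
    {A : Set (I → Bool)} (hA : ∀ y ∈ A, ∀ s, 0 ≤ τ * (q - Real.sigmoid (incr s H y)))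
    {f : (I → Bool) → ℝ} (hf : SignedMono τ f) (hf1 : ∀ y, f y ∈ Set.Icc (0 : ℝ) 1) (l : List I) :
    gibbs H f ≤ gibbs H (sweep q l f) + l.length * gprob H Aᶜ := by
  induction l with
  | nil => simp
  | cons s l ih =>
    have hmon := hf.sweep hq l
    have hI := sweep_mem_Icc hq hf1 l
    have hstep : gibbs H (sweep q l f) ≤ gibbs H (sweep q (s :: l) f) + gprob H Aᶜ := by
      rw [← gibbs_resample s (sweep q l f), gprob, ← gibbs_add]
      refine gibbs_le_gibbs fun y => ?_
      have h1 := hI (Function.update y s true)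
      have h2 := hI (Function.update y s false)
      have hσ0 := Real.sigmoid_nonneg (incr s H y)
      have hσ1 := Real.sigmoid_le_one (incr s H y)
      by_cases hy : y ∈ A
      · have h3 := mul_nonneg (hA y hy s) (hmon s y)
        have h4 : τ * (q - Real.sigmoid (incr s H y)) * (τ * incr s (sweep q l f) y) =
          (q - Real.sigmoid (incr s H y)) * incr s (sweep q l f) y := by
            linear_combination (q - Real.sigmoid (incr s H y)) * incr s (sweep q l f) y * hτ
        rw [h4] at h3
        rw [Set.indicator_of_notMem (by simpa using hy), sweep_cons]
        unfold incr at h3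
        unfold resample
        unfold incr at hσ0 hσ1 ⊢
        nlinarith
      · have h3 := sweep_mem_Icc hq hf1 (s :: l) y
        rw [Set.indicator_of_mem (by simpa using hy)]
        have h4 : resample (Real.sigmoid (incr s H y)) s (sweep q l f) y ≤ 1 := by
          unfold resample
          nlinarith [h1.2, h2.2]
        simp only [Pi.one_apply]
        linarith [h3.1]
    rw [List.length_cons]
    push_cast
    linarith

/-- Bounded differences `c_u ≤ D / ν` with total `∑ c_u ≤ D`. -/
def BoundedDiff (ν D : ℝ) (X : (I → Bool) → ℝ) : Prop :=
  ∃ c : I → ℝ, (∀ u y, |incr u X y| ≤ c u) ∧ (∀ u, c u ≤ D / ν) ∧ ∑ u, c u ≤ D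

lemma BoundedDiff.sum {ι : Type*} {S : Finset ι} {ν : ℝ} {a D : ι → ℝ}
    {X : ι → (I → Bool) → ℝ} (h : ∀ i ∈ S, BoundedDiff ν (D i) (X i)) :
    BoundedDiff ν (∑ i ∈ S, |a i| * D i) (fun y => ∑ i ∈ S, a i * X i y) := by
  choose! c hc using h
  refine ⟨fun u => ∑ i ∈ S, |a i| * c i u, fun u y => ?_, fun u => ?_, ?_⟩
  · rw [incr_sum]
    refine (Finset.abs_sum_le_sum_abs _ _).trans (Finset.sum_le_sum fun i hi => ?_)
    rw [incr_const_mul, abs_mul]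
    exact mul_le_mul_of_nonneg_left ((hc i hi).1 u y) (abs_nonneg _)
  · rw [Finset.sum_div]
    refine Finset.sum_le_sum fun i hi => ?_
    rw [mul_div_assoc]
    exact mul_le_mul_of_nonneg_left ((hc i hi).2.1 u) (abs_nonneg _)
  · rw [Finset.sum_comm]
    refine Finset.sum_le_sum fun i hi => ?_
    rw [← Finset.mul_sum]
    exact mul_le_mul_of_nonneg_left (hc i hi).2.2 (abs_nonneg _)

lemma BoundedDiff.mono {ν D D' : ℝ} (hν : 0 < ν) (hD : D ≤ D') {X : (I → Bool) → ℝ}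
    (h : BoundedDiff ν D X) : BoundedDiff ν D' X := by
  obtain ⟨c, h1, h2, h3⟩ := h
  exact ⟨c, h1, fun u => (h2 u).trans (by gcongr), h3.trans hD⟩

/-- Tail bound for a monotone observable with bounded differences. -/
lemma gprob_tail_le {q τ : ℝ} (hq : q ∈ Set.Icc (0 : ℝ) 1) (hτ : τ = 1 ∨ τ = -1)
    {A : Set (I → Bool)} (hA : ∀ y ∈ A, ∀ s, 0 ≤ τ * (q - Real.sigmoid (incr s H y)))
    {X : (I → Bool) → ℝ} (hX : SignedMono 1 X) {ν D : ℝ} (hν : 0 < ν) (hD : 1 ≤ D)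
    (hBD : BoundedDiff ν D X) {m ε : ℝ}
    (hm : ∀ y, τ * sweep q (Finset.univ : Finset I).toList X y ≤ m)
    (hε0 : 0 ≤ ε) (hε1 : ε ≤ 1) :
    gprob H {y | m + ε ≤ τ * X y} ≤
      Real.exp (-(ε ^ 2 * ν / (4 * D ^ 2))) + Fintype.card I * gprob H Aᶜ := by
  obtain ⟨c, hc, hc1, hc2⟩ := hBD
  have hττ : τ * τ = 1 := by rcases hτ with rfl | rfl <;> norm_num
  have hτa : |τ| = 1 := by rcases hτ with rfl | rfl <;> norm_num
  set f : (I → Bool) → ℝ := Set.indicator {y | m + ε ≤ τ * X y} 1 with hf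
  have hf1 : ∀ y, f y ∈ Set.Icc (0 : ℝ) 1 := fun y => by
    rw [hf]; by_cases h : y ∈ {y | m + ε ≤ τ * X y} <;> simp [Set.indicator, h]
  have hfm : SignedMono τ f := by
    intro s y
    have h1 := hX s y
    simp only [hf, incr, Set.indicator, Set.mem_ofPred_eq, Pi.one_apply, one_mul] at h1 ⊢
    rcases hτ with rfl | rfl <;> split_ifs <;> linarith
  have h0 := gibbs_le_sweep hq hττ hA hfm hf1 (Finset.univ : Finset I).toList
  rw [Finset.length_toList, Finset.card_univ] at h0
  refine h0.trans ?_
  gcongr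
  set lam := ε * ν / (2 * D ^ 2) with hlam
  have hlam0 : 0 ≤ lam := by positivity
  have hlamc : ∀ u, lam * c u ≤ 1 := fun u => by
    refine (mul_le_mul_of_nonneg_left (hc1 u) hlam0).trans ?_
    rw [hlam, div_mul_div_comm, div_le_one (by positivity)]
    have : ε * ν * D ≤ 1 * ν * D := by gcongr
    have h2 : 1 * ν * D ≤ D * D * ν := by nlinarith [mul_pos hν (by linarith : 0 < D)]
    nlinarith [mul_pos hν (by positivity : 0 < D ^ 2)]
  have hbd : ∀ u y, |incr u (fun y => lam * (τ * X y)) y| ≤ lam * c u := fun u y => by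
    rw [incr_const_mul, incr_const_mul, abs_mul, abs_mul, hτa, one_mul, abs_of_nonneg hlam0]
    exact mul_le_mul_of_nonneg_left (hc u y) hlam0
  rw [← gibbs_const H (Real.exp _)]
  refine gibbs_le_gibbs fun y => ?_
  have hpt : ∀ y, f y ≤ Real.exp (-(lam * (m + ε))) * Real.exp (lam * (τ * X y)) := fun y => by
    rw [← Real.exp_add]
    by_cases h : y ∈ {y | m + ε ≤ τ * X y}
    · rw [hf, Set.indicator_of_mem h]
      refine Real.one_le_exp ?_
      have h' : m + ε ≤ τ * X y := h
      nlinarith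
    · rw [hf, Set.indicator_of_notMem h]
      exact (Real.exp_pos _).le
  refine (sweep_mono hq _ hpt y).trans ?_
  rw [sweep_const_mul]
  have hexp := sweep_exp_le hq hbd hlamc (Finset.univ : Finset I).toList y
  rw [Finset.sum_map_toList, sweep_const_mul, sweep_const_mul] at hexp
  have hsq : ∑ u, (lam * c u) ^ 2 ≤ lam ^ 2 * (D ^ 2 / ν) := by
    simp only [mul_pow, ← Finset.mul_sum]
    gcongr
    calc ∑ u, c u ^ 2 ≤ ∑ u, D / ν * c u := Finset.sum_le_sum fun u _ => by
          rw [sq]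
          exact mul_le_mul_of_nonneg_right (hc1 u) ((abs_nonneg _).trans (hc u y))
      _ = D / ν * ∑ u, c u := by rw [Finset.mul_sum]
      _ ≤ D / ν * D := by gcongr
      _ = _ := by ring
  calc _ ≤ Real.exp (-(lam * (m + ε))) *
        (Real.exp (lam ^ 2 * (D ^ 2 / ν)) * Real.exp (lam * m)) := by
        refine mul_le_mul_of_nonneg_left (hexp.trans ?_) (Real.exp_pos _).le
        gcongr
        exact mul_le_mul_of_nonneg_left (hm y) hlam0
    _ = Real.exp (-(ε ^ 2 * ν / (4 * D ^ 2))) := by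
        rw [← Real.exp_add, ← Real.exp_add]
        congr 1
        rw [hlam]
        field_simp
        ring

end Gibbs

/-! ### Correlation inequalities on order-convex sets -/

section Correlation

variable {I : Type*} [Fintype I] [DecidableEq I] {H : (I → Bool) → ℝ}

/-- Variance of `f` under the Gibbs measure of `H`. -/
def gvar (H f : (I → Bool) → ℝ) : ℝ := gibbs H (fun y => f y * f y) - gibbs H f * gibbs H f

/-- Supermodularity of the Hamiltonian. -/
def Supermodular (H : (I → Bool) → ℝ) : Prop := ∀ x y, H x + H y ≤ H (x ⊓ y) + H (x ⊔ y)

lemma gibbs_fkg (hH : Supermodular H) {f g : (I → Bool) → ℝ} (hf : Monotone f)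
    (hg : Monotone g) : gibbs H f * gibbs H g ≤ gibbs H fun y => f y * g y := by
  set a := f ⊥
  set b := g ⊥
  have h := fkg (fun y => f y - a) (fun y => g y - b) (fun y => Real.exp (H y))
    (fun y => (Real.exp_pos _).le) (fun y => sub_nonneg.2 (hf bot_le))
    (fun y => sub_nonneg.2 (hg bot_le)) (fun x y hxy => sub_le_sub_right (hf hxy) _)
    (fun x y hxy => sub_le_sub_right (hg hxy) _)
    (fun x y => by rw [← Real.exp_add, ← Real.exp_add]; exact Real.exp_le_exp.2 (hH x y))
  have hZ := partition_pos H
  have key : gibbs H (fun y => f y - a) * gibbs H (fun y => g y - b) ≤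
      gibbs H fun y => (f y - a) * (g y - b) := by
    have e : ∀ f, gibbs H f = (∑ y, Real.exp (H y) * f y) / ∑ z, Real.exp (H z) := fun f => by
      rw [gibbs, Finset.sum_div]
      exact Finset.sum_congr rfl fun y _ => by ring
    rw [e, e, e, div_mul_div_comm, div_le_div_iff₀ (by positivity) hZ]
    nlinarith
  have e1 : gibbs H (fun y => (f y - a) * (g y - b)) =
      gibbs H (fun y => f y * g y) - b * gibbs H f - a * gibbs H g + a * b := by
    have hc := gibbs_const H (a * b)
    rw [← gibbs_const_mul, ← gibbs_const_mul, ← gibbs_sub, ← gibbs_sub, ← hc, ← gibbs_add]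
    congr 1; funext y; ring
  rw [gibbs_sub, gibbs_sub, gibbs_const, gibbs_const, e1] at key
  linarith

lemma exists_monotone_bounded_extension {G : Set (I → Bool)} {f : (I → Bool) → ℝ} {M : ℝ}
    (hf : MonotoneOn f G) (hM : ∀ y, |f y| ≤ M) :
    ∃ g : (I → Bool) → ℝ, Monotone g ∧ Set.EqOn f g G ∧ ∀ y, |g y| ≤ M := by
  have hM0 : 0 ≤ M := (abs_nonneg _).trans (hM ⊥)
  have hfin : ∀ y, (insert (-M) (f '' (G ∩ Set.Iic y))).Finite := fun y => Set.toFinite _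
  refine ⟨fun y => sSup (insert (-M) (f '' (G ∩ Set.Iic y))), fun x y hxy => ?_,
    fun y hy => ?_, fun y => abs_le.2 ⟨?_, ?_⟩⟩
  · refine csSup_le_csSup (hfin y).bddAbove (Set.insert_nonempty _ _) ?_
    gcongr
  · have h : IsGreatest (insert (-M) (f '' (G ∩ Set.Iic y))) (f y) := by
      refine ⟨Or.inr ⟨y, ⟨hy, Set.mem_Iic.2 le_rfl⟩, rfl⟩, ?_⟩
      rintro _ (rfl | ⟨x, ⟨hx, hxy⟩, rfl⟩)
      · exact (abs_le.1 (hM y)).1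
      · exact hf hx hy hxy
    exact h.csSup_eq.symm
  · exact le_csSup (hfin y).bddAbove (Set.mem_insert _ _)
  · refine csSup_le (Set.insert_nonempty _ _) ?_
    rintro _ (rfl | ⟨x, -, rfl⟩)
    · linarith
    · exact (abs_le.1 (hM x)).2

lemma abs_gibbs_sub_le {G : Set (I → Bool)} {f g : (I → Bool) → ℝ} {M : ℝ}
    (hfg : Set.EqOn f g G) (hf : ∀ y, |f y| ≤ M) (hg : ∀ y, |g y| ≤ M) :
    |gibbs H f - gibbs H g| ≤ 2 * M * gprob H Gᶜ := by
  rw [← gibbs_sub, gprob, ← gibbs_const_mul]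
  refine abs_gibbs_le.trans (gibbs_le_gibbs fun y => ?_)
  by_cases hy : y ∈ G
  · rw [hfg hy, Set.indicator_of_notMem (by simpa using hy)]
    simp
  · rw [Set.indicator_of_mem (by simpa using hy), Pi.one_apply, mul_one]
    exact (abs_sub _ _).trans (by linarith [hf y, hg y])

/-- The FKG inequality for functions that are monotone on a set of large probability only. -/
lemma gibbs_fkg_of_monotoneOn (hH : Supermodular H) {G : Set (I → Bool)}
    {f g : (I → Bool) → ℝ} {M : ℝ} (hf : MonotoneOn f G) (hg : MonotoneOn g G)
    (hfM : ∀ y, |f y| ≤ M) (hgM : ∀ y, |g y| ≤ M) :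
    gibbs H f * gibbs H g ≤ gibbs H (fun y => f y * g y) + 6 * M ^ 2 * gprob H Gᶜ := by
  obtain ⟨f', hf', hff, hfM'⟩ := exists_monotone_bounded_extension hf hfM
  obtain ⟨g', hg', hgg, hgM'⟩ := exists_monotone_bounded_extension hg hgM
  have hM0 : 0 ≤ M := (abs_nonneg _).trans (hfM ⊥)
  have h1 := gibbs_fkg hH hf' hg'
  have h2 := abs_gibbs_sub_le (H := H) (M := M * M) (G := G) (f := fun y => f y * g y)
    (g := fun y => f' y * g' y) (fun y hy => by simp only [hff hy, hgg hy])
    (fun y => by rw [abs_mul]; exact mul_le_mul (hfM y) (hgM y) (abs_nonneg _) hM0)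
    (fun y => by rw [abs_mul]; exact mul_le_mul (hfM' y) (hgM' y) (abs_nonneg _) hM0)
  have h3 := abs_gibbs_sub_le (H := H) hff hfM hfM'
  have h4 := abs_gibbs_sub_le (H := H) hgg hgM hgM'
  have h5 : ∀ {f : (I → Bool) → ℝ}, (∀ y, |f y| ≤ M) → |gibbs H f| ≤ M := fun h =>
    abs_gibbs_le.trans ((gibbs_le_gibbs h).trans (gibbs_const H M).le)
  have h6 := h5 hfM'
  have h7 := h5 hgM
  have hε := gprob_nonneg (H := H) Gᶜ
  have h8 : gibbs H f * gibbs H g - gibbs H f' * gibbs H g' ≤ 4 * M ^ 2 * gprob H Gᶜ := by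
    have e : gibbs H f * gibbs H g - gibbs H f' * gibbs H g' =
      (gibbs H f - gibbs H f') * gibbs H g + gibbs H f' * (gibbs H g - gibbs H g') := by ring
    rw [e]
    have a1 : (gibbs H f - gibbs H f') * gibbs H g ≤ 2 * M * gprob H Gᶜ * M := by
      refine (le_abs_self _).trans ?_
      rw [abs_mul]
      exact mul_le_mul h3 h7 (abs_nonneg _) (by positivity)
    have a2 : gibbs H f' * (gibbs H g - gibbs H g') ≤ M * (2 * M * gprob H Gᶜ) := by
      refine (le_abs_self _).trans ?_
      rw [abs_mul]
      exact mul_le_mul h6 h4 (abs_nonneg _) hM0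
    nlinarith
  have h9 := (abs_le.1 h2).1
  nlinarith

/-- Comparison of variances: an observable whose discrete derivatives are dominated by those of
`g` on an order-convex set of large probability has variance dominated by that of `g`. -/
lemma gvar_le_of_abs_incr_le (hH : Supermodular H) {G : Set (I → Bool)} (hG : G.OrdConnected)
    {f g : (I → Bool) → ℝ} {M : ℝ}
    (hfg : ∀ y s, Function.update y s false ∈ G → Function.update y s true ∈ G →
      |incr s f y| ≤ incr s g y)
    (hM : ∀ y, |f y| + |g y| ≤ M) :
    gvar H f ≤ gvar H g + 6 * M ^ 2 * gprob H Gᶜ := by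
  have h1 : MonotoneOn (fun y => g y - f y) G :=
    monotoneOn_of_incr_nonneg hG fun y s h0 h1 => by
      have := (abs_le.1 (hfg y s h0 h1)).2
      unfold incr at this ⊢
      linarith
  have h2 : MonotoneOn (fun y => g y + f y) G :=
    monotoneOn_of_incr_nonneg hG fun y s h0 h1 => by
      have := (abs_le.1 (hfg y s h0 h1)).1
      unfold incr at this ⊢
      linarith
  have h3 := gibbs_fkg_of_monotoneOn hH h1 h2
    (fun y => (abs_sub _ _).trans (by linarith [hM y]))
    (fun y => (abs_add_le _ _).trans (by linarith [hM y]))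
  have e : gibbs H (fun y => (g y - f y) * (g y + f y)) =
      gibbs H (fun y => g y * g y) - gibbs H (fun y => f y * f y) := by
    rw [← gibbs_sub]; congr 1; funext y; ring
  rw [e, gibbs_sub, gibbs_add] at h3
  unfold gvar
  nlinarith

/-- The number of coordinates that are switched on. -/
def total {I : Type*} [Fintype I] (y : I → Bool) : ℝ := ∑ s, if y s then (1 : ℝ) else 0

lemma incr_total (s : I) (y : I → Bool) : incr s total y = 1 := by
  unfold incr total
  rw [← Finset.sum_sub_distrib, Finset.sum_eq_single s]
  · simp
  · intro u _ hu; simp [hu]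
  · simp

lemma total_mem_Icc {I : Type*} [Fintype I] (y : I → Bool) : total y ∈ Set.Icc (0 : ℝ) (Fintype.card I) := by
  constructor
  · exact Finset.sum_nonneg fun s _ => by split_ifs <;> simp
  · calc total y ≤ ∑ _s : I, (1 : ℝ) := Finset.sum_le_sum fun s _ => by split_ifs <;> simp
      _ = _ := by simp

/-- The variance of the number of occupied coordinates, when the sum of the conditional
probabilities is a contraction along single flips in an order-convex set of large probability. -/
lemma gvar_total_le (hH : Supermodular H) {G : Set (I → Bool)} (hG : G.OrdConnected) {θ : ℝ}
    (hθ0 : 0 ≤ θ) (hθ1 : θ ≤ 1)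
    (hinc : ∀ y s, Function.update y s false ∈ G → Function.update y s true ∈ G →
      incr s (fun z => ∑ u, Real.sigmoid (incr u H z)) y ≤ θ) :
    (1 - θ) * gvar H total ≤
      Fintype.card I + 6 * (Fintype.card I : ℝ) ^ 2 * gprob H Gᶜ := by
  set N : ℝ := (Fintype.card I : ℝ) with hN
  set Q : (I → Bool) → ℝ := fun z => ∑ u, Real.sigmoid (incr u H z) with hQ
  have hQ0 : ∀ y, Q y ∈ Set.Icc 0 N := fun y => by
    refine ⟨Finset.sum_nonneg fun u _ => Real.sigmoid_nonneg _, ?_⟩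
    calc Q y ≤ ∑ _u : I, (1 : ℝ) := Finset.sum_le_sum fun u _ => Real.sigmoid_le_one _
      _ = N := by simp [hN]
  have hmeanu : ∀ u, gibbs H (fun y => if y u then (1 : ℝ) else 0) =
      gibbs H fun y => Real.sigmoid (incr u H y) := fun u => by
    rw [← gibbs_resample u]
    congr 1; funext y; simp [resample]
  have hmean : gibbs H total = gibbs H Q := by
    unfold total
    rw [gibbs_sum, hQ, gibbs_sum]
    exact Finset.sum_congr rfl fun u _ => hmeanu u
  have hcovu : ∀ u, gibbs H (fun y => total y * if y u then (1 : ℝ) else 0) ≤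
      gibbs H (fun y => total y * Real.sigmoid (incr u H y)) + 1 := fun u => by
    rw [← gibbs_resample u (fun y => total y * if y u then (1 : ℝ) else 0),
      ← gibbs_resample u (fun y => total y * Real.sigmoid (incr u H y)), ← gibbs_const H 1,
      ← gibbs_add, gibbs_const]
    refine gibbs_le_gibbs fun y => ?_
    have h1 := incr_total u y
    have h2 := Real.sigmoid_nonneg (incr u H y)
    have h3 := Real.sigmoid_le_one (incr u H y)
    simp only [resample, Function.update_self, if_true, incr_update, Bool.false_eq_true, if_false]
    have h4 : total (Function.update y u false) = total (Function.update y u true) - 1 := by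
      unfold incr at h1; linarith
    rw [h4]
    nlinarith
  have hcov : gibbs H (fun y => total y * total y) ≤ gibbs H (fun y => total y * Q y) + N := by
    have e1 : gibbs H (fun y => total y * total y) =
        ∑ u, gibbs H (fun y => total y * if y u then (1 : ℝ) else 0) := by
      rw [← gibbs_sum]; congr 1; funext y; rw [← Finset.mul_sum, total]
    have e2 : gibbs H (fun y => total y * Q y) =
        ∑ u, gibbs H (fun y => total y * Real.sigmoid (incr u H y)) := by
      rw [← gibbs_sum]; congr 1; funext y; rw [← Finset.mul_sum]
    rw [e1, e2]
    calc _ ≤ ∑ u, (gibbs H (fun y => total y * Real.sigmoid (incr u H y)) + 1) :=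
          Finset.sum_le_sum fun u _ => hcovu u
      _ = _ := by rw [Finset.sum_add_distrib]; simp [hN]
  have hmon1 : MonotoneOn (total : (I → Bool) → ℝ) G :=
    monotoneOn_of_incr_nonneg hG fun y s _ _ => by rw [incr_total]; exact zero_le_one
  have hmon2 : MonotoneOn (fun y => θ * total y - Q y) G :=
    monotoneOn_of_incr_nonneg hG fun y s h0 h1 => by
      have h2 := hinc y s h0 h1
      have h3 := incr_total s y
      unfold incr at h2 h3 ⊢
      nlinarith
  have hfkg := gibbs_fkg_of_monotoneOn hH hmon1 hmon2 (M := N)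
    (fun y => abs_le.2 ⟨by linarith [(total_mem_Icc y).1, (total_mem_Icc y).2],
      (total_mem_Icc y).2⟩)
    (fun y => by
      have h1 := total_mem_Icc y
      have h2 := hQ0 y
      have h3 : θ * total y ≤ N := by nlinarith [h1.1, h1.2]
      have h4 : 0 ≤ θ * total y := mul_nonneg hθ0 h1.1
      exact abs_le.2 ⟨by linarith [h2.2], by linarith [h2.1]⟩)
  have e : gibbs H (fun y => total y * (θ * total y - Q y)) =
      θ * gibbs H (fun y => total y * total y) - gibbs H (fun y => total y * Q y) := by
    rw [← gibbs_const_mul, ← gibbs_sub]; congr 1; funext y; ring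
  rw [e, gibbs_sub, gibbs_const_mul, ← hmean] at hfkg
  unfold gvar
  nlinarith

end Correlation

/-! ### Concentration under a contraction hypothesis -/

lemma sigmoid_sub_sigmoid_le {D : Set ℝ} (hD : Convex ℝ D) {L : ℝ}
    (hL : ∀ x ∈ D, Real.sigmoid x * (1 - Real.sigmoid x) ≤ L) {a b : ℝ} (ha : a ∈ D) (hb : b ∈ D)
    (hab : a ≤ b) : Real.sigmoid b - Real.sigmoid a ≤ L * (b - a) :=
  hD.image_sub_le_mul_sub_of_deriv_le continuous_sigmoid.continuousOn
    differentiable_sigmoid.differentiableOn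
    (fun x hx => by rw [Real.deriv_sigmoid]; exact hL x (interior_subset hx)) a ha b hb hab

lemma signed_sigmoid_sub_le {τ : ℝ} (hτ : τ = 1 ∨ τ = -1) {a b δ : ℝ} (hδ : 0 ≤ δ)
    (h : τ * a ≤ τ * b + δ) : τ * (Real.sigmoid a - Real.sigmoid b) ≤ δ := by
  have h1 : ∀ x ∈ (Set.univ : Set ℝ), Real.sigmoid x * (1 - Real.sigmoid x) ≤ 1 := fun x _ => by
    nlinarith [Real.sigmoid_nonneg x, Real.sigmoid_le_one x]
  have h2 := @sigmoid_sub_sigmoid_le _ convex_univ 1 h1 a b trivial trivial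
  have h3 := @sigmoid_sub_sigmoid_le _ convex_univ 1 h1 b a trivial trivial
  rcases le_total a b with hab | hab
  · have h4 := Real.sigmoid_le hab
    rcases hτ with rfl | rfl
    · linarith
    · linarith [h2 hab]
  · have h4 := Real.sigmoid_le hab
    rcases hτ with rfl | rfl
    · linarith [h3 hab]
    · linarith

section Concentration

variable {I : Type} [Fintype I] [DecidableEq I] {H : (I → Bool) → ℝ}

/-- A monotone observable with differences of order `1 / ν` whose mean under the product measure
with density `q` is `g q`, up to an error of order `1 / ν`. -/
structure Regular (ν D : ℝ) (g : ℝ → ℝ) (X : (I → Bool) → ℝ) : Prop where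
  signedMono : SignedMono 1 X
  boundedDiff : BoundedDiff ν D X
  mean : ∀ q ∈ Set.Icc (0 : ℝ) 1, ∀ y, |sweep q (Finset.univ : Finset I).toList X y - g q| ≤ D / ν

lemma Regular.mono {ν D D' : ℝ} (hν : 0 < ν) (hD : D ≤ D') {g : ℝ → ℝ} {X : (I → Bool) → ℝ}
    (h : Regular ν D g X) : Regular ν D' g X :=
  ⟨h.signedMono, h.boundedDiff.mono hν hD, fun q hq y => (h.mean q hq y).trans (by gcongr)⟩

lemma Regular.gprob_tail_le {ν D : ℝ} {g : ℝ → ℝ} {X : (I → Bool) → ℝ} (hX : Regular ν D g X)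
    {q τ : ℝ} (hq : q ∈ Set.Icc (0 : ℝ) 1) (hτ : τ = 1 ∨ τ = -1)
    {A : Set (I → Bool)} (hA : ∀ y ∈ A, ∀ s, 0 ≤ τ * (q - Real.sigmoid (incr s H y)))
    (hν : 0 < ν) (hD : 1 ≤ D) {ε : ℝ} (hε0 : 0 ≤ ε) (hε1 : ε ≤ 1) :
    gprob H {y | τ * g q + D / ν + ε ≤ τ * X y} ≤
      Real.exp (-(ε ^ 2 * ν / (4 * D ^ 2))) + Fintype.card I * gprob H Aᶜ := by
  refine _root_.gprob_tail_le hq hτ hA hX.signedMono hν hD hX.boundedDiff (fun y => ?_) hε0 hε1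
  have h := abs_le.1 (hX.mean q hq y)
  rcases hτ with rfl | rfl
  · linarith [h.2]
  · linarith [h.1]

/-- Configurations in which all conditional probabilities exceed `p` (in the direction `τ`) by at
most `r`. -/
def levelSet (H : (I → Bool) → ℝ) (p τ r : ℝ) : Set (I → Bool) :=
  {y | ∀ s, τ * (Real.sigmoid (incr s H y) - p) ≤ r}

lemma exists_density {p τ r : ℝ} (hp : p ∈ Set.Icc (0 : ℝ) 1) (hτ : τ = 1 ∨ τ = -1) (hr : 0 ≤ r) :
    ∃ q ∈ Set.Icc (0 : ℝ) 1, 0 ≤ τ * (q - p) ∧ τ * (q - p) ≤ r ∧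
      ∀ y ∈ levelSet H p τ r, ∀ s, 0 ≤ τ * (q - Real.sigmoid (incr s H y)) := by
  obtain ⟨hp0, hp1⟩ := hp
  rcases hτ with rfl | rfl
  · refine ⟨min 1 (p + r), ⟨le_min zero_le_one (by linarith), min_le_left _ _⟩, ?_, ?_,
      fun y hy s => ?_⟩
    · have : p ≤ min 1 (p + r) := le_min hp1 (by linarith)
      linarith
    · linarith [min_le_right 1 (p + r)]
    · have h := hy s
      have : Real.sigmoid (incr s H y) ≤ min 1 (p + r) :=
        le_min (Real.sigmoid_le_one _) (by linarith)
      linarith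
  · refine ⟨max 0 (p - r), ⟨le_max_left _ _, max_le zero_le_one (by linarith)⟩, ?_, ?_,
      fun y hy s => ?_⟩
    · have : max 0 (p - r) ≤ p := max_le hp0 (by linarith)
      linarith
    · linarith [le_max_right 0 (p - r)]
    · have h := hy s
      have : max 0 (p - r) ≤ Real.sigmoid (incr s H y) :=
        max_le (Real.sigmoid_nonneg _) (by linarith)
      linarith

lemma gprob_levelSet_compl_step {ν D p θ τ ε r : ℝ} {x : ℝ → ℝ} (hν : 0 < ν) (hD : 1 ≤ D)
    (hp : p ∈ Set.Icc (0 : ℝ) 1) (hτ : τ = 1 ∨ τ = -1) (hθ : 0 ≤ θ)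
    (hcontr : ∀ q ∈ Set.Icc (0 : ℝ) 1, ∀ τ : ℝ, 0 ≤ τ * (q - p) →
      τ * (Real.sigmoid (x q) - p) ≤ θ * (τ * (q - p)))
    (hH : ∀ s, Regular ν D x (incr s H)) (hε0 : 0 ≤ ε) (hε1 : ε ≤ 1) (hr : 0 ≤ r) :
    gprob H (levelSet H p τ (θ * r + D / ν + ε))ᶜ ≤ Fintype.card I *
      (Real.exp (-(ε ^ 2 * ν / (4 * D ^ 2))) + Fintype.card I * gprob H (levelSet H p τ r)ᶜ) := by
  obtain ⟨q, hq, hq0, hq1, hqA⟩ := exists_density (H := H) hp hτ hr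
  have hsub : (levelSet H p τ (θ * r + D / ν + ε))ᶜ ⊆
      ⋃ s, {y | τ * x q + D / ν + ε ≤ τ * incr s H y} := by
    intro y hy
    by_contra hcon
    simp only [Set.mem_iUnion, Set.mem_ofPred_eq, not_exists, not_le] at hcon
    refine hy fun s => ?_
    have h1 := signed_sigmoid_sub_le (a := incr s H y) (b := x q) (δ := D / ν + ε) hτ (by positivity)
      (by linarith [hcon s])
    have h2 := hcontr q hq τ hq0
    nlinarith
  refine (gprob_mono hsub).trans ((gprob_iUnion_le _).trans ?_)
  calc _ ≤ ∑ _s : I, (Real.exp (-(ε ^ 2 * ν / (4 * D ^ 2))) +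
        Fintype.card I * gprob H (levelSet H p τ r)ᶜ) :=
        Finset.sum_le_sum fun s _ => (hH s).gprob_tail_le hq hτ hqA hν hD hε0 hε1
    _ = _ := by rw [Finset.sum_const, Finset.card_univ, nsmul_eq_mul]

lemma gprob_levelSet_compl_le {ν D p θ τ ε N : ℝ} {x : ℝ → ℝ} (hν : 0 < ν) (hD : 1 ≤ D)
    (hp : p ∈ Set.Icc (0 : ℝ) 1) (hτ : τ = 1 ∨ τ = -1) (hθ : 0 ≤ θ) (hθ1 : θ < 1)
    (hcontr : ∀ q ∈ Set.Icc (0 : ℝ) 1, ∀ τ : ℝ, 0 ≤ τ * (q - p) →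
      τ * (Real.sigmoid (x q) - p) ≤ θ * (τ * (q - p)))
    (hH : ∀ s, Regular ν D x (incr s H)) (hε0 : 0 ≤ ε) (hε1 : ε ≤ 1) (hN : 1 ≤ N)
    (hIN : Fintype.card I ≤ N) (K : ℕ) :
    gprob H (levelSet H p τ (θ ^ K + (D / ν + ε) / (1 - θ)))ᶜ ≤
      K * N ^ (2 * K) * Real.exp (-(ε ^ 2 * ν / (4 * D ^ 2))) := by
  have hδ : 0 ≤ (D / ν + ε) / (1 - θ) := div_nonneg (by positivity) (by linarith)
  induction K with
  | zero =>
    have : (levelSet H p τ (θ ^ 0 + (D / ν + ε) / (1 - θ)))ᶜ = ∅ := by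
      rw [Set.compl_empty_iff, Set.eq_univ_iff_forall]
      intro y s
      have h1 := Real.sigmoid_nonneg (incr s H y)
      have h2 := Real.sigmoid_le_one (incr s H y)
      rw [pow_zero]
      rcases hτ with rfl | rfl
      · linarith [hp.1]
      · linarith [hp.2]
    rw [this, gprob_empty]
    simp
  | succ K ih =>
    set t := Real.exp (-(ε ^ 2 * ν / (4 * D ^ 2))) with ht
    have ht0 : 0 < t := Real.exp_pos _
    have hr : 0 ≤ θ ^ K + (D / ν + ε) / (1 - θ) := by positivity
    have e : θ ^ (K + 1) + (D / ν + ε) / (1 - θ) =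
        θ * (θ ^ K + (D / ν + ε) / (1 - θ)) + D / ν + ε := by
      have : 1 - θ ≠ 0 := by linarith
      field_simp
      ring
    rw [e]
    refine (gprob_levelSet_compl_step hν hD hp hτ hθ hcontr hH hε0 hε1 hr).trans ?_
    have hg := gprob_nonneg (H := H) (levelSet H p τ (θ ^ K + (D / ν + ε) / (1 - θ)))ᶜ
    calc _ ≤ N * (t + N * (K * N ^ (2 * K) * t)) := by gcongr
      _ = N * t * 1 + K * N ^ (2 * K + 2) * t := by ring
      _ ≤ N * t * N ^ (2 * K + 1) + K * N ^ (2 * K + 2) * t := by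
        gcongr
        exact one_le_pow₀ hN
      _ = _ := by push_cast; ring

/-- Two-sided tail bound after `K` rounds of the contraction. -/
lemma Regular.gprob_abs_le {ν D p θ ε N L : ℝ} {x g : ℝ → ℝ} (hν : 0 < ν) (hD : 1 ≤ D)
    (hp : p ∈ Set.Icc (0 : ℝ) 1) (hθ : 0 ≤ θ) (hθ1 : θ < 1)
    (hcontr : ∀ q ∈ Set.Icc (0 : ℝ) 1, ∀ τ : ℝ, 0 ≤ τ * (q - p) →
      τ * (Real.sigmoid (x q) - p) ≤ θ * (τ * (q - p)))
    (hH : ∀ s, Regular ν D x (incr s H)) (hε0 : 0 ≤ ε) (hε1 : ε ≤ 1) (hN : 1 ≤ N)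
    (hIN : Fintype.card I ≤ N) (hL : 0 ≤ L)
    (hg : ∀ q ∈ Set.Icc (0 : ℝ) 1, |g q - g p| ≤ L * |q - p|)
    {X : (I → Bool) → ℝ} (hX : Regular ν D g X) (K : ℕ) :
    gprob H {y | L * (θ ^ K + (D / ν + ε) / (1 - θ)) + D / ν + ε ≤ |X y - g p|} ≤
      2 * ((K + 1) * N ^ (2 * K + 1) * Real.exp (-(ε ^ 2 * ν / (4 * D ^ 2)))) := by
  set δ := θ ^ K + (D / ν + ε) / (1 - θ) with hδ
  set t := Real.exp (-(ε ^ 2 * ν / (4 * D ^ 2))) with ht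
  have ht0 : 0 < t := Real.exp_pos _
  have hδ0 : 0 ≤ δ := add_nonneg (by positivity) (div_nonneg (by positivity) (by linarith))
  have key : ∀ τ : ℝ, τ = 1 ∨ τ = -1 →
      gprob H {y | L * δ + D / ν + ε ≤ τ * (X y - g p)} ≤ (K + 1) * N ^ (2 * K + 1) * t := by
    intro τ hτ
    obtain ⟨q, hq, hq0, hq1, hqA⟩ := exists_density (H := H) hp hτ hδ0
    have habs : |q - p| ≤ δ := by
      rcases hτ with rfl | rfl <;> exact abs_le.2 ⟨by linarith, by linarith⟩
    have h1 := (hg q hq).trans (mul_le_mul_of_nonneg_left habs hL)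
    have hsub : {y | L * δ + D / ν + ε ≤ τ * (X y - g p)} ⊆
        {y | τ * g q + D / ν + ε ≤ τ * X y} := by
      intro y hy
      simp only [Set.mem_ofPred_eq] at hy ⊢
      have h2 := abs_le.1 h1
      rcases hτ with rfl | rfl
      · linarith [h2.2]
      · linarith [h2.1]
    have hg' := gprob_nonneg (H := H) (levelSet H p τ δ)ᶜ
    have h3 := gprob_levelSet_compl_le hν hD hp hτ hθ hθ1 hcontr hH hε0 hε1 hN hIN K
    refine (gprob_mono hsub).trans ((hX.gprob_tail_le hq hτ hqA hν hD hε0 hε1).trans ?_)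
    calc _ ≤ t * 1 + N * (K * N ^ (2 * K) * t) := by rw [mul_one]; gcongr
      _ ≤ t * N ^ (2 * K + 1) + N * (K * N ^ (2 * K) * t) := by
        gcongr
        exact one_le_pow₀ hN
      _ = _ := by ring
  have hsub : {y | L * δ + D / ν + ε ≤ |X y - g p|} ⊆
      {y | L * δ + D / ν + ε ≤ 1 * (X y - g p)} ∪ {y | L * δ + D / ν + ε ≤ -1 * (X y - g p)} := by
    intro y hy
    simp only [Set.mem_ofPred_eq, Set.mem_union, one_mul, neg_mul] at hy ⊢
    exact le_abs.1 hy
  refine (gprob_mono hsub).trans ((gprob_union_le _ _).trans ?_)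
  linarith [key 1 (Or.inl rfl), key (-1) (Or.inr rfl)]

end Concentration

/-! ### Polynomially small probabilities -/

lemma eventually_tail_le {a c : ℝ} (ha : 0 ≤ a) (hc : 0 < c) (M : ℕ) :
    ∀ᶠ n : ℕ in Filter.atTop, ∀ K : ℕ, (K : ℝ) ≤ a * Real.log n + 1 →
      2 * (((K : ℝ) + 1) * ((n : ℝ) ^ 2) ^ (2 * K + 1) * Real.exp (-(c * (n : ℝ) ^ (1 / 2 : ℝ)))) ≤
        ((n : ℝ) ^ M)⁻¹ := by
  set C : ℝ := 5 * a + 8 + M with hC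
  have hC0 : 0 < C := by positivity
  have h1 : ∀ᶠ n : ℕ in Filter.atTop, (Real.log n) ^ (2 : ℝ) ≤ c / C * (n : ℝ) ^ (1 / 2 : ℝ) := by
    have h := ((isLittleO_log_rpow_rpow_atTop (s := 1 / 2) 2 (by norm_num)).comp_tendsto
      tendsto_natCast_atTop_atTop).bound (c := c / C) (by positivity)
    filter_upwards [h] with n hn
    simp only [Function.comp_apply, Real.norm_eq_abs] at hn
    rw [abs_of_nonneg (by positivity : (0 : ℝ) ≤ (n : ℝ) ^ (1 / 2 : ℝ))] at hn
    exact (le_abs_self _).trans hn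
  have h2 : ∀ᶠ n : ℕ in Filter.atTop, 1 ≤ Real.log n :=
    (Real.tendsto_log_atTop.comp tendsto_natCast_atTop_atTop).eventually_ge_atTop 1
  filter_upwards [h1, h2, Filter.eventually_ge_atTop 1] with n hn1 hn2 hn3 K hK
  set l := Real.log n with hl
  have hn0 : (0 : ℝ) < n := by exact_mod_cast hn3
  have hnl : (n : ℝ) = Real.exp l := (Real.exp_log hn0).symm
  set u : ℝ := (n : ℝ) ^ (1 / 2 : ℝ)
  rw [Real.rpow_two] at hn1
  have hn4 : C * l ^ 2 ≤ c * u := by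
    rw [div_mul_eq_mul_div, le_div_iff₀ hC0] at hn1
    linarith
  have hK1 : (K : ℝ) + 1 ≤ Real.exp K := Real.add_one_le_exp _
  have h2e : (2 : ℝ) ≤ Real.exp 1 := by linarith [Real.add_one_le_exp (1 : ℝ)]
  have hpow : ((n : ℝ) ^ 2) ^ (2 * K + 1) = Real.exp ((4 * K + 2) * l) := by
    rw [hnl, ← pow_mul, ← Real.exp_nat_mul]
    congr 1; push_cast; ring
  have hM : ((n : ℝ) ^ M)⁻¹ = Real.exp (-(M * l)) := by
    rw [hnl, ← Real.exp_nat_mul, Real.exp_neg]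
  rw [hpow, hM]
  calc _ ≤ Real.exp 1 * (Real.exp K * Real.exp ((4 * K + 2) * l) * Real.exp (-(c * u))) := by
        gcongr
    _ = Real.exp (1 + K + (4 * K + 2) * l - c * u) := by
        rw [← Real.exp_add, ← Real.exp_add, ← Real.exp_add]; congr 1; ring
    _ ≤ _ := by
        apply Real.exp_le_exp.2
        have e1 : (K : ℝ) * l ≤ (a * l + 1) * l := by gcongr
        have e2 : l ≤ l ^ 2 := by nlinarith
        have e3 : (M : ℝ) * l ≤ M * l ^ 2 := by gcongr
        have e4 : a * l ≤ a * l ^ 2 := by gcongr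
        have e5 : C * l ^ 2 = 5 * (a * l ^ 2) + 8 * l ^ 2 + M * l ^ 2 := by rw [hC]; ring
        nlinarith

/-- Under a contraction hypothesis, regular observables concentrate on scale `n ^ (-1 / 4)`, up
to events of superpolynomially small probability. -/
theorem exists_concentration {D p θ L : ℝ} {x g : ℝ → ℝ} (hD : 1 ≤ D)
    (hp : p ∈ Set.Icc (0 : ℝ) 1) (hθ : 0 < θ) (hθ1 : θ < 1)
    (hcontr : ∀ q ∈ Set.Icc (0 : ℝ) 1, ∀ τ : ℝ, 0 ≤ τ * (q - p) →
      τ * (Real.sigmoid (x q) - p) ≤ θ * (τ * (q - p)))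
    (hL : 0 ≤ L) (hg : ∀ q ∈ Set.Icc (0 : ℝ) 1, |g q - g p| ≤ L * |q - p|) :
    ∃ C : ℝ, 0 ≤ C ∧ ∀ M : ℕ, ∀ᶠ n : ℕ in Filter.atTop,
      ∀ (I : Type) [Fintype I] [DecidableEq I] (H X : (I → Bool) → ℝ),
        (Fintype.card I : ℝ) ≤ (n : ℝ) ^ 2 → (∀ s, Regular n D x (incr s H)) → Regular n D g X →
          gprob H {y | C * (n : ℝ) ^ (-(1 / 4) : ℝ) ≤ |X y - g p|} ≤ ((n : ℝ) ^ M)⁻¹ := by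
  have hlog : Real.log θ < 0 := Real.log_neg hθ hθ1
  set a : ℝ := (-(4 * Real.log θ))⁻¹ with ha
  have ha0 : 0 < a := inv_pos.2 (by linarith)
  have hθ' : 0 < 1 - θ := by linarith
  refine ⟨L * (1 + (D + 1) / (1 - θ)) + D + 1, by positivity, fun M => ?_⟩
  filter_upwards [eventually_tail_le (c := 1 / (4 * D ^ 2)) ha0.le (by positivity) M,
    Filter.eventually_ge_atTop 1] with n hn hn1 I _ _ H X hI hH hX
  have hn0 : (1 : ℝ) ≤ n := by exact_mod_cast hn1
  have hnpos : (0 : ℝ) < n := by linarith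
  set ε : ℝ := (n : ℝ) ^ (-(1 / 4) : ℝ) with hε
  have hε0 : 0 ≤ ε := by positivity
  have hε1 : ε ≤ 1 := Real.rpow_le_one_of_one_le_of_nonpos hn0 (by norm_num)
  have hlogn : 0 ≤ Real.log n := Real.log_nonneg hn0
  set K := ⌈a * Real.log n⌉₊ with hK
  have hK1 : (K : ℝ) ≤ a * Real.log n + 1 := (Nat.ceil_lt_add_one (by positivity)).le
  have hK2 : a * Real.log n ≤ K := Nat.le_ceil _
  have hθK : θ ^ K ≤ ε := by
    rw [hε, Real.rpow_def_of_pos hnpos, ← Real.rpow_natCast, Real.rpow_def_of_pos hθ]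
    apply Real.exp_le_exp.2
    have h3 : Real.log θ * K ≤ Real.log θ * (a * Real.log n) :=
      mul_le_mul_of_nonpos_left hK2 hlog.le
    have h4 : Real.log θ * (a * Real.log n) = Real.log n * -(1 / 4) := by
      have := hlog.ne
      rw [ha]; field_simp
    linarith
  have hnε : D / n ≤ D * ε := by
    rw [div_eq_mul_inv, hε, ← Real.rpow_neg_one]
    gcongr
    norm_num
  have hε2 : ε ^ 2 * n / (4 * D ^ 2) = 1 / (4 * D ^ 2) * (n : ℝ) ^ (1 / 2 : ℝ) := by
    have : ε ^ 2 * n = (n : ℝ) ^ (1 / 2 : ℝ) := by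
      rw [hε, ← Real.rpow_natCast, ← Real.rpow_mul hnpos.le]
      nth_rewrite 2 [← Real.rpow_one (n : ℝ)]
      rw [← Real.rpow_add hnpos]
      norm_num
    rw [this]; ring
  have h5 := hX.gprob_abs_le (N := (n : ℝ) ^ 2) hnpos hD hp hθ.le hθ1 hcontr hH hε0 hε1
    (one_le_pow₀ hn0) hI hL hg K
  rw [hε2] at h5
  refine (gprob_mono fun y hy => ?_).trans (h5.trans (hn K hK1))
  simp only [Set.mem_ofPred_eq] at hy ⊢
  refine le_trans ?_ hy
  calc _ ≤ L * (ε + (D * ε + ε) / (1 - θ)) + D * ε + ε := by gcongr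
    _ = _ := by ring

/-! ### Analysis of the fixed point equation -/

lemma exists_lipschitz_at {g : ℝ → ℝ} (hg : Differentiable ℝ g) (p : ℝ) :
    ∃ L : ℝ, 0 ≤ L ∧ ∀ q ∈ Set.Icc (0 : ℝ) 1, |g q - g p| ≤ L * |q - p| := by
  have hc : ContinuousOn (dslope g p) (Set.Icc 0 1) := fun x _ =>
    (by
      rcases eq_or_ne x p with rfl | hx
      · exact continuousAt_dslope_same.2 (hg x)
      · exact (continuousAt_dslope_of_ne hx).2 (hg x).continuousAt : ContinuousAt _ x).continuousWithinAt
  obtain ⟨L, hL⟩ := isCompact_Icc.exists_bound_of_continuousOn hc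
  refine ⟨L, (norm_nonneg _).trans (hL 0 (by simp)), fun q hq => ?_⟩
  have h1 : g q - g p = (q - p) * dslope g p q := (sub_smul_dslope g p q).symm
  rw [h1, abs_mul, mul_comm]
  gcongr
  exact hL q hq

lemma exists_contraction {f : ℝ → ℝ} (hf : Differentiable ℝ f) {p : ℝ} (hp : p ∈ Set.Ioo (0 : ℝ) 1)
    (hfix : f p = p) (huniq : ∀ q ∈ Set.Ioo (0 : ℝ) 1, f q = q → q = p) (h0 : 0 < f 0)
    (h1 : f 1 < 1) (hderiv : deriv f p < 1) :
    ∃ θ : ℝ, 0 < θ ∧ θ < 1 ∧ ∀ q ∈ Set.Icc (0 : ℝ) 1, ∀ τ : ℝ, 0 ≤ τ * (q - p) →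
      τ * (f q - p) ≤ θ * (τ * (q - p)) := by
  have hc : ContinuousOn (dslope f p) (Set.Icc 0 1) := fun x _ =>
    (by
      rcases eq_or_ne x p with rfl | hx
      · exact continuousAt_dslope_same.2 (hf x)
      · exact (continuousAt_dslope_of_ne hx).2 (hf x).continuousAt : ContinuousAt _ x).continuousWithinAt
  have hcont : Continuous fun q => f q - q := hf.continuous.sub continuous_id
  have hgt : ∀ q ∈ Set.Ioc p 1, f q < q := by
    rintro q ⟨hpq, hq1⟩
    by_contra! hcon
    obtain ⟨r, ⟨hr1, hr2⟩, hr3⟩ := intermediate_value_Icc' hq1 hcont.continuousOn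
      (show (0 : ℝ) ∈ Set.Icc (f 1 - 1) (f q - q) from ⟨by linarith, by linarith⟩)
    have hr3' : f r = r := by simpa [sub_eq_zero] using hr3
    have hr4 : r ≠ 1 := fun h => by rw [h] at hr3'; linarith
    have := huniq r ⟨by linarith [hp.1], lt_of_le_of_ne hr2 hr4⟩ hr3'
    linarith
  have hlt : ∀ q ∈ Set.Ico 0 p, q < f q := by
    rintro q ⟨hq0, hpq⟩
    by_contra! hcon
    obtain ⟨r, ⟨hr1, hr2⟩, hr3⟩ := intermediate_value_Icc' hq0 hcont.continuousOn
      (show (0 : ℝ) ∈ Set.Icc (f q - q) (f 0 - 0) from ⟨by linarith, by linarith⟩)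
    have hr3' : f r = r := by simpa [sub_eq_zero] using hr3
    have hr4 : 0 ≠ r := fun h => by rw [← h] at hr3'; linarith
    have := huniq r ⟨lt_of_le_of_ne hr1 hr4, by linarith [hp.2]⟩ hr3'
    linarith
  have hd : ∀ q ∈ Set.Icc (0 : ℝ) 1, dslope f p q < 1 := by
    intro q hq
    rcases lt_trichotomy q p with h | rfl | h
    · have h2 := sub_smul_dslope f p q
      rw [smul_eq_mul, hfix] at h2
      have h3 := hlt q ⟨hq.1, h⟩
      nlinarith
    · rwa [dslope_same]
    · have h2 := sub_smul_dslope f p q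
      rw [smul_eq_mul, hfix] at h2
      have h3 := hgt q ⟨h, hq.2⟩
      nlinarith
  obtain ⟨q₀, hq₀, hmax⟩ := isCompact_Icc.exists_isMaxOn (Set.nonempty_Icc.2 zero_le_one) hc
  refine ⟨max (dslope f p q₀) (1 / 2), lt_max_of_lt_right (by norm_num),
    max_lt (hd q₀ hq₀) (by norm_num), fun q hq τ hτ => ?_⟩
  have h2 := sub_smul_dslope f p q
  rw [smul_eq_mul, hfix] at h2
  have h3 : dslope f p q ≤ max (dslope f p q₀) (1 / 2) := (hmax hq).trans (le_max_left _ _)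
  calc τ * (f q - p) = dslope f p q * (τ * (q - p)) := by rw [← h2]; ring
    _ ≤ _ := by gcongr

section Phi

variable {k : ℕ} (β : Fin (k + 1) → ℝ) (v : Fin (k + 1) → ℕ)
  (H : ∀ j : Fin (k + 1), SimpleGraph (Fin (v j)))

lemma phiFn_eq_sigmoid (a : ℝ) : phiFn β v H a = Real.sigmoid (2 * PhiFn β v H a) := by
  rw [phiFn, Real.sigmoid_def, Real.exp_neg]
  have := Real.exp_pos (2 * PhiFn β v H a)
  field_simp

lemma hasDerivAt_PhiFn (a : ℝ) : HasDerivAt (PhiFn β v H)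
    (∑ j, β j * (eCount (H j) : ℝ) * (((eCount (H j) - 1 : ℕ) : ℝ) * a ^ (eCount (H j) - 1 - 1)))
    a := by
  unfold PhiFn
  exact HasDerivAt.fun_sum fun j _ => (hasDerivAt_pow _ a).const_mul _

lemma differentiable_PhiFn : Differentiable ℝ (PhiFn β v H) :=
  fun a => (hasDerivAt_PhiFn β v H a).differentiableAt

lemma differentiable_phiFn : Differentiable ℝ (phiFn β v H) := by
  rw [funext (phiFn_eq_sigmoid β v H)]
  exact fun a => (differentiable_sigmoid _).comp a
    (((differentiable_PhiFn β v H) a).const_mul 2)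

lemma deriv_phiFn {p : ℝ} (hfix : phiFn β v H p = p) :
    deriv (phiFn β v H) p = p * (1 - p) * (2 * deriv (PhiFn β v H) p) := by
  have h1 := ((differentiable_PhiFn β v H p).hasDerivAt.const_mul 2)
  have h2 := (hasDerivAt_sigmoid (2 * PhiFn β v H p)).comp p h1
  rw [← phiFn_eq_sigmoid, hfix] at h2
  have h3 : phiFn β v H = Real.sigmoid ∘ fun a => 2 * PhiFn β v H a :=
    funext (phiFn_eq_sigmoid β v H)
  rw [h3]
  exact h2.deriv

lemma deriv_PhiFn_nonneg (hβ : ∀ j : Fin (k + 1), j ≠ 0 → 0 < β j) (he0 : eCount (H 0) = 1)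
    {p : ℝ} (hp : 0 ≤ p) : 0 ≤ deriv (PhiFn β v H) p := by
  rw [(hasDerivAt_PhiFn β v H p).deriv]
  refine Finset.sum_nonneg fun j _ => ?_
  rcases eq_or_ne j 0 with rfl | hj
  · simp [he0]
  · have := hβ j hj
    positivity

/-- Local uniform version of subcriticality. -/
lemma exists_local_slope {p : ℝ} (hp : p ∈ Set.Ioo (0 : ℝ) 1) (hfix : phiFn β v H p = p)
    (hsub : deriv (phiFn β v H) p < 1) :
    ∃ η L : ℝ, 0 < η ∧ 0 ≤ L ∧ L * (2 * deriv (PhiFn β v H) p + η) < 1 ∧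
      ∀ x, |x - 2 * PhiFn β v H p| ≤ η → Real.sigmoid x * (1 - Real.sigmoid x) ≤ L := by
  set d := deriv (PhiFn β v H) p with hd
  set c := 2 * PhiFn β v H p with hc
  set L₀ := p * (1 - p) with hL₀
  have hL₀p : 0 < L₀ := mul_pos hp.1 (by linarith [hp.2])
  have h1 : L₀ * (2 * d) < 1 := by rwa [deriv_phiFn β v H hfix] at hsub
  have hcont : Filter.Tendsto (fun t : ℝ => (L₀ + t) * (2 * d + t)) (nhdsWithin 0 (Set.Ioi 0))
      (nhds (L₀ * (2 * d))) := by
    have : Continuous fun t : ℝ => (L₀ + t) * (2 * d + t) := by fun_prop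
    have h2 := this.tendsto 0
    simp only [add_zero] at h2
    exact h2.mono_left nhdsWithin_le_nhds
  obtain ⟨t, ht1, ht0⟩ := ((hcont.eventually (gt_mem_nhds h1)).and self_mem_nhdsWithin).exists
  have ht0 : 0 < t := ht0
  have hsig : Continuous fun x : ℝ => Real.sigmoid x * (1 - Real.sigmoid x) := by
    have := continuous_sigmoid
    fun_prop
  obtain ⟨δ, hδ, hδ2⟩ := Metric.continuousAt_iff.1 (hsig.continuousAt (x := c)) t ht0
  have hcp : Real.sigmoid c = p := by rw [← phiFn_eq_sigmoid, hfix]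
  refine ⟨min t (δ / 2), L₀ + t, by positivity, by positivity, ?_, fun x hx => ?_⟩
  · refine lt_of_le_of_lt ?_ ht1
    gcongr
    exact min_le_left _ _
  · have h2 := hδ2 (x := x) (by
      rw [Real.dist_eq]
      exact lt_of_le_of_lt (hx.trans (min_le_right _ _)) (by linarith))
    rw [Real.dist_eq, hcp] at h2
    linarith [(abs_lt.1 h2).2]

end Phi

/-! ### Counting injections with prescribed values -/

section Counting

variable {V : Type} [Fintype V] [DecidableEq V] {n : ℕ}

open Classical in
/-- Injective maps from `V` to `Fin n`. -/
def injMaps (V : Type) [Fintype V] [DecidableEq V] (n : ℕ) : Finset (V → Fin n) :=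
  Finset.univ.filter Function.Injective

open Classical in
/-- Ordered pairs of adjacent vertices. -/
def adjPairs (G : SimpleGraph V) : Finset (V × V) := Finset.univ.filter fun d => G.Adj d.1 d.2

open Classical in
/-- The images of the edges of `G` under `φ`. -/
def imageEdges (G : SimpleGraph V) (φ : V → Fin n) : Finset (EdgeIdx n) :=
  Finset.univ.filter fun s => ∃ a b, G.Adj a b ∧ φ a = s.1.1 ∧ φ b = s.1.2

lemma mem_injMaps {φ : V → Fin n} : φ ∈ injMaps V n ↔ Function.Injective φ := by simp [injMaps]

lemma mem_adjPairs {G : SimpleGraph V} {d : V × V} : d ∈ adjPairs G ↔ G.Adj d.1 d.2 := by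
  simp [adjPairs]

lemma mem_imageEdges {G : SimpleGraph V} {φ : V → Fin n} {s : EdgeIdx n} :
    s ∈ imageEdges G φ ↔ ∃ a b, G.Adj a b ∧ φ a = s.1.1 ∧ φ b = s.1.2 := by simp [imageEdges]

lemma card_adjPairs (G : SimpleGraph V) : (adjPairs G).card = 2 * eCount G := by
  classical
  have h := G.dart_card_eq_twice_card_edges
  rw [eCount, Nat.card_eq_fintype_card, ← SimpleGraph.edgeFinset_card, ← h, ← Finset.card_univ]
  refine Finset.card_bij' (fun d hd => ⟨d, mem_adjPairs.1 hd⟩) (fun d _ => d.toProd) ?_ ?_ ?_ ?_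
  · simp
  · exact fun d _ => mem_adjPairs.2 d.adj
  · simp
  · simp

lemma card_imageEdges (G : SimpleGraph V) {φ : V → Fin n} (hφ : Function.Injective φ) :
    (imageEdges G φ).card = eCount G := by
  have h1 : (imageEdges G φ).card = ((adjPairs G).filter fun d => φ d.1 < φ d.2).card := by
    symm
    refine Finset.card_bij (fun d hd => (⟨(φ d.1, φ d.2), (Finset.mem_filter.1 hd).2⟩ : EdgeIdx n))
      (fun d hd => ?_) (fun d hd d' hd' h => ?_) (fun s hs => ?_)
    · exact mem_imageEdges.2 ⟨d.1, d.2, mem_adjPairs.1 (Finset.mem_filter.1 hd).1, rfl, rfl⟩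
    · have h2 := congrArg Subtype.val h
      simp only [Prod.mk.injEq] at h2
      exact Prod.ext (hφ h2.1) (hφ h2.2)
    · obtain ⟨a, b, hab, ha, hb⟩ := mem_imageEdges.1 hs
      refine ⟨(a, b), Finset.mem_filter.2 ⟨mem_adjPairs.2 hab, ?_⟩, Subtype.ext (Prod.ext ha hb)⟩
      simp only [ha, hb]
      exact s.2
  have h2 : ((adjPairs G).filter fun d => φ d.1 < φ d.2).card =
      ((adjPairs G).filter fun d => ¬ φ d.1 < φ d.2).card := by
    refine Finset.card_bij' (fun d _ => d.swap) (fun d _ => d.swap) (fun d hd => ?_)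
      (fun d hd => ?_) (by simp) (by simp)
    · rw [Finset.mem_filter, mem_adjPairs] at hd ⊢
      exact ⟨hd.1.symm, not_lt.2 hd.2.le⟩
    · rw [Finset.mem_filter, mem_adjPairs] at hd ⊢
      exact ⟨hd.1.symm, lt_of_le_of_ne (not_lt.1 hd.2) fun h => hd.1.ne' (hφ h)⟩
  have h3 := Finset.card_filter_add_card_filter_not (s := adjPairs G) (fun d => φ d.1 < φ d.2)
  have h4 := card_adjPairs G
  omega

lemma homCount_eq_sum (G : SimpleGraph V) (y : EdgeIdx n → Bool) :
    (homCount G y : ℝ) = ∑ φ ∈ injMaps V n, mono (imageEdges G φ) y := by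
  classical
  have key : ∀ φ : V → Fin n, Function.Injective φ →
      ((∀ a b, G.Adj a b → yAdj y (φ a) (φ b) = true) ↔ ∀ s ∈ imageEdges G φ, y s = true) := by
    intro φ hφ
    constructor
    · intro h s hs
      obtain ⟨a, b, hab, ha, hb⟩ := mem_imageEdges.1 hs
      have h1 := h a b hab
      rw [ha, hb, yAdj, dif_pos s.2] at h1
      exact h1
    · intro h a b hab
      rcases lt_trichotomy (φ a) (φ b) with h1 | h1 | h1
      · rw [yAdj, dif_pos h1]
        exact h _ (mem_imageEdges.2 ⟨a, b, hab, rfl, rfl⟩)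
      · exact absurd (hφ h1) hab.ne
      · rw [yAdj, dif_neg h1.asymm, dif_pos h1]
        exact h _ (mem_imageEdges.2 ⟨b, a, hab.symm, rfl, rfl⟩)
  rw [homCount, Nat.card_eq_fintype_card, Fintype.card_subtype]
  rw [Finset.card_filter, injMaps, Finset.sum_filter, Nat.cast_sum]
  refine Finset.sum_congr rfl fun φ _ => ?_
  by_cases hφ : Function.Injective φ
  · simp only [hφ, true_and, if_true, key φ hφ, mono]
    split_ifs <;> simp
  · simp [hφ]

lemma card_prescribed (A : Finset V) (f : V → Fin n) :
    (Finset.univ.filter fun φ : V → Fin n => ∀ z ∈ A, φ z = f z).card =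
      n ^ (Fintype.card V - A.card) := by
  have h : (Finset.univ.filter fun φ : V → Fin n => ∀ z ∈ A, φ z = f z) =
      Fintype.piFinset fun z => if z ∈ A then {f z} else Finset.univ := by
    ext φ
    simp only [Finset.mem_filter, Finset.mem_univ, true_and, Fintype.mem_piFinset]
    refine forall_congr' fun z => ?_
    by_cases hz : z ∈ A <;> simp [hz]
  rw [h, Fintype.card_piFinset]
  have h2 : ∀ z, (if z ∈ A then ({f z} : Finset (Fin n)) else Finset.univ).card =
      if z ∈ A then 1 else n := fun z => by split_ifs <;> simp
  simp only [h2]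
  rw [Finset.prod_ite]
  simp [Finset.filter_not, Finset.card_sdiff]

lemma card_prescribed_two {a b : V} (hab : a ≠ b) (c d : Fin n) :
    ((Finset.univ.filter fun φ : V → Fin n => φ a = c ∧ φ b = d).card : ℝ) =
      (n : ℝ) ^ ((Fintype.card V : ℤ) - 2) := by
  have h := card_prescribed {a, b} fun z => if z = a then c else d
  have h2 : ({a, b} : Finset V).card ≤ Fintype.card V := Finset.card_le_univ _
  rw [Finset.card_pair hab] at h h2
  have h3 : (Finset.univ.filter fun φ : V → Fin n => φ a = c ∧ φ b = d) =
      Finset.univ.filter fun φ : V → Fin n =>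
        ∀ z ∈ ({a, b} : Finset V), φ z = if z = a then c else d :=
    Finset.filter_congr fun φ _ => by simp [hab.symm]
  rw [h3, h, Nat.cast_pow, ← zpow_natCast]
  congr 1
  omega

lemma card_prescribed_three {a b i : V} (hab : a ≠ b) (hia : i ≠ a) (hib : i ≠ b) (c d x : Fin n) :
    ((Finset.univ.filter fun φ : V → Fin n => φ a = c ∧ φ b = d ∧ φ i = x).card : ℝ) =
      (n : ℝ) ^ ((Fintype.card V : ℤ) - 3) := by
  have h := card_prescribed {a, b, i} fun z => if z = a then c else if z = b then d else x
  have h2 : ({a, b, i} : Finset V).card ≤ Fintype.card V := Finset.card_le_univ _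
  rw [Finset.card_eq_three.2 ⟨a, b, i, hab, hia.symm, hib.symm, rfl⟩] at h h2
  have h3 : (Finset.univ.filter fun φ : V → Fin n => φ a = c ∧ φ b = d ∧ φ i = x) =
      Finset.univ.filter fun φ : V → Fin n => ∀ z ∈ ({a, b, i} : Finset V),
        φ z = if z = a then c else if z = b then d else x :=
    Finset.filter_congr fun φ _ => by simp [hab.symm, hia, hib]
  rw [h3, h, Nat.cast_pow, ← zpow_natCast]
  congr 1
  omega

lemma card_injMaps_prescribed_le {a b : V} (hab : a ≠ b) (c d : Fin n) :
    (((injMaps V n).filter fun φ => φ a = c ∧ φ b = d).card : ℝ) ≤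
      (n : ℝ) ^ ((Fintype.card V : ℤ) - 2) := by
  rw [← card_prescribed_two hab c d]
  exact_mod_cast Finset.card_le_card (Finset.filter_subset_filter _ (Finset.subset_univ _))

lemma le_card_injMaps_prescribed {a b : V} (hab : a ≠ b) {c d : Fin n} (hcd : c ≠ d) :
    (n : ℝ) ^ ((Fintype.card V : ℤ) - 2) -
        (Fintype.card V : ℝ) ^ 2 * (n : ℝ) ^ ((Fintype.card V : ℤ) - 3) ≤
      (((injMaps V n).filter fun φ => φ a = c ∧ φ b = d).card : ℝ) := by
  set B : V × V → Finset (V → Fin n) := fun z => Finset.univ.filter fun φ =>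
    (φ a = c ∧ φ b = d) ∧ z.1 ≠ z.2 ∧ φ z.1 = φ z.2 ∧ z.1 ≠ a ∧ z.1 ≠ b with hB
  have hsub : (Finset.univ.filter fun φ : V → Fin n => φ a = c ∧ φ b = d) ⊆
      ((injMaps V n).filter fun φ => φ a = c ∧ φ b = d) ∪ Finset.univ.biUnion B := by
    intro φ hφ
    replace hφ := (Finset.mem_filter.1 hφ).2
    rw [Finset.mem_union]
    by_cases hinj : Function.Injective φ
    · exact Or.inl (Finset.mem_filter.2 ⟨mem_injMaps.2 hinj, hφ⟩)
    · right
      simp only [Function.Injective, not_forall] at hinj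
      obtain ⟨i, j, hij, hne⟩ := hinj
      have h1 : ∀ i j, φ i = φ j → i ≠ j → i ≠ a → i ≠ b → φ ∈ Finset.univ.biUnion B :=
        fun i j hij hne hia hib => Finset.mem_biUnion.2 ⟨(i, j), Finset.mem_univ _,
          Finset.mem_filter.2 ⟨Finset.mem_univ _, hφ, hne, hij, hia, hib⟩⟩
      by_cases hi : i ≠ a ∧ i ≠ b
      · exact h1 i j hij hne hi.1 hi.2
      · by_cases hj : j ≠ a ∧ j ≠ b
        · exact h1 j i hij.symm (Ne.symm hne) hj.1 hj.2
        · exfalso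
          grind
  have hBcard : ∀ z, ((B z).card : ℝ) ≤ (n : ℝ) ^ ((Fintype.card V : ℤ) - 3) := by
    rintro ⟨i, j⟩
    by_cases h : i ≠ j ∧ i ≠ a ∧ i ≠ b
    · rw [← card_prescribed_three hab h.2.1 h.2.2 c d c]
      refine Nat.cast_le.2 (Finset.card_le_card_of_injOn (fun φ => Function.update φ i c)
        (fun φ hφ => ?_) fun φ hφ ψ hψ heq => ?_)
      · replace hφ := (Finset.mem_filter.1 hφ).2
        refine Finset.mem_coe.2 (Finset.mem_filter.2 ⟨Finset.mem_univ _, ?_⟩)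
        simp [Function.update_of_ne h.2.1.symm, Function.update_of_ne h.2.2.symm, hφ.1]
      · replace hφ := (Finset.mem_filter.1 hφ).2
        replace hψ := (Finset.mem_filter.1 hψ).2
        have h3 : ∀ z, z ≠ i → φ z = ψ z := fun z hz => by
          have := congrFun heq z
          simpa [Function.update_of_ne hz] using this
        funext z
        by_cases hz : z = i
        · rw [hz]
          exact hφ.2.2.1.trans ((h3 j h.1.symm).trans hψ.2.2.1.symm)
        · exact h3 z hz
    · have : B (i, j) = ∅ := Finset.filter_eq_empty_iff.2 fun φ _ h1 =>
        h ⟨h1.2.1, h1.2.2.2.1, h1.2.2.2.2⟩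
      rw [this]
      simp only [Finset.card_empty, Nat.cast_zero]
      positivity
  have h1 := Finset.card_le_card hsub
  have h2 := h1.trans (Finset.card_union_le _ _)
  have h3 : ((Finset.univ.biUnion B).card : ℝ) ≤
      (Fintype.card V : ℝ) ^ 2 * (n : ℝ) ^ ((Fintype.card V : ℤ) - 3) := by
    calc ((Finset.univ.biUnion B).card : ℝ) ≤ ∑ z, ((B z).card : ℝ) := by
          exact_mod_cast Finset.card_biUnion_le
      _ ≤ ∑ _z : V × V, (n : ℝ) ^ ((Fintype.card V : ℤ) - 3) := Finset.sum_le_sum fun z _ => hBcard z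
      _ = _ := by
        rw [Finset.sum_const, Finset.card_univ, Fintype.card_prod, nsmul_eq_mul]
        push_cast; ring
  rw [← card_prescribed_two hab c d]
  have h4 := (Nat.cast_le (α := ℝ)).2 h2
  push_cast at h4
  linarith

end Counting

/-! ### Subgraph counts as regular observables -/

lemma regular_sum_mono {I ι : Type} [Fintype I] [DecidableEq I] {S : Finset ι} {T : ι → Finset I}
    {w ν D A g₀ : ℝ} {m : ℕ} (hw : 0 ≤ w) (hT : ∀ i ∈ S, (T i).card = m)
    (hA : w * S.card ≤ A) (hmA : m * A ≤ D)
    (hdiff : ∀ u, w * (S.filter fun i => u ∈ T i).card ≤ D / ν)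
    (hmean : |w * S.card - g₀| ≤ D / ν) :
    Regular ν D (fun q => g₀ * q ^ m) fun y => ∑ i ∈ S, w * mono (T i) y := by
  have hincr : ∀ u, incr u (fun y => ∑ i ∈ S, w * mono (T i) y) =
      fun y => ∑ i ∈ S.filter fun i => u ∈ T i, w * mono ((T i).erase u) y := fun u => by
    funext y
    simp only [incr_sum, incr_const_mul, incr_mono, Finset.sum_filter, mul_ite, mul_zero]
  refine ⟨fun u y => ?_, ⟨fun u => w * (S.filter fun i => u ∈ T i).card, fun u y => ?_, hdiff, ?_⟩,
    fun q hq y => ?_⟩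
  · rw [hincr, one_mul]
    exact Finset.sum_nonneg fun i _ => mul_nonneg hw (mono_mem_Icc _ _).1
  · rw [hincr, abs_of_nonneg (Finset.sum_nonneg fun i _ => mul_nonneg hw (mono_mem_Icc _ _).1)]
    calc _ ≤ ∑ i ∈ S.filter fun i => u ∈ T i, w * 1 := by
          gcongr with i hi
          exact (mono_mem_Icc _ _).2
      _ = _ := by rw [Finset.sum_const, nsmul_eq_mul]; ring
  · have h1 : ∑ u, (S.filter fun i => u ∈ T i).card = S.card * m := by
      simp only [Finset.card_filter]
      rw [Finset.sum_comm, Finset.sum_congr rfl (g := fun _ => m), Finset.sum_const, smul_eq_mul]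
      intro i hi
      rw [← hT i hi, ← Finset.card_filter, Finset.filter_mem_eq_inter, Finset.univ_inter]
    rw [← Finset.mul_sum, ← Nat.cast_sum, h1]
    push_cast
    calc w * (S.card * m) = m * (w * S.card) := by ring
      _ ≤ m * A := by gcongr
      _ ≤ D := hmA
  · have h1 : sweep q (Finset.univ : Finset I).toList (fun y => ∑ i ∈ S, w * mono (T i) y) y =
        w * S.card * q ^ m := by
      simp only [sweep_sum, sweep_const_mul, sweep_univ_monomial]
      rw [Finset.sum_congr rfl fun i hi => by rw [hT i hi], Finset.sum_const, nsmul_eq_mul]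
      ring
    rw [h1, ← sub_mul, abs_mul, abs_of_nonneg (pow_nonneg hq.1 m)]
    exact (mul_le_of_le_one_right (abs_nonneg _) (pow_le_one₀ hq.1 hq.2)).trans hmean

lemma Regular.sum {I ι : Type} [Fintype I] [DecidableEq I] {S : Finset ι} {ν : ℝ} {a D : ι → ℝ}
    {g : ι → ℝ → ℝ} {X : ι → (I → Bool) → ℝ} (h : ∀ i ∈ S, Regular ν (D i) (g i) (X i))
    (ha : ∀ i ∈ S, ∀ s y, 0 ≤ a i * incr s (X i) y) :
    Regular ν (∑ i ∈ S, |a i| * D i) (fun q => ∑ i ∈ S, a i * g i q)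
      (fun y => ∑ i ∈ S, a i * X i y) := by
  refine ⟨fun s y => ?_, BoundedDiff.sum fun i hi => (h i hi).boundedDiff, fun q hq y => ?_⟩
  · rw [incr_sum, one_mul]
    refine Finset.sum_nonneg fun i hi => ?_
    rw [incr_const_mul]
    exact ha i hi s y
  · simp only [sweep_sum, sweep_const_mul]
    rw [← Finset.sum_sub_distrib, Finset.sum_div]
    refine (Finset.abs_sum_le_sum_abs _ _).trans (Finset.sum_le_sum fun i hi => ?_)
    rw [← mul_sub, abs_mul, mul_div_assoc]
    gcongr
    exact (h i hi).mean q hq y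

section SubgraphStatistics

variable {v n : ℕ} (G : SimpleGraph (Fin v))

/-- Injections whose image contains the edge `s`. -/
def injThrough (s : EdgeIdx n) : Finset (Fin v → Fin n) :=
  (injMaps (Fin v) n).filter fun φ => s ∈ imageEdges G φ

lemma abs_card_injThrough_sub_le (hn : 0 < n) (s : EdgeIdx n) :
    (n : ℝ) ^ ((2 : ℤ) - v) * (injThrough G s).card ≤ 2 * eCount G ∧
    |(n : ℝ) ^ ((2 : ℤ) - v) * (injThrough G s).card - 2 * eCount G| ≤
      2 * eCount G * (v : ℝ) ^ 2 / n := by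
  have hn0 : (0 : ℝ) < n := by exact_mod_cast hn
  set w := (n : ℝ) ^ ((2 : ℤ) - v) with hw
  have hw0 : 0 < w := by positivity
  have hw2 : w * (n : ℝ) ^ ((v : ℤ) - 2) = 1 := by
    rw [hw, ← zpow_add₀ hn0.ne']; simp
  have hw3 : w * (n : ℝ) ^ ((v : ℤ) - 3) = (n : ℝ)⁻¹ := by
    rw [hw, ← zpow_add₀ hn0.ne', ← zpow_neg_one]; congr 1; ring
  have hcard : (injThrough G s).card = ∑ d ∈ adjPairs G,
      ((injMaps (Fin v) n).filter fun φ => φ d.1 = s.1.1 ∧ φ d.2 = s.1.2).card := by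
    rw [← Finset.card_biUnion]
    · congr 1
      ext φ
      simp only [injThrough, Finset.mem_filter, Finset.mem_biUnion, mem_imageEdges, mem_adjPairs,
        Prod.exists]
      constructor
      · rintro ⟨h, a, b, hab, h1⟩
        exact ⟨a, b, hab, h, h1⟩
      · rintro ⟨a, b, hab, h, h1⟩
        exact ⟨h, a, b, hab, h1⟩
    · intro d _ d' _ hne
      rw [Function.onFun, Finset.disjoint_left]
      intro φ h1 h2
      rw [Finset.mem_filter, mem_injMaps] at h1 h2
      exact hne (Prod.ext (h1.1 (h1.2.1.trans h2.2.1.symm)) (h1.1 (h1.2.2.trans h2.2.2.symm)))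
  have hle : w * (injThrough G s).card ≤ ∑ _d ∈ adjPairs G, (1 : ℝ) := by
    rw [hcard, Nat.cast_sum, Finset.mul_sum]
    refine Finset.sum_le_sum fun d hd => ?_
    have h := card_injMaps_prescribed_le (mem_adjPairs.1 hd).ne s.1.1 s.1.2
    rw [Fintype.card_fin] at h
    rw [← hw2]
    gcongr
  have hge : ∑ _d ∈ adjPairs G, (1 - (v : ℝ) ^ 2 * (n : ℝ)⁻¹) ≤ w * (injThrough G s).card := by
    rw [hcard, Nat.cast_sum, Finset.mul_sum]
    refine Finset.sum_le_sum fun d hd => ?_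
    have h := le_card_injMaps_prescribed (mem_adjPairs.1 hd).ne s.2.ne
    rw [Fintype.card_fin] at h
    rw [← hw2, ← hw3]
    calc _ = w * ((n : ℝ) ^ ((v : ℤ) - 2) - (v : ℝ) ^ 2 * (n : ℝ) ^ ((v : ℤ) - 3)) := by ring
      _ ≤ _ := by gcongr
  rw [Finset.sum_const, card_adjPairs, nsmul_eq_mul] at hle hge
  push_cast at hle hge
  refine ⟨by linarith, abs_le.2 ⟨?_, ?_⟩⟩
  · rw [div_eq_mul_inv]; linarith
  · have : 0 ≤ 2 * eCount G * (v : ℝ) ^ 2 / n := by positivity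
    linarith

lemma card_injThrough_inter_le (hn : 0 < n) {s u : EdgeIdx n} (hsu : s ≠ u) :
    (n : ℝ) ^ ((2 : ℤ) - v) * ((injThrough G s).filter fun φ => u ∈ imageEdges G φ).card ≤
      2 * eCount G * v / n := by
  have hn0 : (0 : ℝ) < n := by exact_mod_cast hn
  set w := (n : ℝ) ^ ((2 : ℤ) - v) with hw
  have hw0 : 0 < w := by positivity
  have hw3 : w * (n : ℝ) ^ ((v : ℤ) - 3) = (n : ℝ)⁻¹ := by
    rw [hw, ← zpow_add₀ hn0.ne', ← zpow_neg_one]; congr 1; ring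
  obtain ⟨x, hxu, hx1, hx2⟩ : ∃ x, (x = u.1.1 ∨ x = u.1.2) ∧ x ≠ s.1.1 ∧ x ≠ s.1.2 := by
    by_contra! hcon
    have h1 := hcon u.1.1 (Or.inl rfl)
    have h2 := hcon u.1.2 (Or.inr rfl)
    have h3 := s.2
    have h4 := u.2
    have hne : ¬ (s.1.1 = u.1.1 ∧ s.1.2 = u.1.2) := fun h => hsu (Subtype.ext (Prod.ext h.1 h.2))
    grind
  set B : (Fin v × Fin v) × Fin v → Finset (Fin v → Fin n) := fun z =>
    Finset.univ.filter fun φ => (φ z.1.1 = s.1.1 ∧ φ z.1.2 = s.1.2 ∧ φ z.2 = x) with hB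
  set E := (adjPairs G ×ˢ (Finset.univ : Finset (Fin v))).filter
    fun z => z.2 ≠ z.1.1 ∧ z.2 ≠ z.1.2 with hE
  have hsub : ((injThrough G s).filter fun φ => u ∈ imageEdges G φ) ⊆ E.biUnion B := by
    intro φ hφ
    rw [Finset.mem_filter, injThrough, Finset.mem_filter, mem_imageEdges, mem_imageEdges] at hφ
    obtain ⟨⟨-, a, b, hab, ha, hb⟩, c, d, hcd, hc, hd⟩ := hφ
    obtain ⟨i, hi⟩ : ∃ i, φ i = x := by
      rcases hxu with rfl | rfl
      exacts [⟨c, hc⟩, ⟨d, hd⟩]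
    refine Finset.mem_biUnion.2 ⟨((a, b), i), Finset.mem_filter.2
      ⟨Finset.mem_product.2 ⟨mem_adjPairs.2 hab, Finset.mem_univ _⟩, ?_, ?_⟩,
      Finset.mem_filter.2 ⟨Finset.mem_univ _, ha, hb, hi⟩⟩
    · exact fun h => hx1 (hi.symm.trans ((congrArg φ h).trans ha))
    · exact fun h => hx2 (hi.symm.trans ((congrArg φ h).trans hb))
  have hEcard : (E.card : ℝ) ≤ 2 * eCount G * v := by
    have h := Finset.card_filter_le (adjPairs G ×ˢ (Finset.univ : Finset (Fin v)))
      fun z => z.2 ≠ z.1.1 ∧ z.2 ≠ z.1.2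
    rw [Finset.card_product, card_adjPairs, Finset.card_univ, Fintype.card_fin] at h
    exact_mod_cast h
  have h1 : (((injThrough G s).filter fun φ => u ∈ imageEdges G φ).card : ℝ) ≤
      E.card * (n : ℝ) ^ ((v : ℤ) - 3) := by
    calc _ ≤ ((∑ z ∈ E, (B z).card : ℕ) : ℝ) :=
          Nat.cast_le.2 ((Finset.card_le_card hsub).trans Finset.card_biUnion_le)
      _ = ∑ z ∈ E, ((B z).card : ℝ) := by push_cast; rfl
      _ = ∑ z ∈ E, (n : ℝ) ^ ((v : ℤ) - 3) := Finset.sum_congr rfl fun z hz => by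
          obtain ⟨hz1, hz2, hz3⟩ := Finset.mem_filter.1 hz
          have h := card_prescribed_three (mem_adjPairs.1 (Finset.mem_product.1 hz1).1).ne hz2 hz3
            s.1.1 s.1.2 x
          rwa [Fintype.card_fin] at h
      _ = _ := by rw [Finset.sum_const, nsmul_eq_mul]
  calc _ ≤ w * (E.card * (n : ℝ) ^ ((v : ℤ) - 3)) := by gcongr
    _ = E.card * (n : ℝ)⁻¹ := by rw [← hw3]; ring
    _ ≤ _ := by rw [div_eq_mul_inv]; gcongr

end SubgraphStatistics

/-! ### Statistics of the Hamiltonian -/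

section Statistics

variable {v n : ℕ} (G : SimpleGraph (Fin v))

/-- The normalized discrete derivative of a subgraph count. -/
def edgeStat (s : EdgeIdx n) (y : EdgeIdx n → Bool) : ℝ :=
  (n : ℝ) ^ ((2 : ℤ) - v) * incr s (fun z => (homCount G z : ℝ)) y

/-- The normalized sum of second discrete derivatives of a subgraph count. -/
def pairStat (t : EdgeIdx n) (y : EdgeIdx n → Bool) : ℝ :=
  incr t (fun z => ∑ s, edgeStat G s z) y

/-- A constant controlling the regularity of `edgeStat` and `pairStat`. -/
def statConst : ℝ := 2 * eCount G * (eCount G + 1) * (eCount G + (v : ℝ) ^ 2)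

lemma edgeStat_eq_sum (s : EdgeIdx n) :
    edgeStat G s = fun y => ∑ φ ∈ injThrough G s,
      (n : ℝ) ^ ((2 : ℤ) - v) * mono ((imageEdges G φ).erase s) y := by
  funext y
  simp only [edgeStat, homCount_eq_sum, incr_sum, incr_mono, injThrough, Finset.sum_filter,
    Finset.mul_sum, mul_ite, mul_zero]

lemma pairStat_eq_sum (t : EdgeIdx n) :
    pairStat G t = fun y => ∑ x ∈ (injThrough G t).sigma fun φ => (imageEdges G φ).erase t,
      (n : ℝ) ^ ((2 : ℤ) - v) * mono (((imageEdges G x.1).erase x.2).erase t) y := by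
  funext y
  have h : (fun z => ∑ s, edgeStat G s z) = fun z => ∑ φ ∈ injMaps (Fin v) n,
      ∑ s ∈ imageEdges G φ, (n : ℝ) ^ ((2 : ℤ) - v) * mono ((imageEdges G φ).erase s) z := by
    funext z
    simp only [edgeStat_eq_sum, injThrough, Finset.sum_filter]
    rw [Finset.sum_comm]
    refine Finset.sum_congr rfl fun φ _ => ?_
    rw [← Finset.sum_filter, Finset.filter_mem_eq_inter, Finset.univ_inter]
  rw [pairStat, h, Finset.sum_sigma]
  simp only [incr_sum, incr_const_mul, incr_mono, injThrough]
  rw [Finset.sum_filter]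
  refine Finset.sum_congr rfl fun φ _ => ?_
  split_ifs with ht
  · rw [← Finset.sum_subset (Finset.erase_subset t (imageEdges G φ))]
    · refine Finset.sum_congr rfl fun s hs => ?_
      rw [if_pos (Finset.mem_erase.2 ⟨(Finset.ne_of_mem_erase hs).symm, ht⟩)]
    · intro s hs hst
      have : s = t := by simpa [hs] using hst
      simp [this]
  · refine Finset.sum_eq_zero fun s hs => ?_
    rw [if_neg fun h => ht (Finset.mem_of_mem_erase h), mul_zero]

lemma card_imageEdges_of_mem {s : EdgeIdx n} {φ : Fin v → Fin n} (hφ : φ ∈ injThrough G s) :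
    (imageEdges G φ).card = eCount G ∧ s ∈ imageEdges G φ :=
  ⟨card_imageEdges G (mem_injMaps.1 (Finset.mem_filter.1 hφ).1), (Finset.mem_filter.1 hφ).2⟩

lemma card_pairs (t : EdgeIdx n) :
    ((injThrough G t).sigma fun φ => (imageEdges G φ).erase t).card =
      (injThrough G t).card * (eCount G - 1) := by
  rw [Finset.card_sigma, Finset.sum_congr rfl (g := fun _ => eCount G - 1), Finset.sum_const,
    smul_eq_mul]
  intro φ hφ
  obtain ⟨h1, h2⟩ := card_imageEdges_of_mem G hφ
  rw [Finset.card_erase_of_mem h2, h1]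

lemma natCast_le_sq (v : ℕ) : (v : ℝ) ≤ (v : ℝ) ^ 2 := by
  exact_mod_cast Nat.le_self_pow two_ne_zero v

lemma regular_edgeStat (hn : 0 < n) (s : EdgeIdx n) :
    Regular n (statConst G) (fun q => 2 * eCount G * q ^ (eCount G - 1)) (edgeStat G s) := by
  have hn0 : (0 : ℝ) < n := by exact_mod_cast hn
  obtain ⟨hA, hmean⟩ := abs_card_injThrough_sub_le G hn s
  have he : ((eCount G - 1 : ℕ) : ℝ) ≤ eCount G := by exact_mod_cast Nat.sub_le _ _
  have he0 : (0 : ℝ) ≤ eCount G := Nat.cast_nonneg _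
  have hv := natCast_le_sq v
  have hv0 : (0 : ℝ) ≤ v := Nat.cast_nonneg _
  have hD : 2 * eCount G * (v : ℝ) ^ 2 ≤ statConst G := by
    rw [statConst]
    have : (v : ℝ) ^ 2 ≤ (eCount G + 1) * (eCount G + (v : ℝ) ^ 2) := by
      nlinarith [mul_nonneg he0 (sq_nonneg (v : ℝ))]
    nlinarith
  rw [edgeStat_eq_sum]
  refine regular_sum_mono (by positivity) (fun φ hφ => ?_) hA ?_ (fun u => ?_)
    (hmean.trans (by gcongr))
  · obtain ⟨h1, h2⟩ := card_imageEdges_of_mem G hφ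
    rw [Finset.card_erase_of_mem h2, h1]
  · rw [statConst]
    have : (eCount G : ℝ) ≤ (eCount G + 1) * (eCount G + (v : ℝ) ^ 2) := by
      nlinarith [mul_nonneg he0 (sq_nonneg (v : ℝ)), sq_nonneg (v : ℝ)]
    calc _ ≤ (eCount G : ℝ) * (2 * eCount G) := by gcongr
      _ ≤ _ := by nlinarith
  · rcases eq_or_ne s u with rfl | hsu
    · simp only [Finset.notMem_erase, Finset.filter_false, Finset.card_empty, Nat.cast_zero,
        mul_zero]
      rw [statConst]
      positivity
    · simp only [Finset.mem_erase, hsu.symm, ne_eq, not_false_eq_true, true_and]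
      refine (card_injThrough_inter_le G hn hsu).trans ?_
      gcongr
      refine le_trans ?_ hD
      gcongr

lemma regular_pairStat (hn : 0 < n) (t : EdgeIdx n) :
    Regular n (statConst G)
      (fun q => 2 * eCount G * ((eCount G - 1 : ℕ) : ℝ) * q ^ (eCount G - 1 - 1))
      (pairStat G t) := by
  have hn0 : (0 : ℝ) < n := by exact_mod_cast hn
  obtain ⟨hA, hmean⟩ := abs_card_injThrough_sub_le G hn t
  set w := (n : ℝ) ^ ((2 : ℤ) - v)
  have hw0 : 0 < w := by positivity
  have he : ((eCount G - 1 : ℕ) : ℝ) ≤ eCount G := by exact_mod_cast Nat.sub_le _ _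
  have he2 : ((eCount G - 1 - 1 : ℕ) : ℝ) ≤ eCount G := by
    exact_mod_cast (Nat.sub_le _ _).trans (Nat.sub_le _ _)
  have he0 : (0 : ℝ) ≤ eCount G := Nat.cast_nonneg _
  have hv := natCast_le_sq v
  have hv0 : (0 : ℝ) ≤ v := Nat.cast_nonneg _
  have hD : eCount G * (2 * eCount G * (v : ℝ) ^ 2) ≤ statConst G := by
    rw [statConst]
    have : eCount G * (v : ℝ) ^ 2 ≤ (eCount G + 1) * (eCount G + (v : ℝ) ^ 2) := by
      nlinarith [mul_nonneg he0 (sq_nonneg (v : ℝ)), sq_nonneg (v : ℝ)]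
    nlinarith
  rw [pairStat_eq_sum]
  refine regular_sum_mono (A := 2 * eCount G * eCount G) hw0.le (fun x hx => ?_) ?_ ?_
    (fun u => ?_) ?_
  · obtain ⟨hx1, hx2⟩ := Finset.mem_sigma.1 hx
    obtain ⟨h1, h2⟩ := card_imageEdges_of_mem G hx1
    rw [Finset.card_erase_of_mem
      (Finset.mem_erase.2 ⟨(Finset.ne_of_mem_erase hx2).symm, h2⟩),
      Finset.card_erase_of_mem (Finset.mem_of_mem_erase hx2), h1]
  · rw [card_pairs]
    push_cast
    rw [← mul_assoc]
    gcongr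
  · rw [statConst]
    have : (eCount G : ℝ) * eCount G ≤ (eCount G + 1) * (eCount G + (v : ℝ) ^ 2) := by
      nlinarith [mul_nonneg he0 (sq_nonneg (v : ℝ)), sq_nonneg (v : ℝ)]
    calc _ ≤ (eCount G : ℝ) * (2 * eCount G * eCount G) := by gcongr
      _ ≤ _ := by nlinarith
  · rcases eq_or_ne t u with rfl | htu
    · simp only [Finset.notMem_erase, Finset.filter_false, Finset.card_empty, Nat.cast_zero,
        mul_zero]
      rw [statConst]
      positivity
    · have hsub : (((injThrough G t).sigma fun φ => (imageEdges G φ).erase t).filter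
          fun x => u ∈ ((imageEdges G x.1).erase x.2).erase t) ⊆
          ((injThrough G t).filter fun φ => u ∈ imageEdges G φ).sigma fun φ => imageEdges G φ := by
        intro x hx
        simp only [Finset.mem_filter, Finset.mem_sigma, Finset.mem_erase] at hx ⊢
        tauto
      have hcard : ((((injThrough G t).filter fun φ => u ∈ imageEdges G φ).sigma
          fun φ => imageEdges G φ).card : ℝ) =
          ((injThrough G t).filter fun φ => u ∈ imageEdges G φ).card * eCount G := by
        rw [Finset.card_sigma, Finset.sum_congr rfl (g := fun _ => eCount G), Finset.sum_const,
          smul_eq_mul, Nat.cast_mul]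
        intro φ hφ
        exact (card_imageEdges_of_mem G (Finset.mem_filter.1 hφ).1).1
      calc _ ≤ w * (((injThrough G t).filter fun φ => u ∈ imageEdges G φ).card * eCount G) := by
            rw [← hcard]
            gcongr
        _ = (w * ((injThrough G t).filter fun φ => u ∈ imageEdges G φ).card) * eCount G := by ring
        _ ≤ (2 * eCount G * v / n) * eCount G := by
            gcongr
            exact card_injThrough_inter_le G hn htu
        _ = eCount G * (2 * eCount G * v) / n := by ring
        _ ≤ _ := by
            gcongr
            refine le_trans ?_ hD
            gcongr
  · rw [card_pairs]
    push_cast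
    rw [← mul_assoc, ← sub_mul, abs_mul, Nat.abs_cast]
    calc _ ≤ (2 * eCount G * (v : ℝ) ^ 2 / n) * eCount G := by gcongr
      _ = eCount G * (2 * eCount G * (v : ℝ) ^ 2) / n := by ring
      _ ≤ _ := by gcongr

lemma incr_edgeStat_of_eCount_eq_one (hG : eCount G = 1) (s u : EdgeIdx n) :
    incr u (edgeStat G s) = fun _ => 0 := by
  funext y
  rw [edgeStat_eq_sum]
  simp only [incr_sum, incr_const_mul, incr_mono]
  refine Finset.sum_eq_zero fun φ hφ => ?_
  obtain ⟨h1, h2⟩ := card_imageEdges_of_mem G hφ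
  have : (imageEdges G φ).erase s = ∅ := by
    rw [← Finset.card_eq_zero, Finset.card_erase_of_mem h2, h1, hG]
  simp [this]

lemma pairStat_of_eCount_eq_one (hG : eCount G = 1) (t : EdgeIdx n) :
    pairStat G t = fun _ => 0 := by
  funext y
  rw [pairStat, incr_sum]
  simp only [incr_edgeStat_of_eCount_eq_one G hG, Finset.sum_const_zero]

end Statistics

section Hamiltonian

variable {k : ℕ} (β : Fin (k + 1) → ℝ) (v : Fin (k + 1) → ℕ)
  (H : ∀ j : Fin (k + 1), SimpleGraph (Fin (v j)))

/-- The Hamiltonian of the ERGM. -/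
def hamiltonian (n : ℕ) (y : EdgeIdx n → Bool) : ℝ :=
  ∑ j, β j * (n : ℝ) ^ ((2 : ℤ) - (v j : ℤ)) * (homCount (H j) y : ℝ)

lemma incr_hamiltonian {n : ℕ} (s : EdgeIdx n) :
    incr s (hamiltonian β v H n) = fun y => ∑ j, β j * edgeStat (H j) s y := by
  funext y
  have h : hamiltonian β v H n = fun y => ∑ j, β j * (n : ℝ) ^ ((2 : ℤ) - (v j : ℤ)) *
    (homCount (H j) y : ℝ) := rfl
  rw [h]
  simp only [incr_sum, incr_const_mul, edgeStat, mul_assoc]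

lemma incr_sum_incr_hamiltonian {n : ℕ} (t : EdgeIdx n) :
    incr t (fun z => ∑ s, incr s (hamiltonian β v H n) z) =
      fun y => ∑ j, β j * pairStat (H j) t y := by
  funext y
  have h : (fun z => ∑ s, incr s (hamiltonian β v H n) z) =
      fun z => ∑ j, β j * ∑ s, edgeStat (H j) s z := by
    funext z
    simp only [incr_hamiltonian, Finset.mul_sum]
    exact Finset.sum_comm
  rw [h]
  simp only [incr_sum, incr_const_mul, pairStat]

lemma regular_incr_hamiltonian (hβ : ∀ j : Fin (k + 1), j ≠ 0 → 0 < β j)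
    (he0 : eCount (H 0) = 1) {n : ℕ} (hn : 0 < n) (s : EdgeIdx n) :
    Regular n (∑ j, |β j| * statConst (H j)) (fun q => 2 * PhiFn β v H q)
      (incr s (hamiltonian β v H n)) := by
  rw [incr_hamiltonian]
  convert Regular.sum (S := Finset.univ) (a := β) (fun j _ => regular_edgeStat (H j) hn s)
    (fun j _ u y => ?_) using 2
  · rw [PhiFn, Finset.mul_sum]
    exact Finset.sum_congr rfl fun j _ => by ring
  · rcases eq_or_ne j 0 with rfl | hj
    · rw [incr_edgeStat_of_eCount_eq_one _ he0, mul_zero]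
    · have := (regular_edgeStat (H j) hn s).signedMono u y
      rw [one_mul] at this
      exact mul_nonneg (hβ j hj).le this

lemma regular_incr_sum_incr_hamiltonian (hβ : ∀ j : Fin (k + 1), j ≠ 0 → 0 < β j)
    (he0 : eCount (H 0) = 1) {n : ℕ} (hn : 0 < n) (t : EdgeIdx n) :
    Regular n (∑ j, |β j| * statConst (H j)) (fun q => 2 * deriv (PhiFn β v H) q)
      (incr t (fun z => ∑ s, incr s (hamiltonian β v H n) z)) := by
  rw [incr_sum_incr_hamiltonian]
  convert Regular.sum (S := Finset.univ) (a := β) (fun j _ => regular_pairStat (H j) hn t)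
    (fun j _ u y => ?_) using 2
  · rw [(hasDerivAt_PhiFn β v H _).deriv, Finset.mul_sum]
    exact Finset.sum_congr rfl fun j _ => by ring
  · rcases eq_or_ne j 0 with rfl | hj
    · rw [pairStat_of_eCount_eq_one _ he0]
      simp [incr]
    · have := (regular_pairStat (H j) hn t).signedMono u y
      rw [one_mul] at this
      exact mul_nonneg (hβ j hj).le this

lemma mono_add_mono_le {I : Type*} (T : Finset I) (x y : I → Bool) :
    mono T x + mono T y ≤ mono T (x ⊓ y) + mono T (x ⊔ y) := by
  unfold mono
  by_cases hx : ∀ u ∈ T, x u = true <;> by_cases hy : ∀ u ∈ T, y u = true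
  · rw [if_pos hx, if_pos hy, if_pos fun u hu => by simp [hx u hu, hy u hu],
      if_pos fun u hu => by simp [hx u hu]]
  · have h : ∀ u ∈ T, (x ⊔ y) u = true := fun u hu => by simp [hx u hu]
    rw [if_pos hx, if_neg hy, if_pos h]
    split_ifs <;> norm_num
  · have h : ∀ u ∈ T, (x ⊔ y) u = true := fun u hu => by simp [hy u hu]
    rw [if_neg hx, if_pos hy, if_pos h]
    split_ifs <;> norm_num
  · rw [if_neg hx, if_neg hy]
    split_ifs <;> norm_num

lemma mono_add_mono_of_card_eq_one {I : Type*} {T : Finset I} (hT : T.card = 1) (x y : I → Bool) :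
    mono T (x ⊓ y) + mono T (x ⊔ y) = mono T x + mono T y := by
  obtain ⟨u, rfl⟩ := Finset.card_eq_one.1 hT
  simp only [mono, Finset.mem_singleton, forall_eq, Pi.inf_apply, Pi.sup_apply]
  cases x u <;> cases y u <;> simp

lemma supermodular_hamiltonian (hβ : ∀ j : Fin (k + 1), j ≠ 0 → 0 < β j)
    (he0 : eCount (H 0) = 1) (n : ℕ) : Supermodular (hamiltonian β v H n) := by
  intro x y
  simp only [hamiltonian, ← Finset.sum_add_distrib, ← mul_add]
  refine Finset.sum_le_sum fun j _ => ?_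
  simp only [homCount_eq_sum, ← Finset.sum_add_distrib]
  rcases eq_or_ne j 0 with rfl | hj
  · refine le_of_eq (congrArg _ (Finset.sum_congr rfl fun φ hφ => ?_))
    rw [mono_add_mono_of_card_eq_one]
    rw [card_imageEdges _ (mem_injMaps.1 hφ), he0]
  · have := (hβ j hj).le
    exact mul_le_mul_of_nonneg_left (Finset.sum_le_sum fun φ _ => mono_add_mono_le _ x y)
      (by positivity)

end Hamiltonian

/-! ### Variance bounds -/

/-- Configurations at which all statistics `X s` are close to `c`. -/
def closeSet {I ι : Type*} (X : ι → (I → Bool) → ℝ) (c r : ℝ) : Set (I → Bool) :=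
  {y | ∀ s, |X s y - c| < r}

lemma ordConnected_closeSet {I ι : Type} [Fintype I] [DecidableEq I] {X : ι → (I → Bool) → ℝ}
    (hX : ∀ s, SignedMono 1 (X s)) (c r : ℝ) : (closeSet X c r).OrdConnected := by
  refine ⟨fun x hx y hy z hz s => ?_⟩
  have h1 := monotone_of_signedMono (hX s) hz.1
  have h2 := monotone_of_signedMono (hX s) hz.2
  have h3 := abs_lt.1 (hx s)
  have h4 := abs_lt.1 (hy s)
  exact abs_lt.2 ⟨by linarith, by linarith⟩

lemma gvar_const_mul {I : Type} [Fintype I] [DecidableEq I] (H f : (I → Bool) → ℝ) (c : ℝ) :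
    gvar H (fun y => c * f y) = c ^ 2 * gvar H f := by
  have h : (fun y => c * f y * (c * f y)) = fun y => c ^ 2 * (f y * f y) := by
    funext y; ring
  rw [gvar, gvar, h, gibbs_const_mul, gibbs_const_mul]
  ring

lemma gvar_add_const {I : Type} [Fintype I] [DecidableEq I] (H f : (I → Bool) → ℝ) (c : ℝ) :
    gvar H (fun y => f y + c) = gvar H f := by
  have h : (fun y => (f y + c) * (f y + c)) = fun y => (f y * f y + 2 * c * f y) + c ^ 2 := by
    funext y; ring
  rw [gvar, gvar, h, gibbs_add, gibbs_add, gibbs_add, gibbs_const_mul, gibbs_const, gibbs_const]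
  ring

lemma gibbs_sub_sq {I : Type} [Fintype I] [DecidableEq I] (H f : (I → Bool) → ℝ) :
    gibbs H (fun y => (f y - gibbs H f) ^ 2) = gvar H f := by
  set m := gibbs H f with hm
  have h : (fun y => (f y - m) ^ 2) = fun y => (f y * f y + -(2 * m) * f y) + m ^ 2 := by
    funext y; ring
  rw [gvar, h, gibbs_add, gibbs_add, gibbs_const_mul, gibbs_const]
  ring

lemma card_edgeIdx_le (n : ℕ) : (Fintype.card (EdgeIdx n) : ℝ) ≤ (n : ℝ) ^ 2 := by
  have h : Fintype.card (EdgeIdx n) ≤ n ^ 2 := by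
    refine (Fintype.card_subtype_le fun p : Fin n × Fin n => p.1 < p.2).trans ?_
    simp [sq]
  exact_mod_cast h

lemma exists_pos_bound_of_eventually_le {a b : ℕ → ℝ} {C : ℝ} {m : ℕ} (hb : ∀ n, m ≤ n → 0 < b n)
    (h : ∀ᶠ n in Filter.atTop, a n ≤ C * b n) : ∃ C' : ℝ, 0 < C' ∧ ∀ n, m ≤ n → a n ≤ C' * b n := by
  obtain ⟨N, hN⟩ := Filter.eventually_atTop.1 h
  have h0 : 0 ≤ ∑ n ∈ Finset.range N, |a n / b n| := Finset.sum_nonneg fun _ _ => abs_nonneg _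
  refine ⟨|C| + 1 + ∑ n ∈ Finset.range N, |a n / b n|, by positivity, fun n hn => ?_⟩
  have hbn := hb n hn
  rcases le_or_gt N n with hNn | hNn
  · refine (hN n hNn).trans ?_
    gcongr
    linarith [le_abs_self C]
  · have h1 : |a n / b n| ≤ ∑ n ∈ Finset.range N, |a n / b n| :=
      Finset.single_le_sum (f := fun n => |a n / b n|) (fun _ _ => abs_nonneg _)
        (Finset.mem_range.2 hNn)
    rw [← div_le_iff₀ hbn]
    linarith [le_abs_self (a n / b n), abs_nonneg C]

section Subcritical

variable {k : ℕ} {β : Fin (k + 1) → ℝ} {v : Fin (k + 1) → ℕ}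
  {H : ∀ j : Fin (k + 1), SimpleGraph (Fin (v j))}

lemma ergmVar_eq_gvar (n : ℕ) (G : (EdgeIdx n → Bool) → ℝ) :
    ergmVar β v H n G = gvar (hamiltonian β v H n) G :=
  gibbs_sub_sq (hamiltonian β v H n) G

lemma exists_gprob_closeSet_compl_le (hβ : ∀ j : Fin (k + 1), j ≠ 0 → 0 < β j)
    (he0 : eCount (H 0) = 1) {p : ℝ} (hp : p ∈ Set.Ioo (0 : ℝ) 1) (hfix : phiFn β v H p = p)
    (huniq : ∀ q ∈ Set.Ioo (0 : ℝ) 1, phiFn β v H q = q → q = p)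
    (hsub : deriv (phiFn β v H) p < 1) {g : ℝ → ℝ} (hg : Differentiable ℝ g) (D : ℝ) :
    ∃ C : ℝ, 0 ≤ C ∧ ∀ M : ℕ, ∀ᶠ n : ℕ in Filter.atTop,
      ∀ X : EdgeIdx n → (EdgeIdx n → Bool) → ℝ, (∀ s, Regular n D g (X s)) →
        gprob (hamiltonian β v H n) (closeSet X (g p) (C * (n : ℝ) ^ (-(1 / 4) : ℝ)))ᶜ ≤
          ((n : ℝ) ^ M)⁻¹ := by
  have hp' : p ∈ Set.Icc (0 : ℝ) 1 := Set.Ioo_subset_Icc_self hp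
  obtain ⟨θ, hθ0, hθ1, hcontr⟩ := exists_contraction (differentiable_phiFn β v H) hp hfix huniq
    (by rw [phiFn_eq_sigmoid]; exact Real.sigmoid_pos _)
    (by rw [phiFn_eq_sigmoid]; exact Real.sigmoid_lt_one _) hsub
  simp only [phiFn_eq_sigmoid] at hcontr
  obtain ⟨L, hL, hgL⟩ := exists_lipschitz_at hg p
  obtain ⟨C, hC, h⟩ := exists_concentration
    (D := max 1 (max D (∑ j, |β j| * statConst (H j)))) (le_max_left _ _) hp' hθ0 hθ1 hcontr hL hgL
  refine ⟨C, hC, fun M => ?_⟩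
  filter_upwards [h (M + 2), Filter.eventually_gt_atTop 0] with n hn hn0 X hX
  have hn0' : (0 : ℝ) < n := by exact_mod_cast hn0
  have hsubset : (closeSet X (g p) (C * (n : ℝ) ^ (-(1 / 4) : ℝ)))ᶜ ⊆
      ⋃ s, {y | C * (n : ℝ) ^ (-(1 / 4) : ℝ) ≤ |X s y - g p|} := by
    intro y hy
    rw [Set.mem_compl_iff, closeSet, Set.mem_ofPred_eq] at hy
    push Not at hy
    exact Set.mem_iUnion.2 hy
  calc _ ≤ ∑ s, gprob (hamiltonian β v H n)
        {y | C * (n : ℝ) ^ (-(1 / 4) : ℝ) ≤ |X s y - g p|} :=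
        (gprob_mono hsubset).trans (gprob_iUnion_le _)
    _ ≤ ∑ _s : EdgeIdx n, ((n : ℝ) ^ (M + 2))⁻¹ := by
        refine Finset.sum_le_sum fun s _ => hn _ _ _ (card_edgeIdx_le n) (fun u => ?_) ?_
        · exact (regular_incr_hamiltonian β v H hβ he0 hn0 u).mono hn0'
            ((le_max_right _ _).trans (le_max_right _ _))
        · exact (hX s).mono hn0' ((le_max_left _ _).trans (le_max_right _ _))
    _ = Fintype.card (EdgeIdx n) * ((n : ℝ) ^ (M + 2))⁻¹ := by
        rw [Finset.sum_const, Finset.card_univ, nsmul_eq_mul]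
    _ ≤ (n : ℝ) ^ 2 * ((n : ℝ) ^ (M + 2))⁻¹ := by
        gcongr
        exact card_edgeIdx_le n
    _ = _ := by
        rw [pow_add]
        field_simp

lemma tendsto_const_mul_rpow_neg (C : ℝ) :
    Filter.Tendsto (fun n : ℕ => C * (n : ℝ) ^ (-(1 / 4) : ℝ)) Filter.atTop (nhds 0) := by
  simpa using ((tendsto_rpow_neg_atTop (y := 1 / 4) (by norm_num)).comp
    tendsto_natCast_atTop_atTop).const_mul C

lemma differentiable_deriv_PhiFn : Differentiable ℝ (deriv (PhiFn β v H)) := by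
  rw [funext fun a => (hasDerivAt_PhiFn β v H a).deriv]
  fun_prop

lemma exists_gvar_total_le (hβ : ∀ j : Fin (k + 1), j ≠ 0 → 0 < β j)
    (he0 : eCount (H 0) = 1) {p : ℝ} (hp : p ∈ Set.Ioo (0 : ℝ) 1) (hfix : phiFn β v H p = p)
    (huniq : ∀ q ∈ Set.Ioo (0 : ℝ) 1, phiFn β v H q = q → q = p)
    (hsub : deriv (phiFn β v H) p < 1) :
    ∃ C : ℝ, 0 ≤ C ∧ ∀ᶠ n : ℕ in Filter.atTop,
      gvar (hamiltonian β v H n) total ≤ C * (n : ℝ) ^ 2 := by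
  obtain ⟨η, L, hη, hL, hLη, hslope⟩ := exists_local_slope β v H hp hfix hsub
  set θ := L * (2 * deriv (PhiFn β v H) p + η) with hθ
  have hd := deriv_PhiFn_nonneg β v H hβ he0 hp.1.le
  have hθ0 : 0 ≤ θ := by positivity
  have hθ1 : 0 < 1 - θ := by linarith
  obtain ⟨C₁, -, h₁⟩ := exists_gprob_closeSet_compl_le hβ he0 hp hfix huniq hsub
    ((differentiable_PhiFn β v H).const_mul 2) (∑ j, |β j| * statConst (H j))
  obtain ⟨C₂, -, h₂⟩ := exists_gprob_closeSet_compl_le hβ he0 hp hfix huniq hsub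
    ((differentiable_deriv_PhiFn (β := β) (H := H)).const_mul 2)
    (∑ j, |β j| * statConst (H j))
  refine ⟨13 / (1 - θ), by positivity, ?_⟩
  filter_upwards [h₁ 4, h₂ 4, Filter.eventually_gt_atTop 0,
    (tendsto_const_mul_rpow_neg C₁).eventually (gt_mem_nhds hη),
    (tendsto_const_mul_rpow_neg C₂).eventually (gt_mem_nhds hη)] with n hn₁ hn₂ hn0 hr₁ hr₂
  have hn1 : (1 : ℝ) ≤ n := by exact_mod_cast hn0
  set Ham := hamiltonian β v H n
  set r₁ := C₁ * (n : ℝ) ^ (-(1 / 4) : ℝ)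
  set r₂ := C₂ * (n : ℝ) ^ (-(1 / 4) : ℝ)
  have hreg₁ := regular_incr_hamiltonian β v H hβ he0 hn0
  have hreg₂ := regular_incr_sum_incr_hamiltonian β v H hβ he0 hn0
  set G := closeSet (fun s => incr s Ham) (2 * PhiFn β v H p) r₁ ∩
    closeSet (fun t => incr t fun z => ∑ s, incr s Ham z) (2 * deriv (PhiFn β v H) p) r₂ with hG
  have hGprob : gprob Ham Gᶜ ≤ 2 * ((n : ℝ) ^ 4)⁻¹ := by
    rw [hG, Set.compl_inter]
    have := gprob_union_le (H := Ham)
      (closeSet (fun s => incr s Ham) (2 * PhiFn β v H p) r₁)ᶜ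
      (closeSet (fun t => incr t fun z => ∑ s, incr s Ham z) (2 * deriv (PhiFn β v H) p) r₂)ᶜ
    linarith [hn₁ _ hreg₁, hn₂ _ hreg₂]
  have hGconn : G.OrdConnected :=
    (ordConnected_closeSet (fun s => (hreg₁ s).signedMono) _ _).inter
      (ordConnected_closeSet (fun s => (hreg₂ s).signedMono) _ _)
  have hinc : ∀ y s, Function.update y s false ∈ G → Function.update y s true ∈ G →
      incr s (fun z => ∑ u, Real.sigmoid (incr u Ham z)) y ≤ θ := by
    intro y t h0 h1
    calc incr t (fun z => ∑ u, Real.sigmoid (incr u Ham z)) y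
        ≤ L * incr t (fun z => ∑ u, incr u Ham z) y := by
          rw [incr_sum, incr_sum, Finset.mul_sum]
          refine Finset.sum_le_sum fun u _ => ?_
          have hm := (hreg₁ u).signedMono t y
          rw [one_mul] at hm
          refine sigmoid_sub_sigmoid_le (D := Set.Icc (2 * PhiFn β v H p - η)
            (2 * PhiFn β v H p + η)) (convex_Icc _ _) (fun x hx => hslope x ?_) ?_ ?_
            (sub_nonneg.1 hm)
          · exact abs_le.2 ⟨by linarith [hx.1], by linarith [hx.2]⟩
          · have := abs_lt.1 (h0.1 u)
            exact ⟨by linarith, by linarith⟩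
          · have := abs_lt.1 (h1.1 u)
            exact ⟨by linarith, by linarith⟩
      _ ≤ θ := by
          have h := abs_lt.1 (h1.2 t)
          simp only [incr_update] at h
          rw [hθ]
          gcongr
          linarith
  have hvar := gvar_total_le (supermodular_hamiltonian β v H hβ he0 n) hGconn hθ0 (by linarith) hinc
  have hcard := card_edgeIdx_le n
  have h6 : 6 * (Fintype.card (EdgeIdx n) : ℝ) ^ 2 * gprob Ham Gᶜ ≤ 12 := by
    calc _ ≤ 6 * ((n : ℝ) ^ 2) ^ 2 * (2 * ((n : ℝ) ^ 4)⁻¹) := by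
          gcongr
          exact gprob_nonneg _
      _ = 12 := by field_simp; norm_num
  rw [div_mul_eq_mul_div, le_div_iff₀ hθ1, mul_comm]
  nlinarith [one_le_pow₀ hn1 (n := 2)]

lemma exists_gvar_homCount_sub_le (hβ : ∀ j : Fin (k + 1), j ≠ 0 → 0 < β j)
    (he0 : eCount (H 0) = 1) {p : ℝ} (hp : p ∈ Set.Ioo (0 : ℝ) 1) (hfix : phiFn β v H p = p)
    (huniq : ∀ q ∈ Set.Ioo (0 : ℝ) 1, phiFn β v H q = q → q = p)
    (hsub : deriv (phiFn β v H) p < 1) {w : ℕ} (G : SimpleGraph (Fin w)) :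
    ∃ C : ℝ, ∀ᶠ n : ℕ in Filter.atTop,
      gvar (hamiltonian β v H n) (fun y => (homCount G y : ℝ) -
        2 * (n : ℝ) ^ ((w : ℤ) - 2) * (eCount G : ℝ) * p ^ (eCount G - 1) * total y) ≤
      C * (n : ℝ) ^ ((2 * w : ℝ) - 5 / 2) := by
  obtain ⟨C₁, hC₁, h₁⟩ := exists_gprob_closeSet_compl_le hβ he0 hp hfix huniq hsub
    (g := fun q => 2 * eCount G * q ^ (eCount G - 1)) (by fun_prop) (statConst G)
  obtain ⟨C₂, hC₂, h₂⟩ := exists_gvar_total_le hβ he0 hp hfix huniq hsub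
  set K : ℝ := 1 + 2 * eCount G + C₁ with hK
  refine ⟨C₁ ^ 2 * C₂ + 6 * K ^ 2, ?_⟩
  filter_upwards [h₁ 3, h₂, Filter.eventually_gt_atTop 0] with n hn₁ hn₂ hn0
  have hnpos : (0 : ℝ) < n := by exact_mod_cast hn0
  have hn1 : (1 : ℝ) ≤ n := by exact_mod_cast hn0
  set r := C₁ * (n : ℝ) ^ (-(1 / 4) : ℝ) with hr
  set m := (n : ℝ) ^ ((w : ℤ) - 2) with hm
  have hm0 : 0 < m := by positivity
  have hmw : m * (n : ℝ) ^ 2 = (n : ℝ) ^ w := by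
    rw [hm, ← zpow_natCast, ← zpow_natCast, ← zpow_add₀ hnpos.ne']
    congr 1
    push_cast
    ring
  have hmw' : m * (n : ℝ) ^ ((2 : ℤ) - w) = 1 := by
    rw [hm, ← zpow_add₀ hnpos.ne']
    simp
  have hr0 : 0 ≤ r := by positivity
  have hrC : r ≤ C₁ := mul_le_of_le_one_right hC₁
    (Real.rpow_le_one_of_one_le_of_nonpos hn1 (by norm_num))
  have hreg := regular_edgeStat (n := n) G hn0
  set S := closeSet (fun s : EdgeIdx n => edgeStat G s) (2 * eCount G * p ^ (eCount G - 1)) r with hS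
  have hSprob : gprob (hamiltonian β v H n) Sᶜ ≤ ((n : ℝ) ^ 3)⁻¹ := hn₁ _ hreg
  have hedge : ∀ (s : EdgeIdx n) y, incr s (fun z => (homCount G z : ℝ)) y = m * edgeStat G s y :=
    fun s y => by rw [edgeStat, ← mul_assoc, hmw', one_mul]
  set c₀ := 2 * m * (eCount G : ℝ) * p ^ (eCount G - 1) with hc₀
  have hp0 := hp.1.le
  have hc₀0 : 0 ≤ c₀ := by positivity
  have hc₀le : c₀ ≤ 2 * eCount G * m := by
    calc c₀ = 2 * eCount G * m * p ^ (eCount G - 1) := by rw [hc₀]; ring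
      _ ≤ _ := mul_le_of_le_one_right (by positivity) (pow_le_one₀ hp0 hp.2.le)
  have hfg : ∀ y s, Function.update y s false ∈ S → Function.update y s true ∈ S →
      |incr s (fun y => (homCount G y : ℝ) - c₀ * total y) y| ≤
        incr s (fun y => m * r * total y) y := by
    intro y s _ h1
    have h := h1 s
    simp only [edgeStat, incr_update] at h
    rw [← edgeStat] at h
    have h2 : incr s (fun y => (homCount G y : ℝ) - c₀ * total y) y =
        incr s (fun z => (homCount G z : ℝ)) y - c₀ * incr s total y := by
      simp only [incr]; ring
    rw [h2, incr_const_mul]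
    simp only [incr_total]
    rw [hedge, hc₀, show m * edgeStat G s y - 2 * m * (eCount G : ℝ) * p ^ (eCount G - 1) * 1 =
      m * (edgeStat G s y - 2 * eCount G * p ^ (eCount G - 1)) by ring, abs_mul, abs_of_pos hm0,
      mul_one]
    gcongr
  have hbound : ∀ y : EdgeIdx n → Bool, |(homCount G y : ℝ) - c₀ * total y| + |m * r * total y| ≤
      K * (n : ℝ) ^ w := by
    intro y
    have ht := total_mem_Icc y
    have ht2 := ht.2.trans (card_edgeIdx_le n)
    have hhom : (homCount G y : ℝ) ≤ (n : ℝ) ^ w := by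
      rw [homCount_eq_sum]
      calc _ ≤ ∑ φ ∈ injMaps (Fin w) n, (1 : ℝ) :=
            Finset.sum_le_sum fun φ _ => (mono_mem_Icc _ _).2
        _ = ((injMaps (Fin w) n).card : ℝ) := by simp
        _ ≤ ((Fintype.card (Fin w → Fin n) : ℕ) : ℝ) := by
            exact_mod_cast Finset.card_le_univ _
        _ = _ := by simp
    have h1 : c₀ * total y ≤ 2 * eCount G * (n : ℝ) ^ w := by
      calc _ ≤ 2 * eCount G * m * (n : ℝ) ^ 2 := by
            gcongr
            exact ht.1
        _ = _ := by rw [← hmw]; ring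
    have h2 : m * r * total y ≤ C₁ * (n : ℝ) ^ w := by
      calc _ ≤ m * C₁ * (n : ℝ) ^ 2 := by
            gcongr
            exact ht.1
        _ = _ := by rw [← hmw]; ring
    have h3 : 0 ≤ c₀ * total y := mul_nonneg hc₀0 ht.1
    rw [abs_of_nonneg (mul_nonneg (by positivity) ht.1)]
    have h4 : |(homCount G y : ℝ) - c₀ * total y| ≤ homCount G y + c₀ * total y := by
      refine (abs_sub _ _).trans ?_
      rw [abs_of_nonneg h3, Nat.abs_cast]
    rw [hK]
    linarith
  have hvar := gvar_le_of_abs_incr_le (supermodular_hamiltonian β v H hβ he0 n)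
    (ordConnected_closeSet (fun s => (hreg s).signedMono) _ _) hfg hbound
  rw [gvar_const_mul] at hvar
  have hr2 : r ^ 2 = C₁ ^ 2 * (n : ℝ) ^ (-(1 / 2) : ℝ) := by
    rw [hr, mul_pow, ← Real.rpow_natCast ((n : ℝ) ^ (-(1 / 4) : ℝ)), ← Real.rpow_mul hnpos.le]
    norm_num
  have hpow : ((n : ℝ) ^ w) ^ 2 = (n : ℝ) ^ (2 * w : ℝ) := by
    rw [← pow_mul, ← Real.rpow_natCast]
    push_cast
    rw [mul_comm]
  have hmain : (m * r) ^ 2 * (C₂ * (n : ℝ) ^ 2) =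
      C₁ ^ 2 * C₂ * (n : ℝ) ^ ((2 * w : ℝ) - 5 / 2) := by
    have h1 : m ^ 2 * (n : ℝ) ^ 2 * (n : ℝ) ^ (-(1 / 2) : ℝ) = (n : ℝ) ^ ((2 * w : ℝ) - 5 / 2) := by
      have h2 : m ^ 2 * (n : ℝ) ^ 2 = (n : ℝ) ^ (2 * w : ℝ) * (n : ℝ) ^ (-2 : ℝ) := by
        rw [← hpow, ← hmw, Real.rpow_neg hnpos.le, Real.rpow_two]
        field_simp
      rw [h2, ← Real.rpow_add hnpos, ← Real.rpow_add hnpos]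
      congr 1
      ring
    rw [← h1, mul_pow, hr2]
    ring
  have herr : 6 * (K * (n : ℝ) ^ w) ^ 2 * gprob (hamiltonian β v H n) Sᶜ ≤
      6 * K ^ 2 * (n : ℝ) ^ ((2 * w : ℝ) - 5 / 2) := by
    calc _ ≤ 6 * (K * (n : ℝ) ^ w) ^ 2 * ((n : ℝ) ^ 3)⁻¹ := by gcongr
      _ = 6 * K ^ 2 * ((n : ℝ) ^ (2 * w : ℝ) * ((n : ℝ) ^ 3)⁻¹) := by rw [mul_pow, hpow]; ring
      _ = 6 * K ^ 2 * (n : ℝ) ^ ((2 * w : ℝ) - 3) := by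
          rw [Real.rpow_sub hnpos, div_eq_mul_inv]
          norm_cast
      _ ≤ _ := by
          gcongr 6 * K ^ 2 * ?_
          exact Real.rpow_le_rpow_of_exponent_le hn1 (by linarith)
  calc _ ≤ (m * r) ^ 2 * (C₂ * (n : ℝ) ^ 2) +
        6 * K ^ 2 * (n : ℝ) ^ ((2 * w : ℝ) - 5 / 2) :=
        hvar.trans (add_le_add (mul_le_mul_of_nonneg_left hn₂ (sq_nonneg _)) herr)
    _ = _ := by rw [hmain]; ring

lemma sigmaSq_pos {p : ℝ} (hp : p ∈ Set.Ioo (0 : ℝ) 1) (hfix : phiFn β v H p = p)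
    (hsub : deriv (phiFn β v H) p < 1) {n : ℕ} (hn : 2 ≤ n) : 0 < sigmaSq β v H p n := by
  rw [deriv_phiFn β v H hfix] at hsub
  have hn2 : (2 : ℝ) ≤ n := by exact_mod_cast hn
  have h1 : 0 < (n : ℝ) - 1 := by linarith
  have h2 : 0 < 1 - p := by linarith [hp.2]
  have h3 : 0 < 1 - 2 * p * (1 - p) * deriv (PhiFn β v H) p := by linarith
  have h4 := hp.1
  rw [sigmaSq]
  positivity

end Subcritical

/-- **Lemma 5.3**: higher-order variance bound for subgraph counts in the whole subcritical
region: `Var(|Hom(H,G_Y)| − 2 n^{v−2} e p^{e−1} σ_n W_n) ≤ C n^{2v − 5/2}`. -/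
theorem ergm_hom_variance_subcritical {k : ℕ} (β : Fin (k + 1) → ℝ) (v : Fin (k + 1) → ℕ)
    (H : ∀ j : Fin (k + 1), SimpleGraph (Fin (v j)))
    -- `β₂, …, β_k > 0`
    (hβ : ∀ j : Fin (k + 1), j ≠ 0 → 0 < β j)
    -- `H₁` is a single edge
    (hv0 : v 0 = 2) (he0 : eCount (H 0) = 1)
    -- the graphs have no isolated vertices
    (hnoiso : ∀ (j : Fin (k + 1)) (a : Fin (v j)), ∃ b, (H j).Adj a b)
    -- `H₂, …, H_k` have at least two edges
    (hedges : ∀ j : Fin (k + 1), j ≠ 0 → 2 ≤ eCount (H j))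
    -- the subcritical region: unique fixed point `p ∈ (0,1)` with `φ_β'(p) < 1`
    (p : ℝ) (hp : p ∈ Set.Ioo (0 : ℝ) 1)
    (hfix : phiFn β v H p = p)
    (huniq : ∀ q ∈ Set.Ioo (0 : ℝ) 1, phiFn β v H q = q → q = p)
    (hsub : deriv (phiFn β v H) p < 1)
    -- the fixed graph `H`, possibly with isolated vertices, `v ≥ 3` vertices, `e ≥ 1` edges
    (vH : ℕ) (hvH : 3 ≤ vH) (Hg : SimpleGraph (Fin vH)) (hHe : 1 ≤ eCount Hg) :
    ∃ C : ℝ, 0 < C ∧ ∀ n : ℕ, 2 ≤ n →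
      ergmVar β v H n (fun y => (homCount Hg y : ℝ) -
          2 * (n : ℝ) ^ ((vH : ℤ) - 2) * (eCount Hg : ℝ) * p ^ (eCount Hg - 1) *
            Real.sqrt (sigmaSq β v H p n) * Wn β v H p n y) ≤
        C * (n : ℝ) ^ ((2 * vH : ℝ) - 5 / 2) := by
  obtain ⟨C, hC⟩ := exists_gvar_homCount_sub_le hβ he0 hp hfix huniq hsub Hg
  refine exists_pos_bound_of_eventually_le
    (a := fun n => ergmVar β v H n (fun y => (homCount Hg y : ℝ) -
      2 * (n : ℝ) ^ ((vH : ℤ) - 2) * (eCount Hg : ℝ) * p ^ (eCount Hg - 1) *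
        Real.sqrt (sigmaSq β v H p n) * Wn β v H p n y))
    (fun n hn => Real.rpow_pos_of_pos (Nat.cast_pos.2 (by omega)) _) ?_ (C := C)
  filter_upwards [hC, Filter.eventually_ge_atTop 2] with n hn hn2
  have hσ := (Real.sqrt_pos.2 (sigmaSq_pos hp hfix hsub hn2)).ne'
  rw [ergmVar_eq_gvar]
  set c := 2 * (n : ℝ) ^ ((vH : ℤ) - 2) * (eCount Hg : ℝ) * p ^ (eCount Hg - 1)
  have h : (fun y => (homCount Hg y : ℝ) - c * Real.sqrt (sigmaSq β v H p n) * Wn β v H p n y) =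
      fun y => ((homCount Hg y : ℝ) - c * total y) + c * muN β v H n := by
    funext y
    rw [Wn, mul_assoc, mul_div_cancel₀ _ hσ, show edgeSum y = total y from rfl]
    ring
  rw [h, gvar_add_const]
  exact hn
end
end

section
/- For the Curie–Weiss model without external field at inverse temperature 0 < β < 1, there exists a constant C > 0 depending only on β such that for all N ≥ 1, d_Wass(W, Z) ≤ C/√N, where Z is a standard normal random variable. -/
open MeasureTheory ProbabilityTheory Real

noncomputable section

/-- The spin value of a Boolean coordinate: `true ↦ +1`, `false ↦ −1`. -/
def cwSpin (b : Bool) : ℝ := if b then 1 else -1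

/-- The total magnetization `s(x) = x₁ + ⋯ + x_N`. -/
def cwS {N : ℕ} (x : Fin N → Bool) : ℝ := ∑ i, cwSpin (x i)

/-- The Curie–Weiss Gibbs weight `h(x) = exp(β s(x)²/(2N))` (relative to the uniform
distribution on `{−1,1}^N`). -/
def cwWeight (β : ℝ) {N : ℕ} (x : Fin N → Bool) : ℝ :=
  Real.exp (β * (cwS x) ^ 2 / (2 * N))

/-- The Curie–Weiss normalizing constant `Σ_x h(x)`. -/
def cwZ (β : ℝ) (N : ℕ) : ℝ := ∑ x : Fin N → Bool, cwWeight β x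

/-- The Curie–Weiss probability of the configuration `x` (the uniform base measure cancels
in the tilted law). -/
def cwProb (β : ℝ) {N : ℕ} (x : Fin N → Bool) : ℝ := cwWeight β x / cwZ β N

/-- The standardized magnetization `W = s(Y)/σ_N` with `σ_N² = N/(1−β)`. -/
def cwW (β : ℝ) {N : ℕ} (x : Fin N → Bool) : ℝ :=
  cwS x / Real.sqrt ((N : ℝ) / (1 - β))


lemma integrable_gauss : Integrable fun t : ℝ => rexp (-t ^ 2 / 2) := by
  refine (integrable_exp_neg_mul_sq (b := 1 / 2) (by norm_num)).congr (.of_forall fun t => ?_)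
  ring_nf

lemma integrable_id_mul_gauss : Integrable fun t : ℝ => t * rexp (-t ^ 2 / 2) := by
  refine (integrable_mul_exp_neg_mul_sq (b := 1 / 2) (by norm_num)).congr (.of_forall fun t => ?_)
  ring_nf

lemma integrable_sq_mul_gauss : Integrable fun t : ℝ => t ^ 2 * rexp (-t ^ 2 / 2) := by
  refine (integrable_rpow_mul_exp_neg_mul_sq (b := 1 / 2) (by norm_num) (s := 2)
    (by norm_num)).congr (.of_forall fun t => ?_)
  simp only [rpow_ofNat]
  ring_nf

lemma hasDerivAt_gauss (t : ℝ) :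
    HasDerivAt (fun t : ℝ => rexp (-t ^ 2 / 2)) (-(t * rexp (-t ^ 2 / 2))) t := by
  convert! (((hasDerivAt_pow 2 t).neg.div_const 2).exp) using 1
  simp; ring

lemma integral_Ioi_id_mul_gauss (x : ℝ) :
    ∫ t in Set.Ioi x, t * rexp (-t ^ 2 / 2) = rexp (-x ^ 2 / 2) := by
  have hd (t : ℝ) (_ : t ∈ Set.Ici x) := hasDerivAt_gauss t
  have hi := integrable_id_mul_gauss.neg.integrableOn (s := Set.Ioi x)
  have hlim := tendsto_zero_of_hasDerivAt_of_integrableOn_Ioi (a := x)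
    (fun t _ => hasDerivAt_gauss t) hi integrable_gauss.integrableOn
  have := integral_Ioi_of_hasDerivAt_of_tendsto' hd hi hlim
  rw [integral_neg] at this
  linarith

lemma integral_Ioi_sq_mul_gauss (x : ℝ) :
    ∫ t in Set.Ioi x, t ^ 2 * rexp (-t ^ 2 / 2) =
      (∫ t in Set.Ioi x, rexp (-t ^ 2 / 2)) + x * rexp (-x ^ 2 / 2) := by
  have hd (t : ℝ) : HasDerivAt (fun t : ℝ => t * rexp (-t ^ 2 / 2))
      (rexp (-t ^ 2 / 2) - t ^ 2 * rexp (-t ^ 2 / 2)) t := by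
    convert! (hasDerivAt_id t).mul (hasDerivAt_gauss t) using 1
    simp; ring
  have hi := (integrable_gauss.sub integrable_sq_mul_gauss).integrableOn (s := Set.Ioi x)
  have hlim := tendsto_zero_of_hasDerivAt_of_integrableOn_Ioi (a := x)
    (fun t _ => hd t) hi integrable_id_mul_gauss.integrableOn
  have := integral_Ioi_of_hasDerivAt_of_tendsto' (fun t _ => hd t) hi hlim
  rw [integral_sub integrable_gauss.integrableOn integrable_sq_mul_gauss.integrableOn] at this
  linarith

lemma integral_Ioi_sub_mul_gauss (x : ℝ) :
    ∫ t in Set.Ioi x, (t - x) * rexp (-t ^ 2 / 2) =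
      rexp (-x ^ 2 / 2) - x * ∫ t in Set.Ioi x, rexp (-t ^ 2 / 2) := by
  simp_rw [sub_mul]
  rw [integral_sub integrable_id_mul_gauss.integrableOn
    (integrable_gauss.const_mul x).integrableOn, integral_Ioi_id_mul_gauss, integral_const_mul]

/-- Lower bound on the Mills ratio of the Gaussian. -/
lemma mul_gauss_le_integral_Ioi (x : ℝ) :
    x * rexp (-x ^ 2 / 2) ≤ (1 + x ^ 2) * ∫ t in Set.Ioi x, rexp (-t ^ 2 / 2) := by
  have h0 : 0 ≤ ∫ t in Set.Ioi x, (t - x) ^ 2 * rexp (-t ^ 2 / 2) :=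
    integral_nonneg fun t => by positivity
  have h1 : ∫ t in Set.Ioi x, (t - x) ^ 2 * rexp (-t ^ 2 / 2) =
      ∫ t in Set.Ioi x, (t ^ 2 * rexp (-t ^ 2 / 2) - 2 * x * (t * rexp (-t ^ 2 / 2))
        + x ^ 2 * rexp (-t ^ 2 / 2)) := by
    congr 1; ext t; ring
  rw [h1, integral_add (by exact (integrable_sq_mul_gauss.sub
      (integrable_id_mul_gauss.const_mul _)).integrableOn)
      (integrable_gauss.const_mul _).integrableOn,
    integral_sub integrable_sq_mul_gauss.integrableOn
      (integrable_id_mul_gauss.const_mul _).integrableOn, integral_const_mul, integral_const_mul,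
    integral_Ioi_sq_mul_gauss, integral_Ioi_id_mul_gauss] at h0
  linarith

lemma integral_Ioi_gauss_le {x : ℝ} (hx : 0 ≤ x) :
    ∫ t in Set.Ioi x, rexp (-t ^ 2 / 2) ≤ (∫ t, rexp (-t ^ 2 / 2)) * rexp (-x ^ 2 / 2) := by
  have hi : Integrable fun t : ℝ => rexp (-(t - x) ^ 2 / 2) := integrable_gauss.comp_sub_right x
  calc
    _ ≤ ∫ t in Set.Ioi x, rexp (-(t - x) ^ 2 / 2) * rexp (-x ^ 2 / 2) := by
      refine setIntegral_mono_on integrable_gauss.integrableOn (hi.mul_const _).integrableOn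
        measurableSet_Ioi fun t ht => ?_
      rw [← exp_add]
      have : x < t := ht
      gcongr
      nlinarith
    _ ≤ ∫ t, rexp (-(t - x) ^ 2 / 2) * rexp (-x ^ 2 / 2) :=
      setIntegral_le_integral (hi.mul_const _) (.of_forall fun t => by positivity)
    _ = _ := by
      rw [integral_mul_const, integral_sub_right_eq_self (fun t : ℝ => rexp (-t ^ 2 / 2)) x]

lemma LipschitzWith.integrable_mul_gauss {h : ℝ → ℝ} (hL : LipschitzWith 1 h) :
    Integrable fun t => h t * rexp (-t ^ 2 / 2) := by
  have hb : Integrable fun t : ℝ => (|h 0| + |t|) * rexp (-t ^ 2 / 2) := by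
    simp_rw [add_mul]
    refine (integrable_gauss.const_mul _).add (integrable_id_mul_gauss.norm.congr
      (.of_forall fun t => by simp))
  have hc := hL.continuous
  refine hb.mono' (by fun_prop) (.of_forall fun t => ?_)
  have := hL.dist_le_mul t 0
  simp only [dist_eq, sub_zero, NNReal.coe_one, one_mul] at this
  rw [norm_mul, norm_eq_abs, norm_eq_abs, abs_exp]
  gcongr
  linarith [abs_sub_abs_le_abs_sub (h t) (h 0)]

lemma stein_halfline {h : ℝ → ℝ} (hL : LipschitzWith 1 h) (h0 : |h 0| ≤ 1) {x : ℝ} (hx : 0 ≤ x)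
    {F : ℝ} (hF : F = -(rexp (x ^ 2 / 2) * ∫ t in Set.Ioi x, h t * rexp (-t ^ 2 / 2))) :
    |F| ≤ 1 + (∫ t, rexp (-t ^ 2 / 2)) ∧ |x * F + h x| ≤ 3 ∧ |x * (x * F + h x)| ≤ 3 := by
  set M := ∫ t, rexp (-t ^ 2 / 2)
  have hM0 : 0 ≤ M := integral_nonneg fun t => by positivity
  set E := rexp (x ^ 2 / 2)
  have hEpos : 0 < E := exp_pos _
  have hE : E * rexp (-x ^ 2 / 2) = 1 := by
    rw [← exp_add]; simp; ring
  set A := E * ∫ t in Set.Ioi x, rexp (-t ^ 2 / 2)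
  have hA0 : 0 ≤ A := mul_nonneg hEpos.le (integral_nonneg fun t => by positivity)
  have hAM : A ≤ M := by
    have := mul_le_mul_of_nonneg_left (integral_Ioi_gauss_le hx) hEpos.le
    calc A ≤ _ := this
      _ = M * (E * rexp (-x ^ 2 / 2)) := by ring
      _ = M := by rw [hE, mul_one]
  have hAl : x ≤ (1 + x ^ 2) * A := by
    have := mul_le_mul_of_nonneg_left (mul_gauss_le_integral_Ioi x) hEpos.le
    calc x = x * (E * rexp (-x ^ 2 / 2)) := by rw [hE, mul_one]
      _ = E * (x * rexp (-x ^ 2 / 2)) := by ring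
      _ ≤ _ := this
      _ = _ := by ring
  have hB : E * ∫ t in Set.Ioi x, (t - x) * rexp (-t ^ 2 / 2) = 1 - x * A := by
    rw [integral_Ioi_sub_mul_gauss, mul_sub, hE]; ring
  have hB0 : 0 ≤ 1 - x * A := by
    rw [← hB]
    refine mul_nonneg hEpos.le (setIntegral_nonneg measurableSet_Ioi fun t ht => ?_)
    have : x < t := ht
    exact mul_nonneg (by linarith) (exp_pos _).le
  have hxB : x ^ 2 * (1 - x * A) ≤ 1 := by nlinarith
  have hFA : |F + h x * A| ≤ 1 - x * A := by
    have hi : IntegrableOn (fun t => (t - x) * rexp (-t ^ 2 / 2)) (Set.Ioi x) := by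
      simp_rw [sub_mul]
      exact (integrable_id_mul_gauss.sub (integrable_gauss.const_mul x)).integrableOn
    have heq : F + h x * A = E * ∫ t in Set.Ioi x, (h x - h t) * rexp (-t ^ 2 / 2) := by
      simp_rw [sub_mul]
      rw [integral_sub (integrable_gauss.const_mul _).integrableOn
        hL.integrable_mul_gauss.integrableOn, integral_const_mul, hF]
      ring
    rw [heq, abs_mul, abs_of_pos hEpos, ← hB]
    gcongr
    rw [← norm_eq_abs]
    refine norm_integral_le_of_norm_le hi ?_
    filter_upwards [ae_restrict_mem measurableSet_Ioi] with t ht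
    have hxt : x < t := ht
    have := hL.dist_le_mul x t
    simp only [dist_eq, NNReal.coe_one, one_mul] at this
    rw [norm_mul, norm_eq_abs, norm_eq_abs, abs_exp]
    gcongr
    rwa [abs_sub_comm x t, abs_of_pos (sub_pos.2 hxt)] at this
  have hhx : |h x| ≤ x + 1 := by
    have := hL.dist_le_mul x 0
    simp only [dist_eq, sub_zero, NNReal.coe_one, one_mul, abs_of_nonneg hx] at this
    linarith [abs_sub_abs_le_abs_sub (h x) (h 0)]
  have hF' : |x * F + h x| ≤ (2 * x + 1) * (1 - x * A) := by
    calc |x * F + h x| = |x * (F + h x * A) + h x * (1 - x * A)| := by ring_nf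
      _ ≤ |x * (F + h x * A)| + |h x * (1 - x * A)| := abs_add_le _ _
      _ = x * |F + h x * A| + |h x| * (1 - x * A) := by
        rw [abs_mul, abs_mul, abs_of_nonneg hx, abs_of_nonneg hB0]
      _ ≤ x * (1 - x * A) + (x + 1) * (1 - x * A) := by gcongr
      _ = _ := by ring
  have hB1 : 1 - x * A ≤ 1 := by nlinarith
  refine ⟨?_, ?_, ?_⟩
  · calc |F| = |(F + h x * A) - h x * A| := by ring_nf
      _ ≤ |F + h x * A| + |h x * A| := abs_sub _ _
      _ ≤ (1 - x * A) + (x + 1) * A := by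
        rw [abs_mul, abs_of_nonneg hA0]; gcongr
      _ ≤ 1 + M := by linarith
  · nlinarith [mul_nonneg (sq_nonneg (x - 1)) hB0]
  · rw [abs_mul, abs_of_nonneg hx]
    have := mul_le_mul_of_nonneg_left hF' hx
    nlinarith [mul_nonneg (sq_nonneg (x - 1)) hB0]

/-- Regularity of the solution of Stein's equation with Lipschitz right-hand side. -/
lemma exists_stein_solution : ∃ L : ℝ, 0 < L ∧ ∀ ψ : ℝ → ℝ, LipschitzWith 1 ψ →
    ∃ F F' : ℝ → ℝ, (∀ x, HasDerivAt F (F' x) x) ∧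
      (∀ x, F' x - x * F x = ψ x - ∫ z, ψ z ∂(gaussianReal 0 1)) ∧
      (∀ x, |F x| ≤ L) ∧ (∀ x, |F' x| ≤ L) ∧ ∀ x y, |F' x - F' y| ≤ L * |x - y| := by
  set M := ∫ t, rexp (-t ^ 2 / 2) with hM
  have hM0 : 0 ≤ M := integral_nonneg fun t => by positivity
  have hγ (f : ℝ → ℝ) : ∫ z, f z ∂(gaussianReal 0 1) =
      (√(2 * π))⁻¹ * ∫ t, f t * rexp (-t ^ 2 / 2) := by
    rw [integral_gaussianReal_eq_integral_smul one_ne_zero, ← integral_const_mul]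
    congr 1; ext t
    simp [gaussianPDFReal]; ring
  refine ⟨5 + M, by linarith, fun ψ hψ => ?_⟩
  set m := ∫ z, ψ z ∂(gaussianReal 0 1) with hm
  set h : ℝ → ℝ := fun x => ψ x - m with hh
  have hL : LipschitzWith 1 h := by
    refine LipschitzWith.of_dist_le_mul fun x y => ?_
    have := hψ.dist_le_mul x y
    simpa [dist_eq, hh] using this
  have hMv : (√(2 * π))⁻¹ * M = 1 := by
    have := hγ (fun _ => 1)
    simp only [integral_const, probReal_univ, smul_eq_mul, mul_one, one_mul] at this
    exact this.symm
  have hint : ∫ t, h t * rexp (-t ^ 2 / 2) = 0 := by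
    simp_rw [hh, sub_mul]
    rw [integral_sub hψ.integrable_mul_gauss (integrable_gauss.const_mul _), integral_const_mul,
      ← hM, hm, hγ ψ]
    linear_combination (-∫ t, ψ t * rexp (-t ^ 2 / 2)) * hMv
  have h0 : |h 0| ≤ 1 := by
    have e : h 0 * M = -∫ t, (h t - h 0) * rexp (-t ^ 2 / 2) := by
      simp_rw [sub_mul]
      rw [integral_sub hL.integrable_mul_gauss (integrable_gauss.const_mul _), integral_const_mul,
        ← hM, hint]
      ring
    have habs : ∫ t : ℝ, |t| * rexp (-t ^ 2 / 2) = 2 := by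
      have := integral_comp_abs (f := fun t : ℝ => t * rexp (-t ^ 2 / 2))
      simp only [sq_abs, integral_Ioi_id_mul_gauss] at this
      simpa using this
    have hle : |∫ t, (h t - h 0) * rexp (-t ^ 2 / 2)| ≤ 2 := by
      refine le_trans ?_ habs.le
      rw [← norm_eq_abs]
      refine norm_integral_le_of_norm_le (integrable_id_mul_gauss.norm.congr
        (.of_forall fun t => by simp)) (.of_forall fun t => ?_)
      have := hL.dist_le_mul t 0
      simp only [dist_eq, sub_zero, NNReal.coe_one, one_mul] at this
      rw [norm_mul, norm_eq_abs, norm_eq_abs, abs_exp]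
      gcongr
    have hM2 : 2 ≤ M := by
      have : M = √(2 * π) := by
        rw [← mul_one (√(2 * π)), ← hMv, mul_inv_cancel_left₀ (by positivity)]
      rw [this]
      exact le_sqrt_of_sq_le (by nlinarith [pi_gt_three])
    have : |h 0| * M ≤ 2 := by
      rwa [← abs_of_nonneg hM0, ← abs_mul, e, abs_neg]
    nlinarith [abs_nonneg (h 0)]
  have hi := hL.integrable_mul_gauss
  set F : ℝ → ℝ := fun x => rexp (x ^ 2 / 2) * ∫ t in Set.Iic x, h t * rexp (-t ^ 2 / 2) with hF
  have hFI (x : ℝ) : F x = -(rexp (x ^ 2 / 2) * ∫ t in Set.Ioi x, h t * rexp (-t ^ 2 / 2)) := by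
    have := intervalIntegral.integral_Iic_add_Ioi (b := x) hi.integrableOn hi.integrableOn
    rw [hint] at this
    simp only [hF]
    linear_combination rexp (x ^ 2 / 2) * this
  have hbound (x : ℝ) : |F x| ≤ 1 + M ∧ |x * F x + h x| ≤ 3 ∧ |x * (x * F x + h x)| ≤ 3 := by
    rcases le_total 0 x with hx | hx
    · exact stein_halfline hL h0 hx (hFI x)
    · have hL' : LipschitzWith 1 fun t => h (-t) := by
        refine LipschitzWith.of_dist_le_mul fun a b => ?_
        simpa using hL.dist_le_mul (-a) (-b)
      have := stein_halfline hL' (by simpa using h0) (neg_nonneg.2 hx) (F := -F x) (by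
        have := integral_comp_neg_Ioi (-x) fun t => h t * rexp (-t ^ 2 / 2)
        simp only [neg_neg, neg_sq] at this
        simp only [hF, neg_sq, this])
      simpa using this
  have hd (x : ℝ) : HasDerivAt F (x * F x + h x) x := by
    have hc : Continuous fun t => h t * rexp (-t ^ 2 / 2) := by
      have := hL.continuous
      fun_prop
    have h1 : HasDerivAt (fun x => ∫ t in Set.Iic x, h t * rexp (-t ^ 2 / 2))
        (h x * rexp (-x ^ 2 / 2)) x := by
      have := (intervalIntegral.integral_hasDerivAt_right (hc.intervalIntegrable 0 x)
        (hc.stronglyMeasurableAtFilter _ _) hc.continuousAt).const_add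
          (∫ t in Set.Iic 0, h t * rexp (-t ^ 2 / 2))
      refine this.congr_of_eventuallyEq (.of_forall fun y => ?_)
      simp only
      rw [← intervalIntegral.integral_Iic_sub_Iic hi.integrableOn hi.integrableOn]
      ring
    have h2 : HasDerivAt (fun x : ℝ => rexp (x ^ 2 / 2)) (x * rexp (x ^ 2 / 2)) x := by
      convert! (((hasDerivAt_pow 2 x).div_const 2).exp) using 1
      simp; ring
    have hE : rexp (x ^ 2 / 2) * rexp (-x ^ 2 / 2) = 1 := by
      rw [← exp_add]; simp; ring
    convert! h2.mul h1 using 1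
    simp only [hF]
    linear_combination (-h x) * hE
  refine ⟨F, fun x => x * F x + h x, hd, fun x => by simp [hh], fun x => ?_, fun x => ?_,
    fun x y => ?_⟩
  · linarith [hbound x]
  · linarith [hbound x]
  · have hd2 (x : ℝ) : HasDerivAt (fun x => x * F x) (F x + x * (x * F x + h x)) x := by
      convert! (hasDerivAt_id x).mul (hd x) using 1
      simp
    have h1 := convex_univ.norm_image_sub_le_of_norm_hasDerivWithin_le (x := y) (y := x) (C := 4 + M)
      (fun x _ => (hd2 x).hasDerivWithinAt) (fun x _ => by
        obtain ⟨a, -, b⟩ := hbound x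
        exact (norm_add_le _ _).trans (by simp only [norm_eq_abs]; linarith))
      (Set.mem_univ _) (Set.mem_univ _)
    have h2 := hL.dist_le_mul x y
    simp only [dist_eq, NNReal.coe_one, one_mul, norm_eq_abs] at h1 h2
    calc _ = |(x * F x - y * F y) + (h x - h y)| := by ring_nf
      _ ≤ |x * F x - y * F y| + |h x - h y| := abs_add_le _ _
      _ ≤ _ := by linarith

lemma tanh_eq_one_sub (x : ℝ) : tanh x = 1 - 2 / (rexp (2 * x) + 1) := by
  have h : rexp (2 * x) = rexp x * rexp x := by rw [← exp_add]; ring_nf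
  have := exp_pos x
  rw [tanh_eq_sinh_div_cosh, sinh_eq, cosh_eq, h, exp_neg]
  field_simp
  ring

lemma hasDerivAt_tanh (x : ℝ) : HasDerivAt tanh (1 - tanh x ^ 2) x := by
  have h := (hasDerivAt_sinh x).div (hasDerivAt_cosh x) (cosh_pos x).ne'
  have e : tanh = sinh / cosh := by ext y; exact tanh_eq_sinh_div_cosh y
  rw [e]
  convert! h using 1
  have := (cosh_pos x).ne'
  simp only [Pi.div_apply]
  field_simp

lemma tanh_le_self {x : ℝ} (hx : 0 ≤ x) : tanh x ≤ x := by
  have hm : Monotone fun y => y - tanh y := by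
    refine monotone_of_hasDerivAt_nonneg (fun y => (hasDerivAt_id y).sub (hasDerivAt_tanh y))
      fun y => ?_
    simp
    positivity
  simpa using hm hx

lemma self_sub_sq_le_tanh {x : ℝ} (hx : 0 ≤ x) : x - x ^ 2 ≤ tanh x := by
  have h1 : 2 / (rexp (2 * x) + 1) ≤ 2 / (2 * x + 1 + 1) := by
    gcongr
    exact add_one_le_exp _
  have h2 : 2 / (2 * x + 1 + 1) = 1 - x / (1 + x) := by field_simp; ring
  have h3 : x - x ^ 2 ≤ x / (1 + x) := by
    rw [le_div_iff₀ (by positivity)]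
    nlinarith [pow_nonneg hx 3]
  rw [tanh_eq_one_sub]
  linarith

lemma tanh_nonneg_of_nonneg {x : ℝ} (hx : 0 ≤ x) : 0 ≤ tanh x := by
  rw [tanh_eq_sinh_div_cosh]
  exact div_nonneg (sinh_nonneg_iff.2 hx) (cosh_pos x).le

lemma abs_tanh_sub_self_le (x : ℝ) : |tanh x - x| ≤ x ^ 2 := by
  rcases le_total 0 x with hx | hx
  · rw [abs_le]
    constructor <;> nlinarith [tanh_le_self hx, self_sub_sq_le_tanh hx]
  · have hx' := neg_nonneg.2 hx
    have h1 := tanh_le_self hx'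
    have h2 := self_sub_sq_le_tanh hx'
    rw [tanh_neg] at h1 h2
    rw [abs_le]
    constructor <;> nlinarith

lemma mul_tanh_le_sq (x : ℝ) : x * tanh x ≤ x ^ 2 := by
  rcases le_total 0 x with hx | hx
  · nlinarith [tanh_le_self hx]
  · have h1 := tanh_le_self (neg_nonneg.2 hx)
    rw [tanh_neg] at h1
    nlinarith

lemma tanh_sq_le_sq (x : ℝ) : tanh x ^ 2 ≤ x ^ 2 := by
  rcases le_total 0 x with hx | hx
  · exact pow_le_pow_left₀ (tanh_nonneg_of_nonneg hx) (tanh_le_self hx) 2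
  · have h := pow_le_pow_left₀ (tanh_nonneg_of_nonneg (neg_nonneg.2 hx))
      (tanh_le_self (neg_nonneg.2 hx)) 2
    simpa [tanh_neg] using h

lemma cwSpin_not (b : Bool) : cwSpin (!b) = -cwSpin b := by
  cases b <;> simp [cwSpin]

lemma cwSpin_sq (b : Bool) : cwSpin b ^ 2 = 1 := by
  cases b <;> simp [cwSpin]

lemma abs_cwSpin (b : Bool) : |cwSpin b| = 1 := by
  cases b <;> simp [cwSpin]

lemma cwZ_pos (β : ℝ) (N : ℕ) : 0 < cwZ β N :=
  Finset.sum_pos (fun _ _ => exp_pos _) Finset.univ_nonempty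

lemma cwProb_nonneg (β : ℝ) {N : ℕ} (x : Fin N → Bool) : 0 ≤ cwProb β x :=
  div_nonneg (exp_pos _).le (cwZ_pos β N).le

lemma sum_cwProb (β : ℝ) (N : ℕ) : ∑ x : Fin N → Bool, cwProb β x = 1 := by
  simp_rw [cwProb]
  rw [← Finset.sum_div]
  exact div_self (cwZ_pos β N).ne'

/-- Magnetization of all spins but the `i`-th. -/
def cwRest {N : ℕ} (i : Fin N) (x : Fin N → Bool) : ℝ := cwS x - cwSpin (x i)

/-- Flip of the `i`-th spin. -/
def cwFlip {N : ℕ} (i : Fin N) (x : Fin N → Bool) : Fin N → Bool := Function.update x i (!x i)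

lemma cwFlip_self {N : ℕ} (i : Fin N) (x : Fin N → Bool) : cwFlip i x i = !x i := by
  simp [cwFlip]

lemma cwRest_flip {N : ℕ} (i : Fin N) (x : Fin N → Bool) :
    cwRest i (cwFlip i x) = cwRest i x := by
  have h (y : Fin N → Bool) : cwRest i y = ∑ j ∈ Finset.univ.erase i, cwSpin (y j) := by
    rw [cwRest, cwS, ← Finset.add_sum_erase _ _ (Finset.mem_univ i)]
    ring
  rw [h, h]
  refine Finset.sum_congr rfl fun j hj => ?_
  rw [cwFlip, Function.update_of_ne (Finset.ne_of_mem_erase hj)]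

/-- Given the other spins, the `i`-th spin has mean `tanh (β m_i)`. -/
lemma sum_cwProb_mul_spin_sub_tanh (β : ℝ) {N : ℕ} (i : Fin N) (k : (Fin N → Bool) → ℝ)
    (hk : ∀ x, k (cwFlip i x) = k x) :
    ∑ x : Fin N → Bool,
      cwProb β x * ((cwSpin (x i) - tanh (β * cwRest i x / N)) * k x) = 0 := by
  refine Finset.sum_involution (fun x _ => cwFlip i x) (fun x _ => ?_) (fun x _ _ h => ?_)
    (fun _ _ => Finset.mem_univ _) (fun x _ => ?_)
  · have hN : (0 : ℝ) < N := by exact_mod_cast i.pos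
    have hw (y : Fin N → Bool) : cwProb β y = rexp (β * (cwRest i y ^ 2 + 1) / (2 * N)) / cwZ β N *
        rexp (β * cwRest i y / N * cwSpin (y i)) := by
      rw [cwProb, cwWeight, div_mul_eq_mul_div, ← exp_add]
      congr 2
      have : cwS y = cwRest i y + cwSpin (y i) := by rw [cwRest]; ring
      rw [this]
      field_simp
      linear_combination β * cwSpin_sq (y i)
    rw [hw x, hw (cwFlip i x), hk, cwRest_flip, cwFlip_self, cwSpin_not]
    set a := β * cwRest i x / N
    have key (s : ℝ) (hs : s = 1 ∨ s = -1) :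
        rexp (a * s) * (s - tanh a) + rexp (a * -s) * (-s - tanh a) = 0 := by
      have := exp_pos a
      rcases hs with rfl | rfl <;>
      · rw [tanh_eq_sinh_div_cosh, sinh_eq, cosh_eq]
        simp only [mul_one, mul_neg, neg_neg, exp_neg]
        field_simp
        ring
    have hs : cwSpin (x i) = 1 ∨ cwSpin (x i) = -1 := by
      cases x i <;> simp [cwSpin]
    linear_combination rexp (β * (cwRest i x ^ 2 + 1) / (2 * N)) / cwZ β N * k x * key _ hs
  · have := congrFun h i
    simp [cwFlip_self] at this
  · simp [cwFlip]

/-- Integration by parts in the `i`-th spin. -/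
lemma sum_cwProb_integration_by_parts (β : ℝ) {N : ℕ} (i : Fin N) (f : ℝ → ℝ) :
    ∑ x : Fin N → Bool, cwProb β x * ((cwSpin (x i) - tanh (β * cwRest i x / N)) * f (cwS x) -
      (1 - tanh (β * cwRest i x / N) ^ 2) *
        ((f (cwRest i x + 1) - f (cwRest i x - 1)) / 2)) = 0 := by
  rw [← sum_cwProb_mul_spin_sub_tanh β i (fun x =>
    (f (cwRest i x + 1) + f (cwRest i x - 1)) / 2 - tanh (β * cwRest i x / N) *
        ((f (cwRest i x + 1) - f (cwRest i x - 1)) / 2)) fun x => by simp only [cwRest_flip]]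
  refine Finset.sum_congr rfl fun x _ => ?_
  have h1 : cwS x = cwRest i x + cwSpin (x i) := by rw [cwRest]; ring
  rw [h1]
  congr 1
  rcases hx : x i <;> simp only [cwSpin, if_true, Bool.false_eq_true, if_false, ← sub_eq_add_neg] <;>
    ring

lemma cwRest_sq_le {N : ℕ} (i : Fin N) (x : Fin N → Bool) :
    cwRest i x ^ 2 ≤ 2 * cwS x ^ 2 + 2 := by
  rw [cwRest]
  nlinarith [cwSpin_sq (x i), sq_nonneg (cwS x + cwSpin (x i))]

lemma sum_cwProb_mul_cwS_sq_le {β : ℝ} (hβ0 : 0 < β) (hβ1 : β < 1) {N : ℕ} (hN : 1 ≤ N) :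
    ∑ x : Fin N → Bool, cwProb β x * cwS x ^ 2 ≤ 3 / (1 - β) * N := by
  have hN1 : (1 : ℝ) ≤ N := by exact_mod_cast hN
  have h0 : ∑ i : Fin N, ∑ x : Fin N → Bool, cwProb β x *
      ((cwSpin (x i) - tanh (β * cwRest i x / N)) * cwS x -
        (1 - tanh (β * cwRest i x / N) ^ 2)) = 0 :=
    Finset.sum_eq_zero fun i _ => by
      rw [← sum_cwProb_integration_by_parts β i id]
      refine Finset.sum_congr rfl fun x _ => ?_
      simp only [id]
      ring
  rw [Finset.sum_comm] at h0
  simp_rw [← Finset.mul_sum] at h0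
  have hpt (x : Fin N → Bool) : (1 - β) * cwS x ^ 2 - 3 * N ≤
      ∑ i : Fin N, ((cwSpin (x i) - tanh (β * cwRest i x / N)) * cwS x -
        (1 - tanh (β * cwRest i x / N) ^ 2)) := by
    have hi (i : Fin N) : cwSpin (x i) * cwS x - β * (cwS x ^ 2 - 2 * cwS x * cwSpin (x i) + 1) / N
        - 2 ≤ (cwSpin (x i) - tanh (β * cwRest i x / N)) * cwS x -
        (1 - tanh (β * cwRest i x / N) ^ 2) := by
      set t := tanh (β * cwRest i x / N) with ht
      have h1 : cwS x = cwRest i x + cwSpin (x i) := by rw [cwRest]; ring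
      have h2 : t * cwRest i x ≤ β * cwRest i x ^ 2 / N := by
        have := mul_tanh_le_sq (β * cwRest i x / N)
        rw [← ht] at this
        have e := mul_le_mul_of_nonneg_left this (show (0 : ℝ) ≤ N / β by positivity)
        calc t * cwRest i x = N / β * (β * cwRest i x / N * t) := by field_simp
          _ ≤ _ := e
          _ = _ := by field_simp
      have h3 : t * cwSpin (x i) ≤ 1 := by
        have := abs_cwSpin (x i)
        have ht1 : |t| ≤ 1 := (abs_tanh_lt_one _).le
        calc _ ≤ |t * cwSpin (x i)| := le_abs_self _
          _ ≤ 1 := by rw [abs_mul, this]; linarith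
      have h4 : cwS x ^ 2 - 2 * cwS x * cwSpin (x i) + 1 = cwRest i x ^ 2 := by
        rw [cwRest]; linear_combination -cwSpin_sq (x i)
      rw [h4]
      have : (cwSpin (x i) - t) * cwS x =
        cwSpin (x i) * cwS x - t * cwRest i x - t * cwSpin (x i) := by rw [h1]; ring
      rw [this]
      nlinarith [sq_nonneg t]
    refine le_trans ?_ (Finset.sum_le_sum fun i _ => hi i)
    have hs : ∑ i, cwSpin (x i) = cwS x := rfl
    have : ∑ i : Fin N, (cwSpin (x i) * cwS x -
        β * (cwS x ^ 2 - 2 * cwS x * cwSpin (x i) + 1) / N - 2) =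
        cwS x ^ 2 - β * (cwS x ^ 2 - 2 * cwS x ^ 2 / N + 1) - 2 * N := by
      have e (i : Fin N) : cwSpin (x i) * cwS x -
        β * (cwS x ^ 2 - 2 * cwS x * cwSpin (x i) + 1) / N - 2 =
        cwSpin (x i) * (cwS x + 2 * β * cwS x / N) - (β * (cwS x ^ 2 + 1) / N + 2) := by ring
      simp_rw [e]
      rw [Finset.sum_sub_distrib, ← Finset.sum_mul, hs]
      simp only [Finset.sum_const, Finset.card_univ, Fintype.card_fin, nsmul_eq_mul]
      field_simp
      ring
    rw [this]
    have : 0 ≤ β * (2 * cwS x ^ 2 / N) := by positivity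
    nlinarith
  have h1 := Finset.sum_le_sum fun x (_ : x ∈ Finset.univ) =>
    mul_le_mul_of_nonneg_left (hpt x) (cwProb_nonneg β x)
  rw [h0] at h1
  have e (x : Fin N → Bool) : cwProb β x * ((1 - β) * cwS x ^ 2 - 3 * N) =
      (1 - β) * (cwProb β x * cwS x ^ 2) - cwProb β x * (3 * N) := by ring
  simp_rw [e] at h1
  rw [Finset.sum_sub_distrib, ← Finset.mul_sum, ← Finset.sum_mul, sum_cwProb] at h1
  rw [div_mul_eq_mul_div, le_div_iff₀ (by linarith)]
  linarith

/-- Pointwise remainder after replacing the discrete derivative and the conditional mean in the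
integration by parts formula by their linearizations. -/
lemma stein_remainder_le {β : ℝ} (hβ0 : 0 < β) (hβ1 : β < 1) {N : ℕ} (i : Fin N) {L σ : ℝ}
    (hσ : 0 < σ) {F F' : ℝ → ℝ} (hd : ∀ x, HasDerivAt F (F' x) x) (hF : ∀ x, |F x| ≤ L)
    (hF' : ∀ x, |F' x| ≤ L) (hFL : ∀ x y, |F' x - F' y| ≤ L * |x - y|) (x : Fin N → Bool) :
    |F' (cwS x / σ) - σ * ((1 - tanh (β * cwRest i x / N) ^ 2) *
        ((F ((cwRest i x + 1) / σ) - F ((cwRest i x - 1) / σ)) / 2)) -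
      σ * ((tanh (β * cwRest i x / N) - β * cwS x / N) * F (cwS x / σ))| ≤
    L * (2 / σ + (2 * cwS x ^ 2 + 2) / (N : ℝ) ^ 2 +
      σ * (1 / N + (2 * cwS x ^ 2 + 2) / (N : ℝ) ^ 2)) := by
  have hL : 0 ≤ L := (abs_nonneg _).trans (hF 0)
  have hN : (0 : ℝ) < N := by exact_mod_cast i.pos
  set r := cwRest i x with hr
  set t := tanh (β * r / N) with ht
  have hS : cwS x = r + cwSpin (x i) := by rw [hr, cwRest]; ring
  obtain ⟨c, hc, hcd⟩ := exists_hasDerivAt_eq_slope F F'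
    (show (r - 1) / σ < (r + 1) / σ by gcongr; linarith)
    (fun y _ => (hd y).continuousAt.continuousWithinAt) (fun y _ => hd y)
  have hg : σ * ((F ((r + 1) / σ) - F ((r - 1) / σ)) / 2) = F' c := by
    rw [hcd]; field_simp; ring
  have hcS : |cwS x / σ - c| ≤ 2 / σ := by
    have h1 := hc.1
    have h2 := hc.2
    have h3 := (abs_le.1 (abs_cwSpin (x i)).le)
    have h4 : (r - 1) / σ ≤ cwS x / σ := by rw [hS]; gcongr; linarith
    have h5 : cwS x / σ ≤ (r + 1) / σ := by rw [hS]; gcongr; linarith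
    have h6 : (r + 1) / σ - (r - 1) / σ = 2 / σ := by ring
    rw [abs_le]
    constructor <;> linarith
  have hsq : (β * r / N) ^ 2 ≤ (2 * cwS x ^ 2 + 2) / (N : ℝ) ^ 2 := by
    rw [div_pow]
    gcongr
    have := cwRest_sq_le i x
    nlinarith [mul_nonneg (sq_nonneg r) (show (0 : ℝ) ≤ 1 - β ^ 2 by nlinarith)]
  have ht2 : t ^ 2 ≤ (2 * cwS x ^ 2 + 2) / (N : ℝ) ^ 2 := (tanh_sq_le_sq _).trans hsq
  have htl : |t - β * cwS x / N| ≤ 1 / N + (2 * cwS x ^ 2 + 2) / (N : ℝ) ^ 2 := by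
    have e : t - β * cwS x / N = -(β * cwSpin (x i) / N) + (t - β * r / N) := by rw [hS]; ring
    rw [e]
    refine (abs_add_le _ _).trans (add_le_add ?_ ((abs_tanh_sub_self_le _).trans hsq))
    rw [abs_neg, abs_div, abs_mul, abs_cwSpin, abs_of_pos hβ0, abs_of_pos hN, mul_one]
    gcongr
  have e : F' (cwS x / σ) - σ * ((1 - t ^ 2) * ((F ((r + 1) / σ) - F ((r - 1) / σ)) / 2)) -
      σ * ((t - β * cwS x / N) * F (cwS x / σ)) =
      (F' (cwS x / σ) - F' c) + t ^ 2 * F' c - σ * ((t - β * cwS x / N) * F (cwS x / σ)) := by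
    linear_combination (t ^ 2 - 1) * hg
  rw [e]
  calc _ ≤ |F' (cwS x / σ) - F' c| + |t ^ 2 * F' c| +
        |σ * ((t - β * cwS x / N) * F (cwS x / σ))| :=
        (abs_sub _ _).trans (add_le_add_left (abs_add_le _ _) _)
    _ = |F' (cwS x / σ) - F' c| + t ^ 2 * |F' c| +
        σ * (|t - β * cwS x / N| * |F (cwS x / σ)|) := by
        rw [abs_mul, abs_mul, abs_mul, abs_of_pos hσ, abs_of_nonneg (sq_nonneg t)]
    _ ≤ L * (2 / σ) + (2 * cwS x ^ 2 + 2) / (N : ℝ) ^ 2 * L +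
        σ * ((1 / N + (2 * cwS x ^ 2 + 2) / (N : ℝ) ^ 2) * L) := by
        have h1 := (hFL (cwS x / σ) c).trans (mul_le_mul_of_nonneg_left hcS hL)
        have h2 := hF' c
        have h3 := hF (cwS x / σ)
        gcongr
    _ = _ := by ring

/-- Bound for the Stein operator of the standardized magnetization. -/
lemma abs_sum_cwProb_stein_le {β : ℝ} (hβ0 : 0 < β) (hβ1 : β < 1) {N : ℕ} (hN : 1 ≤ N) {L : ℝ}
    {F F' : ℝ → ℝ} (hd : ∀ x, HasDerivAt F (F' x) x) (hF : ∀ x, |F x| ≤ L)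
    (hF' : ∀ x, |F' x| ≤ L) (hFL : ∀ x y, |F' x - F' y| ≤ L * |x - y|) :
    |∑ x : Fin N → Bool, cwProb β x * (F' (cwW β x) - cwW β x * F (cwW β x))| ≤
      L * (2 + (6 / (1 - β) + 2) + (6 / (1 - β) + 3) / √(1 - β)) / √N := by
  have hL : 0 ≤ L := (abs_nonneg _).trans (hF 0)
  have hN1 : (1 : ℝ) ≤ N := by exact_mod_cast hN
  have hN0 : (0 : ℝ) < N := by linarith
  have hb : 0 < 1 - β := by linarith
  set σ := √((N : ℝ) / (1 - β)) with hσdef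
  have hσ : 0 < σ := sqrt_pos.2 (by positivity)
  have hσ2 : σ ^ 2 * (1 - β) = N := by
    rw [hσdef, sq_sqrt (by positivity)]; field_simp
  set D : Fin N → (Fin N → Bool) → ℝ := fun i x =>
    (cwSpin (x i) - tanh (β * cwRest i x / N)) * F (cwS x / σ) -
      (1 - tanh (β * cwRest i x / N) ^ 2) *
        ((F ((cwRest i x + 1) / σ) - F ((cwRest i x - 1) / σ)) / 2) with hD
  set R : Fin N → (Fin N → Bool) → ℝ := fun i x =>
    F' (cwS x / σ) - σ * ((1 - tanh (β * cwRest i x / N) ^ 2) *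
        ((F ((cwRest i x + 1) / σ) - F ((cwRest i x - 1) / σ)) / 2)) -
      σ * ((tanh (β * cwRest i x / N) - β * cwS x / N) * F (cwS x / σ)) with hR
  have hD0 : ∑ x : Fin N → Bool, cwProb β x * ∑ i, D i x = 0 := by
    simp_rw [Finset.mul_sum]
    rw [Finset.sum_comm]
    exact Finset.sum_eq_zero fun i _ => sum_cwProb_integration_by_parts β i fun s => F (s / σ)
  have hpt (x : Fin N → Bool) : F' (cwW β x) - cwW β x * F (cwW β x) =
      (∑ i, R i x) / N - σ / N * ∑ i, D i x := by
    have e (i : Fin N) : R i x = σ * D i x + (F' (cwS x / σ) + σ * (β * cwS x / N) * F (cwS x / σ))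
        - cwSpin (x i) * (σ * F (cwS x / σ)) := by
      simp only [hR, hD]; ring
    have hs : ∑ i, cwSpin (x i) = cwS x := rfl
    simp_rw [e]
    rw [Finset.sum_sub_distrib, Finset.sum_add_distrib, ← Finset.mul_sum, ← Finset.sum_mul, hs]
    simp only [Finset.sum_const, Finset.card_univ, Fintype.card_fin, nsmul_eq_mul, cwW, ← hσdef]
    field_simp
    linear_combination cwS x * F (cwS x / σ) * hσ2
  set B : (Fin N → Bool) → ℝ := fun x => L * (2 / σ + (2 * cwS x ^ 2 + 2) / (N : ℝ) ^ 2 +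
      σ * (1 / N + (2 * cwS x ^ 2 + 2) / (N : ℝ) ^ 2)) with hB
  have hRB (x : Fin N → Bool) : |(∑ i, R i x) / N| ≤ B x := by
    rw [abs_div, abs_of_pos hN0, div_le_iff₀ hN0]
    calc _ ≤ ∑ i, |R i x| := Finset.abs_sum_le_sum_abs _ _
      _ ≤ ∑ _i : Fin N, B x := Finset.sum_le_sum fun i _ =>
          stein_remainder_le hβ0 hβ1 i hσ hd hF hF' hFL x
      _ = _ := by simp [mul_comm]
  have hsum : ∑ x : Fin N → Bool, cwProb β x * B x =
      L * (2 / σ + (1 + σ) * (2 * (∑ x : Fin N → Bool, cwProb β x * cwS x ^ 2) + 2) / (N : ℝ) ^ 2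
        + σ / N) := by
    have e (x : Fin N → Bool) : cwProb β x * B x =
        cwProb β x * (L * (2 / σ + (1 + σ) * 2 / (N : ℝ) ^ 2 + σ / N)) +
        (cwProb β x * cwS x ^ 2) * (L * ((1 + σ) * 2 / (N : ℝ) ^ 2)) := by
      simp only [hB]; ring
    simp_rw [e]
    rw [Finset.sum_add_distrib, ← Finset.sum_mul, ← Finset.sum_mul, sum_cwProb]
    ring
  set q := √(N : ℝ) with hq
  have hq0 : 0 < q := sqrt_pos.2 hN0
  have hq2 : q ^ 2 = N := sq_sqrt hN0.le
  have hq1 : 1 ≤ q := one_le_sqrt.2 hN1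
  set b := √(1 - β) with hbdef
  have hb0 : 0 < b := sqrt_pos.2 hb
  have hb1 : b ≤ 1 := sqrt_le_one.2 (by linarith)
  have hσq : σ = q / b := sqrt_div hN0.le _
  simp_rw [hpt, mul_sub]
  rw [Finset.sum_sub_distrib]
  have hz : ∑ x : Fin N → Bool, cwProb β x * (σ / N * ∑ i, D i x) = 0 := by
    calc _ = σ / N * ∑ x : Fin N → Bool, cwProb β x * ∑ i, D i x := by
          rw [Finset.mul_sum]; exact Finset.sum_congr rfl fun x _ => by ring
      _ = 0 := by rw [hD0, mul_zero]
  rw [hz, sub_zero]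
  calc _ ≤ ∑ x : Fin N → Bool, |cwProb β x * ((∑ i, R i x) / N)| :=
        Finset.abs_sum_le_sum_abs _ _
    _ ≤ ∑ x : Fin N → Bool, cwProb β x * B x := Finset.sum_le_sum fun x _ => by
        rw [abs_mul, abs_of_nonneg (cwProb_nonneg β x)]
        exact mul_le_mul_of_nonneg_left (hRB x) (cwProb_nonneg β x)
    _ ≤ L * (2 / σ + (1 + σ) * (2 * (3 / (1 - β) * N) + 2 * N) / (N : ℝ) ^ 2 + σ / N) := by
        rw [hsum]
        have := sum_cwProb_mul_cwS_sq_le hβ0 hβ1 hN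
        gcongr
        linarith
    _ = L * (2 * b / q + (6 / (1 - β) + 2) / q ^ 2 + (6 / (1 - β) + 3) / b / q) := by
        rw [hσq, ← hq2]
        field_simp
        ring
    _ ≤ L * (2 * 1 / q + (6 / (1 - β) + 2) / q + (6 / (1 - β) + 3) / b / q) := by
        gcongr
        nlinarith
    _ = _ := by ring

/-- **CLT for the subcritical Curie–Weiss model (Wasserstein distance)**:
`d_Wass(W, Z) ≤ C/√N`. -/
theorem curie_weiss_wasserstein_clt (β : ℝ) (hβ0 : 0 < β) (hβ1 : β < 1) :
    ∃ C : ℝ, 0 < C ∧ ∀ N : ℕ, 1 ≤ N → ∀ ψ : ℝ → ℝ, LipschitzWith 1 ψ →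
      |(∑ x : Fin N → Bool, cwProb β x * ψ (cwW β x)) -
          ∫ z, ψ z ∂(gaussianReal 0 1)| ≤ C / Real.sqrt N := by
  obtain ⟨L, hL, hstein⟩ := exists_stein_solution
  have hb : 0 < 1 - β := by linarith
  refine ⟨L * (2 + (6 / (1 - β) + 2) + (6 / (1 - β) + 3) / √(1 - β)), by positivity,
    fun N hN ψ hψ => ?_⟩
  obtain ⟨F, F', hd, heq, hF, hF', hFL⟩ := hstein ψ hψ
  have h := abs_sum_cwProb_stein_le hβ0 hβ1 hN hd hF hF' hFL
  simp_rw [heq, mul_sub] at h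
  rwa [Finset.sum_sub_distrib, ← Finset.sum_mul, sum_cwProb, one_mul] at h
end
end
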